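/- Let C(x,y) = y₁·F₁(x) + α·y₂·x₁² + Σ_{i=1}^{m} x_i q_i(y) + R(y), where α is a nonzero integer and F₁ is a nonsingular indefinite integral quadratic form of rank r ≥ 5. Assume C has h-invariant h(C) ≥ 5, C is irreducible over ℚ, and for every prime p the equation C = 0 has a nonsingular p-adic zero. Then there exist c > 0, K > 0 and Y₀ such that for every Y ≥ Y₀ there is a finite set 𝒞_h(Y) ⊆ ℤ^h with ‖y‖_∞ ≤ K·Y for all y ∈ 𝒞_h(Y) and Σ_{y ∈ 𝒞_h(Y)} 𝔖(F_y) ≥ c·Y^h/ log Y. -/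

import Mathlib

open Matrix MvPolynomial

/-- The complete exponential sum `S_q(F) = Σ*_{a mod q} Σ_{b mod q} e(a·F(b)/q)` attached to
an integer-valued function `F` on `ℤ^m`. -/
noncomputable def expSum (m : ℕ) (F : (Fin m → ℤ) → ℤ) (q : ℕ) : ℂ :=
  ∑ a ∈ (Finset.range q).filter fun a => Nat.gcd a q = 1,
    ∑ b : Fin m → Fin q,
      Complex.exp (2 * (Real.pi : ℂ) * Complex.I * (a : ℂ) *
        ((F fun j => ((b j : ℕ) : ℤ)) : ℂ) / (q : ℂ))

/-- The singular series `𝔖(F) = Σ_{q ≥ 1} q^{-m} S_q(F)`. -/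
noncomputable def singSeries (m : ℕ) (F : (Fin m → ℤ) → ℤ) : ℂ :=
  ∑' q : ℕ, (q : ℂ) ^ (-(m : ℤ)) * expSum m F q



/-- A quadratic polynomial with integer coefficients, evaluated in a commutative ring. -/
def qv {m : ℕ} (A : Matrix (Fin m) (Fin m) ℤ) (B : Fin m → ℤ) (c : ℤ) {R : Type} [CommRing R]
    (x : Fin m → R) : R :=
  ∑ i, ∑ j, (A i j : R) * x i * x j + ∑ i, (B i : R) * x i + (c : R)

/-- The linear part of the gradient. -/
def lv {m : ℕ} (A : Matrix (Fin m) (Fin m) ℤ) {R : Type} [CommRing R]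
    (x : Fin m → R) (i : Fin m) : R := ∑ j, ((A i j + A j i : ℤ) : R) * x j

/-- Gradient. -/
def gv {m : ℕ} (A : Matrix (Fin m) (Fin m) ℤ) (B : Fin m → ℤ) {R : Type} [CommRing R]
    (x : Fin m → R) (i : Fin m) : R := lv A x i + (B i : R)

theorem qv_map {m : ℕ} (A : Matrix (Fin m) (Fin m) ℤ) (B : Fin m → ℤ) (c : ℤ) {R S : Type}
    [CommRing R] [CommRing S] (f : R →+* S) (x : Fin m → R) :
    f (qv A B c x) = qv A B c (fun i => f (x i)) := by
  simp [qv]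

theorem lv_map {m : ℕ} (A : Matrix (Fin m) (Fin m) ℤ) {R S : Type}
    [CommRing R] [CommRing S] (f : R →+* S) (x : Fin m → R) (i : Fin m) :
    f (lv A x i) = lv A (fun i => f (x i)) i := by
  simp [lv]

theorem gv_map {m : ℕ} (A : Matrix (Fin m) (Fin m) ℤ) (B : Fin m → ℤ) {R S : Type}
    [CommRing R] [CommRing S] (f : R →+* S) (x : Fin m → R) (i : Fin m) :
    f (gv A B x i) = gv A B (fun i => f (x i)) i := by
  simp [gv, lv_map]

theorem qv_add {m : ℕ} (A : Matrix (Fin m) (Fin m) ℤ) (B : Fin m → ℤ) (c : ℤ) {R : Type}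
    [CommRing R] (x d : Fin m → R) :
    qv A B c (x + d) = qv A B c x + (qv A B c d - c) + ∑ i, lv A d i * x i := by
  have h1 : ∑ i, lv A d i * x i = ∑ i, ∑ j, (A i j : R) * x i * d j
      + ∑ i, ∑ j, (A i j : R) * d i * x j := by
    rw [Finset.sum_comm (f := fun i j => (A i j : R) * d i * x j), ← Finset.sum_add_distrib]
    refine Finset.sum_congr rfl fun i _ => ?_
    rw [lv, Finset.sum_mul, ← Finset.sum_add_distrib]
    refine Finset.sum_congr rfl fun j _ => ?_
    push_cast; ring
  rw [h1]
  have h2 : ∑ i, ∑ j, (A i j : R) * (x i + d i) * (x j + d j) =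
      ∑ i, ∑ j, (A i j : R) * x i * x j + ∑ i, ∑ j, (A i j : R) * d i * d j +
      (∑ i, ∑ j, (A i j : R) * x i * d j + ∑ i, ∑ j, (A i j : R) * d i * x j) := by
    simp only [← Finset.sum_add_distrib]
    refine Finset.sum_congr rfl fun i _ => Finset.sum_congr rfl fun j _ => ?_
    ring
  have h3 : ∑ i, (B i : R) * (x i + d i) = ∑ i, (B i : R) * x i + ∑ i, (B i : R) * d i := by
    simp only [← Finset.sum_add_distrib, mul_add]
  simp only [qv, Pi.add_apply, h2, h3]
  ring

theorem lv_add {m : ℕ} (A : Matrix (Fin m) (Fin m) ℤ) {R : Type}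
    [CommRing R] (x d : Fin m → R) (i : Fin m) : lv A (x + d) i = lv A x i + lv A d i := by
  simp [lv, mul_add, Finset.sum_add_distrib]

theorem lv_sub {m : ℕ} (A : Matrix (Fin m) (Fin m) ℤ) {R : Type}
    [CommRing R] (x d : Fin m → R) (i : Fin m) : lv A (x - d) i = lv A x i - lv A d i := by
  simp [lv, mul_sub, Finset.sum_sub_distrib]

/-- expSum in terms of the standard additive character. -/
theorem expSum_eq {m : ℕ} (A : Matrix (Fin m) (Fin m) ℤ) (B : Fin m → ℤ) (c : ℤ)
    (q : ℕ) [NeZero q] :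
    expSum m (fun x => qv A B c x) q =
      ∑ a ∈ (Finset.range q).filter fun a => Nat.gcd a q = 1,
        ∑ b : Fin m → ZMod q, ZMod.stdAddChar ((a : ZMod q) * qv A B c b) := by
  unfold expSum
  refine Finset.sum_congr rfl fun a _ => ?_
  refine Fintype.sum_bijective (fun (b : Fin m → Fin q) (j : Fin m) => (((b j : ℕ)) : ZMod q))
    ?_ _ _ ?_
  · rw [Fintype.bijective_iff_injective_and_card]
    constructor
    · intro b b' hb
      funext j
      have := congrFun hb j
      simp only at this
      rw [ZMod.natCast_eq_natCast_iff'] at this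
      rw [Nat.mod_eq_of_lt (b j).2, Nat.mod_eq_of_lt (b' j).2] at this
      exact Fin.ext this
    · simp [ZMod.card]
  · intro b
    have h := qv_map A B c (Int.castRingHom (ZMod q)) (fun j => ((b j : ℕ) : ℤ))
    simp only [eq_intCast, Int.cast_natCast] at h
    rw [← h]
    have : (a : ZMod q) * ((qv A B c (fun j => ((b j : ℕ) : ℤ)) : ℤ) : ZMod q) =
      (((a : ℤ) * qv A B c (fun j => ((b j : ℕ) : ℤ)) : ℤ) : ZMod q) := by push_cast; rfl
    rw [this, ZMod.stdAddChar_coe]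
    push_cast
    congr 1
    ring

/-- Kernel count. -/
noncomputable def kc {m : ℕ} (A : Matrix (Fin m) (Fin m) ℤ) (q : ℕ) : ℕ :=
  Nat.card {d : Fin m → ZMod q // ∀ i, lv A d i = 0}

theorem weyl {m : ℕ} (A : Matrix (Fin m) (Fin m) ℤ) (B : Fin m → ℤ) (c : ℤ)
    (q : ℕ) [NeZero q] (a : ZMod q) (ha : IsUnit a) :
    ‖∑ b : Fin m → ZMod q, (ZMod.stdAddChar (a * qv A B c b) : ℂ)‖ ^ 2 ≤
      (q : ℝ) ^ m * kc A q := by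
  classical
  set ψ : AddChar (ZMod q) ℂ := ZMod.stdAddChar with hψ
  have hprim : ψ.IsPrimitive := ZMod.isPrimitive_stdAddChar q
  set S := ∑ b : Fin m → ZMod q, ψ (a * qv A B c b) with hS
  have hconj : ∀ t, (starRingEnd ℂ) (ψ t) = ψ (-t) := fun t => by
    rw [AddChar.map_neg_eq_conj]
  have hsum : ∀ (f : Fin m → ZMod q), ψ (∑ i, f i) = ∏ i, ψ (f i) := fun f => by
    have := map_prod ψ.toMonoidHom (fun i => Multiplicative.ofAdd (f i)) Finset.univ
    simpa [← ofAdd_sum] using this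
  have h1 : S * (starRingEnd ℂ) S = ∑ d : Fin m → ZMod q, ψ (a * (qv A B c d - c)) *
      ∑ b : Fin m → ZMod q, ∏ i, ψ (b i * (a * lv A d i)) := by
    rw [hS, map_sum, Finset.sum_mul_sum, Finset.sum_comm]
    simp only [hconj]
    have : ∀ b' : Fin m → ZMod q, ∑ b : Fin m → ZMod q, ψ (a * qv A B c b) * ψ (-(a * qv A B c b'))
        = ∑ d : Fin m → ZMod q, ψ (a * (qv A B c d - c)) * ∏ i, ψ (b' i * (a * lv A d i)) := by
      intro b'
      rw [← Equiv.sum_comp (Equiv.addLeft b')]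
      refine Finset.sum_congr rfl fun d _ => ?_
      rw [← AddChar.map_add_eq_mul, ← hsum, ← AddChar.map_add_eq_mul]
      congr 1
      rw [Equiv.coe_addLeft, qv_add]
      have : ∑ i, b' i * (a * lv A d i) = a * ∑ i, lv A d i * b' i := by
        rw [Finset.mul_sum]; exact Finset.sum_congr rfl fun i _ => by ring
      rw [this]; ring
    rw [Finset.sum_congr rfl fun b' _ => this b', Finset.sum_comm]
    simp only [Finset.mul_sum]
  have h2 : ∀ d : Fin m → ZMod q, ∑ b : Fin m → ZMod q, ∏ i, ψ (b i * (a * lv A d i)) =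
      if ∀ i, lv A d i = 0 then (q : ℂ) ^ m else 0 := by
    intro d
    rw [← Fintype.prod_sum (f := fun i t => ψ (t * (a * lv A d i)))]
    have : ∀ i, ∑ t, ψ (t * (a * lv A d i)) = if lv A d i = 0 then (q : ℂ) else 0 := by
      intro i
      rw [AddChar.sum_mulShift _ hprim, ZMod.card]
      simp [ha.mul_right_eq_zero]
    simp only [this]
    split_ifs with h
    · simp [h]
    · push Not at h
      obtain ⟨i, hi⟩ := h
      exact Finset.prod_eq_zero (Finset.mem_univ i) (by simp [hi])
  have h3 : ((‖S‖ ^ 2 : ℝ) : ℂ) = ∑ d ∈ Finset.univ.filter (fun d : Fin m → ZMod q => ∀ i, lv A d i = 0),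
      ψ (a * (qv A B c d - c)) * (q : ℂ) ^ m := by
    rw [Finset.sum_filter]
    push_cast
    rw [← Complex.mul_conj', h1]
    refine Finset.sum_congr rfl fun d _ => ?_
    rw [h2]; split_ifs <;> simp
  have h4 : ‖S‖ ^ 2 = ‖((‖S‖ ^ 2 : ℝ) : ℂ)‖ := by
    rw [Complex.norm_real, Real.norm_of_nonneg (by positivity)]
  rw [h4, h3]
  refine (norm_sum_le _ _).trans ?_
  have : ∀ d ∈ Finset.univ.filter (fun d : Fin m → ZMod q => ∀ i, lv A d i = 0),
      ‖ψ (a * (qv A B c d - c)) * (q : ℂ) ^ m‖ ≤ (q : ℝ) ^ m := by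
    intro d _
    rw [norm_mul, norm_pow, Complex.norm_natCast]
    rw [AddChar.norm_apply, one_mul]
  refine (Finset.sum_le_sum this).trans ?_
  rw [Finset.sum_const, nsmul_eq_mul, kc, Nat.card_eq_fintype_card, Fintype.card_subtype, mul_comm]


theorem kc_le {m k : ℕ} (A : Matrix (Fin m) (Fin m) ℤ) (I J : Fin k → Fin m)
    (hJ : Function.Injective J) (q : ℕ) [NeZero q] :
    kc A q ≤ (Nat.card {e : ZMod q // ((((A + Aᵀ).submatrix I J).det : ℤ) : ZMod q) * e = 0}) ^ k
      * q ^ (m - k) := by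
  classical
  set D : ℤ := ((A + Aᵀ).submatrix I J).det with hD
  set s : Finset (Fin m → ZMod q) := Finset.univ.filter (fun d => ∀ i, lv A d i = 0) with hs
  have hkc : kc A q = s.card := by
    rw [kc, Nat.card_eq_fintype_card, Fintype.card_subtype]
  let f : (Fin m → ZMod q) → ({j : Fin m // j ∉ Set.range J} → ZMod q) := fun d j => d j
  have hcardc : Fintype.card {j : Fin m // j ∉ Set.range J} = m - k := by
    rw [Fintype.card_subtype_compl (fun j => j ∈ Set.range J), Fintype.card_fin]
    congr 1
    have := Set.card_range_of_injective hJ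
    rw [Fintype.card_fin] at this
    convert this
  set E : Finset (ZMod q) := Finset.univ.filter (fun e => ((D : ℤ) : ZMod q) * e = 0) with hE
  have hEc : Nat.card {e : ZMod q // ((D : ℤ) : ZMod q) * e = 0} = E.card := by
    rw [Nat.card_eq_fintype_card, Fintype.card_subtype]
  rw [hkc, hEc]
  have h1 := Finset.card_le_mul_card_image (f := f) s (E.card ^ k) (by
    intro a ha
    obtain ⟨d0, hd0, rfl⟩ := Finset.mem_image.mp ha
    have : (Fintype.piFinset (fun _ : Fin k => E)).card = E.card ^ k := by simp
    rw [← this]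
    refine Finset.card_le_card_of_injOn (fun d t => d (J t) - d0 (J t)) ?_ ?_
    · intro d hd
      simp only [Finset.coe_filter, Set.mem_ofPred_eq] at hd
      obtain ⟨hd1, hd2⟩ := hd
      rw [hs, Finset.mem_filter] at hd1 hd0
      have hout : ∀ j, j ∉ Set.range J → d j - d0 j = 0 := fun j hj => by
        have := congrFun hd2 ⟨j, hj⟩
        simp only [f] at this
        rw [this, sub_self]
      set N : Matrix (Fin k) (Fin k) (ZMod q) := ((A + Aᵀ).submatrix I J).map (Int.cast) with hN
      have hNe : N *ᵥ (fun t => d (J t) - d0 (J t)) = 0 := by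
        funext t
        have h2 : lv A (d - d0) (I t) = 0 := by rw [lv_sub, hd1.2, hd0.2, sub_zero]
        rw [lv] at h2
        rw [← Finset.sum_subset (Finset.subset_univ (Finset.univ.image J))] at h2
        · rw [Finset.sum_image (fun a _ b _ h => hJ h)] at h2
          simpa [N, Matrix.mulVec, dotProduct] using h2
        · intro j _ hj
          have : j ∉ Set.range J := by simpa using hj
          simp [hout j this]
      have hdet : N.det = (D : ZMod q) := by
        rw [hN, hD]
        have := (Int.castRingHom (ZMod q)).map_det ((A + Aᵀ).submatrix I J)
        simpa [RingHom.mapMatrix_apply] using this.symm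
      have h3 : (N.adjugate * N) *ᵥ (fun t => d (J t) - d0 (J t)) = 0 := by
        rw [← Matrix.mulVec_mulVec, hNe, Matrix.mulVec_zero]
      rw [Matrix.adjugate_mul, hdet, Matrix.smul_mulVec, Matrix.one_mulVec] at h3
      simp only [Finset.mem_coe, Fintype.mem_piFinset, hE, Finset.mem_filter, Finset.mem_univ,
        true_and]
      intro t
      simpa using congrFun h3 t
    · intro d hd d' hd' hdd
      simp only [Finset.coe_filter, Set.mem_ofPred_eq] at hd hd'
      funext j
      by_cases hj : j ∈ Set.range J
      · obtain ⟨t, rfl⟩ := hj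
        have := congrFun hdd t
        simpa using this
      · have := congrFun (hd.2.trans hd'.2.symm) ⟨j, hj⟩
        simpa [f] using this)
  refine h1.trans (Nat.mul_le_mul_left _ ?_)
  refine (Finset.card_le_univ _).trans ?_
  rw [Fintype.card_fun, ZMod.card, hcardc]

theorem ann_le (D : ℤ) (hD : D ≠ 0) (q : ℕ) [NeZero q] :
    Nat.card {e : ZMod q // (D : ZMod q) * e = 0} ≤ D.natAbs := by
  have hq : 0 < q := Nat.pos_of_ne_zero (NeZero.ne q)
  have key : ∀ e : {e : ZMod q // (D : ZMod q) * e = 0}, q ∣ D.natAbs * e.1.val := by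
    intro e
    have h := e.2
    have : ((D * (e.1.val : ℤ) : ℤ) : ZMod q) = 0 := by push_cast; simpa using h
    rw [ZMod.intCast_zmod_eq_zero_iff_dvd] at this
    have := Int.natAbs_dvd_natAbs.mpr this
    rw [Int.natAbs_mul, Int.natAbs_natCast, Int.natAbs_natCast] at this
    exact this
  let f : {e : ZMod q // (D : ZMod q) * e = 0} → Fin D.natAbs := fun e =>
    ⟨D.natAbs * e.1.val / q, by
      rw [Nat.div_lt_iff_lt_mul hq]
      exact Nat.mul_lt_mul_of_pos_left (ZMod.val_lt _) (Int.natAbs_pos.mpr hD)⟩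
  have hf : Function.Injective f := by
    intro e e' h
    have h1 : D.natAbs * e.1.val / q = D.natAbs * e'.1.val / q := congrArg Fin.val h
    have h2 : D.natAbs * e.1.val = D.natAbs * e'.1.val := by
      rw [← Nat.div_mul_cancel (key e), ← Nat.div_mul_cancel (key e'), h1]
    have h3 := Nat.eq_of_mul_eq_mul_left (Int.natAbs_pos.mpr hD) h2
    exact Subtype.ext (ZMod.val_injective q h3)
  have := Nat.card_le_card_of_injective f hf
  simpa using this

theorem kc_le_const {m k : ℕ} (A : Matrix (Fin m) (Fin m) ℤ) (I J : Fin k → Fin m)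
    (hJ : Function.Injective J) (hD : ((A + Aᵀ).submatrix I J).det ≠ 0) (q : ℕ) [NeZero q] :
    kc A q ≤ ((A + Aᵀ).submatrix I J).det.natAbs ^ k * q ^ (m - k) :=
  (kc_le A I J hJ q).trans (Nat.mul_le_mul_right _ (Nat.pow_le_pow_left (ann_le _ hD q) _))

theorem kc_le_prime {m k : ℕ} (A : Matrix (Fin m) (Fin m) ℤ) (I J : Fin k → Fin m)
    (hJ : Function.Injective J) (p : ℕ) [Fact p.Prime]
    (hD : ¬ ((p : ℤ) ∣ ((A + Aᵀ).submatrix I J).det)) :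
    kc A p ≤ p ^ (m - k) := by
  refine (kc_le A I J hJ p).trans ?_
  have : Nat.card {e : ZMod p // ((((A + Aᵀ).submatrix I J).det : ℤ) : ZMod p) * e = 0} ≤ 1 := by
    rw [Finite.card_le_one_iff_subsingleton]
    constructor
    rintro ⟨e, he⟩ ⟨e', he'⟩
    have h0 : ((((A + Aᵀ).submatrix I J).det : ℤ) : ZMod p) ≠ 0 := by
      rwa [Ne, ZMod.intCast_zmod_eq_zero_iff_dvd]
    simp only [mul_eq_zero, h0, false_or] at he he'
    simp [he, he']
  calc _ ≤ 1 ^ k * p ^ (m - k) := Nat.mul_le_mul_right _ (Nat.pow_le_pow_left this _)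
    _ = _ := by simp

theorem term_bound {m : ℕ} (A : Matrix (Fin m) (Fin m) ℤ) (B : Fin m → ℤ) (c : ℤ)
    (I J : Fin 5 → Fin m)
    (hJ : Function.Injective J) (hD : ((A + Aᵀ).submatrix I J).det ≠ 0) (q : ℕ) :
    ‖(q : ℂ) ^ (-(m : ℤ)) * expSum m (fun x => qv A B c x) q‖ ≤
      Real.sqrt ((((A + Aᵀ).submatrix I J).det.natAbs : ℝ) ^ 5) * (q : ℝ) ^ (-(3/2) : ℝ) := by
  have hm : 5 ≤ m := by simpa using Fintype.card_le_of_injective J hJ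
  rcases Nat.eq_zero_or_pos q with rfl | hq
  · simp [expSum]
  have : NeZero q := ⟨hq.ne'⟩
  set D := ((A + Aᵀ).submatrix I J).det.natAbs with hDD
  have hq' : (0 : ℝ) < q := by exact_mod_cast hq
  have h1 : ∀ a ∈ (Finset.range q).filter (fun a => Nat.gcd a q = 1),
      ‖∑ b : Fin m → ZMod q, (ZMod.stdAddChar ((a : ZMod q) * qv A B c b) : ℂ)‖ ≤
        Real.sqrt ((q : ℝ) ^ m * ((D : ℝ) ^ 5 * (q : ℝ) ^ (m - 5))) := by
    intro a ha
    apply Real.le_sqrt_of_sq_le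
    refine (weyl A B c q a ?_).trans ?_
    · rw [ZMod.isUnit_iff_coprime]
      exact (Finset.mem_filter.mp ha).2
    · gcongr
      exact_mod_cast kc_le_const A I J hJ hD q
  have h2 : ‖expSum m (fun x => qv A B c x) q‖ ≤
      q * Real.sqrt ((q : ℝ) ^ m * ((D : ℝ) ^ 5 * (q : ℝ) ^ (m - 5))) := by
    rw [expSum_eq]
    refine (norm_sum_le _ _).trans ((Finset.sum_le_sum h1).trans ?_)
    rw [Finset.sum_const, nsmul_eq_mul]
    gcongr
    exact (Finset.card_filter_le _ _).trans (by simp)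
  rw [norm_mul, norm_zpow, Complex.norm_natCast]
  refine (mul_le_mul_of_nonneg_left h2 (by positivity)).trans (le_of_eq ?_)
  have h3 : (q : ℝ) ^ m * ((D : ℝ) ^ 5 * (q : ℝ) ^ (m - 5)) = (D : ℝ) ^ 5 * ((q : ℝ) ^ (m : ℝ) * (q : ℝ) ^ ((m : ℝ) - 5)) := by
    have : (q : ℝ) ^ ((m : ℝ) - 5) = (q : ℝ) ^ (m - 5) := by
      rw [← Real.rpow_natCast, Nat.cast_sub hm]; norm_num
    rw [this, Real.rpow_natCast]; ring
  rw [h3, Real.sqrt_mul (by positivity), ← Real.rpow_add hq', Real.sqrt_eq_rpow ((q : ℝ) ^ _),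
    ← Real.rpow_mul hq'.le, ← Real.rpow_intCast]
  have : (q : ℝ) ^ (((-(m : ℤ) : ℤ)) : ℝ) * (q * (√((D : ℝ) ^ 5) * (q : ℝ) ^ (((m : ℝ) + (m - 5)) * (1 / 2)))) =
      √((D : ℝ) ^ 5) * ((q : ℝ) ^ (((-(m : ℤ) : ℤ)) : ℝ) * (q : ℝ) ^ (1 : ℝ) * (q : ℝ) ^ (((m : ℝ) + (m - 5)) * (1 / 2))) := by
    rw [Real.rpow_one]; ring
  rw [this, ← Real.rpow_add hq', ← Real.rpow_add hq']
  congr 2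
  push_cast; ring

theorem term_summable {m : ℕ} (A : Matrix (Fin m) (Fin m) ℤ) (B : Fin m → ℤ) (c : ℤ)
    (I J : Fin 5 → Fin m)
    (hJ : Function.Injective J) (hD : ((A + Aᵀ).submatrix I J).det ≠ 0) :
    Summable (fun q : ℕ => (q : ℂ) ^ (-(m : ℤ)) * expSum m (fun x => qv A B c x) q) := by
  refine Summable.of_norm_bounded ?_ (term_bound A B c I J hJ hD)
  apply Summable.mul_left
  rw [Real.summable_nat_rpow]
  norm_num


/-- Number of zeros mod q. -/
noncomputable def zc {m : ℕ} (A : Matrix (Fin m) (Fin m) ℤ) (B : Fin m → ℤ) (c : ℤ) (q : ℕ) : ℕ :=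
  Nat.card {x : Fin m → ZMod q // qv A B c x = 0}

theorem sum_range_divisors (Q : ℕ) (hQ : 0 < Q) (g : ℕ → ℂ) :
    ∑ a ∈ Finset.range Q, g a = ∑ q ∈ Q.divisors,
      ∑ a ∈ (Finset.range q).filter (fun a => Nat.gcd a q = 1), g (a * (Q / q)) := by
  rw [Finset.sum_sigma']
  symm
  refine Finset.sum_bij' (fun x _ => x.2 * (Q / x.1))
    (fun a _ => ⟨Q / Nat.gcd a Q, a / Nat.gcd a Q⟩) ?_ ?_ ?_ ?_ ?_
  · rintro ⟨q, a⟩ h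
    simp only [Finset.mem_sigma, Nat.mem_divisors, Finset.mem_filter, Finset.mem_range] at h ⊢
    obtain ⟨⟨hq, -⟩, ha, -⟩ := h
    calc a * (Q / q) < q * (Q / q) :=
          Nat.mul_lt_mul_of_pos_right ha (Nat.div_pos (Nat.le_of_dvd hQ hq) (by omega))
      _ = Q := Nat.mul_div_cancel' hq
  · intro a ha
    simp only [Finset.mem_sigma, Nat.mem_divisors, Finset.mem_filter, Finset.mem_range] at ha ⊢
    have hg : 0 < Nat.gcd a Q := Nat.gcd_pos_of_pos_right _ hQ
    refine ⟨⟨Nat.div_dvd_of_dvd (Nat.gcd_dvd_right _ _), hQ.ne'⟩, ?_, ?_⟩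
    · exact Nat.div_lt_div_of_lt_of_dvd (Nat.gcd_dvd_right _ _) ha
    · exact Nat.coprime_div_gcd_div_gcd hg
  · rintro ⟨q, a⟩ h
    simp only [Finset.mem_sigma, Nat.mem_divisors, Finset.mem_filter, Finset.mem_range] at h
    obtain ⟨⟨⟨e, rfl⟩, -⟩, ha, hg⟩ := h
    have hq : 0 < q := by omega
    have he : 0 < e := Nat.pos_of_ne_zero (by rintro rfl; simp at hQ)
    have h1 : q * e / q = e := Nat.mul_div_cancel_left _ hq
    have h2 : Nat.gcd (a * e) (q * e) = e := by rw [Nat.gcd_mul_right, hg, one_mul]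
    simp only [h1, h2, Nat.mul_div_cancel _ he]
  · intro a ha
    have hg : 0 < Nat.gcd a Q := Nat.gcd_pos_of_pos_right _ hQ
    simp only
    rw [Nat.div_div_self (Nat.gcd_dvd_right _ _) hQ.ne', Nat.div_mul_cancel (Nat.gcd_dvd_left _ _)]
  · rintro ⟨q, a⟩ h
    rfl

theorem sum_comp_surj {G H : Type} [AddCommGroup G] [AddCommGroup H] [Fintype G] [Fintype H]
    (φ : G →+ H) (hφ : Function.Surjective φ) (f : H → ℂ) :
    (Fintype.card H : ℂ) * ∑ g, f (φ g) = Fintype.card G * ∑ h, f h := by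
  classical
  have h1 : ∀ h : H, (Finset.univ.filter (fun g => φ g = h)).card =
      (Finset.univ.filter (fun g => φ g = 0)).card := fun h =>
    AddMonoidHom.card_fiber_eq_of_mem_range φ (hφ h) (hφ 0)
  set κ := (Finset.univ.filter (fun g => φ g = 0)).card with hκ
  have h2 : ∀ F : H → ℂ, ∑ g, F (φ g) = κ * ∑ h, F h := by
    intro F
    rw [← Finset.sum_fiberwise (Finset.univ) φ (fun g => F (φ g)), Finset.mul_sum]
    refine Finset.sum_congr rfl fun h _ => ?_
    rw [← h1 h, ← nsmul_eq_mul, ← Finset.sum_const]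
    refine Finset.sum_congr rfl fun g hg => ?_
    rw [(Finset.mem_filter.mp hg).2]
  have h3 := h2 (fun _ => 1)
  simp only [Finset.sum_const, Finset.card_univ, nsmul_eq_mul, mul_one] at h3
  rw [h2, h3]; ring

theorem divisor_sum {m : ℕ} (A : Matrix (Fin m) (Fin m) ℤ) (B : Fin m → ℤ) (c : ℤ)
    (Q : ℕ) (hQ : 0 < Q) :
    ∑ q ∈ Q.divisors, (q : ℂ) ^ (-(m : ℤ)) * expSum m (fun x => qv A B c x) q =
      (Q : ℂ) * zc A B c Q / (Q : ℂ) ^ m := by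
  classical
  have : NeZero Q := ⟨hQ.ne'⟩
  have hQ' : (Q : ℂ) ≠ 0 := by exact_mod_cast hQ.ne'
  have h1 : (Q : ℂ) * zc A B c Q = ∑ a ∈ Finset.range Q,
      ∑ b : Fin m → ZMod Q, (ZMod.stdAddChar ((a : ZMod Q) * qv A B c b) : ℂ) := by
    rw [Finset.sum_comm]
    have : ∀ b : Fin m → ZMod Q, ∑ a ∈ Finset.range Q,
        (ZMod.stdAddChar ((a : ZMod Q) * qv A B c b) : ℂ) =
        if qv A B c b = 0 then (Q : ℂ) else 0 := by
      intro b
      have h := AddChar.sum_mulShift (qv A B c b) (ZMod.isPrimitive_stdAddChar Q)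
      rw [ZMod.card] at h
      push_cast at h
      rw [← h]
      refine Finset.sum_bij' (fun a _ => (a : ZMod Q)) (fun t _ => t.val) ?_ ?_ ?_ ?_ ?_
      · simp
      · intro t _; simpa using ZMod.val_lt t
      · intro a ha; exact ZMod.val_cast_of_lt (by simpa using ha)
      · intro t _; simp
      · intro a _; rfl
    rw [Finset.sum_congr rfl fun b _ => this b, ← Finset.sum_filter, Finset.sum_const,
      nsmul_eq_mul, zc, Nat.card_eq_fintype_card, Fintype.card_subtype, mul_comm]
  rw [h1, sum_range_divisors Q hQ, Finset.sum_div]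
  refine Finset.sum_congr rfl fun q hq => ?_
  have hqQ : q ∣ Q := Nat.dvd_of_mem_divisors hq
  have hq0 : 0 < q := Nat.pos_of_mem_divisors hq
  have : NeZero q := ⟨hq0.ne'⟩
  have hq' : (q : ℂ) ≠ 0 := by exact_mod_cast hq0.ne'
  rw [expSum_eq, Finset.mul_sum, Finset.sum_div]
  refine Finset.sum_congr rfl fun a _ => ?_
  have h2 : ∀ b : Fin m → ZMod Q,
      (ZMod.stdAddChar (((a * (Q / q) : ℕ) : ZMod Q) * qv A B c b) : ℂ) =
      ZMod.stdAddChar ((a : ZMod q) * qv A B c (fun i => ZMod.castHom hqQ (ZMod q) (b i))) := by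
    intro b
    have e1 := qv_map A B c (Int.castRingHom (ZMod Q)) (fun i => ((b i).val : ℤ))
    have e2 := qv_map A B c (Int.castRingHom (ZMod q)) (fun i => ((b i).val : ℤ))
    have g1 : (fun i => (Int.castRingHom (ZMod Q)) ((b i).val : ℤ)) = b := by
      funext i; simp
    have g2 : (fun i => (Int.castRingHom (ZMod q)) ((b i).val : ℤ)) =
        fun i => ZMod.castHom hqQ (ZMod q) (b i) := by
      funext i
      rw [ZMod.castHom_apply, ZMod.cast_eq_val]; simp
    rw [g1] at e1
    rw [g2] at e2
    set n := qv A B c (fun i => ((b i).val : ℤ)) with hn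
    rw [← e1, ← e2]
    simp only [eq_intCast]
    have f1 : (((a * (Q / q) : ℕ) : ZMod Q) * (n : ZMod Q)) = ((((a : ℤ) * ((Q / q : ℕ) : ℤ)) * n : ℤ) : ZMod Q) := by
      rw [Int.cast_mul, Int.cast_mul, Int.cast_natCast, Int.cast_natCast, Nat.cast_mul]
    have f2 : ((a : ZMod q) * (n : ZMod q)) = (((a : ℤ) * n : ℤ) : ZMod q) := by push_cast; rfl
    rw [f1, f2, ZMod.stdAddChar_coe, ZMod.stdAddChar_coe]
    congr 1
    obtain ⟨e, rfl⟩ := hqQ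
    rw [Nat.mul_div_cancel_left _ hq0]
    have he : (e : ℂ) ≠ 0 := by
      rintro h; apply hQ'; push_cast; rw [h, mul_zero]
    push_cast
    field_simp
  rw [Finset.sum_congr rfl fun b _ => h2 b]
  let φ : (Fin m → ZMod Q) →+ (Fin m → ZMod q) :=
    { toFun := fun b i => ZMod.castHom hqQ (ZMod q) (b i)
      map_zero' := by funext i; simp
      map_add' := fun x y => by funext i; simp only [Pi.add_apply, map_add] }
  have hφ : Function.Surjective φ := by
    intro y
    choose x hx using fun i => ZMod.castHom_surjective hqQ (y i)
    exact ⟨x, funext hx⟩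
  have h3 := sum_comp_surj φ hφ (fun b => (ZMod.stdAddChar ((a : ZMod q) * qv A B c b) : ℂ))
  simp only [Fintype.card_fun, ZMod.card, Fintype.card_fin] at h3
  push_cast at h3
  have h4 : ∑ b : Fin m → ZMod Q, (ZMod.stdAddChar ((a : ZMod q) *
      qv A B c (fun i => ZMod.castHom hqQ (ZMod q) (b i))) : ℂ) =
      ∑ b, ZMod.stdAddChar ((a : ZMod q) * qv A B c (φ b)) := rfl
  rw [h4, _root_.zpow_neg, zpow_natCast]
  field_simp
  rw [mul_comm, ← h3]

theorem singSeries_lower {m : ℕ} (A : Matrix (Fin m) (Fin m) ℤ) (B : Fin m → ℤ) (c : ℤ)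
    (hs : Summable (fun q : ℕ => (q : ℂ) ^ (-(m : ℤ)) * expSum m (fun x => qv A B c x) q))
    (κ : ℝ) (hκ : ∀ Q : ℕ, 0 < Q → κ ≤ (Q : ℝ) * zc A B c Q / (Q : ℝ) ^ m) :
    κ ≤ (singSeries m (fun x => qv A B c x)).re := by
  have h1 := hs.hasSum
  have h2 : Filter.Tendsto (fun k : ℕ => insert 0 (Nat.divisors (Nat.factorial k)))
      Filter.atTop (Filter.atTop : Filter (Finset ℕ)) := by
    apply Filter.tendsto_atTop_finset_of_monotone
    · intro a b hab
      exact Finset.insert_subset_insert _ (Nat.divisors_subset_of_dvd (Nat.factorial_ne_zero _)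
        (Nat.factorial_dvd_factorial hab))
    · intro n
      refine ⟨n, ?_⟩
      rcases Nat.eq_zero_or_pos n with rfl | hn
      · simp
      · exact Finset.mem_insert_of_mem (Nat.mem_divisors.mpr
          ⟨Nat.dvd_factorial hn le_rfl, Nat.factorial_ne_zero _⟩)
  have h3 := (Complex.continuous_re.tendsto _).comp (Filter.Tendsto.comp h1 h2)
  refine ge_of_tendsto' h3 fun k => ?_
  simp only [Function.comp]
  rw [Finset.sum_insert (by simp), divisor_sum A B c _ (Nat.factorial_pos k)]
  have h0 : expSum m (fun x => qv A B c x) 0 = 0 := by simp [expSum]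
  rw [h0, mul_zero, zero_add]
  have h5 := hκ _ (Nat.factorial_pos k)
  have h6 : (((k.factorial : ℕ) : ℂ) * zc A B c k.factorial / ((k.factorial : ℕ) : ℂ) ^ m) =
    (((k.factorial : ℝ) * zc A B c k.factorial / (k.factorial : ℝ) ^ m : ℝ) : ℂ) := by push_cast; rfl
  rw [h6, Complex.ofReal_re]
  exact h5

theorem zc_mul {m : ℕ} (A : Matrix (Fin m) (Fin m) ℤ) (B : Fin m → ℤ) (c : ℤ)
    (a b : ℕ) (hab : Nat.Coprime a b) : zc A B c (a * b) = zc A B c a * zc A B c b := by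
  unfold zc
  rw [← Nat.card_prod]
  let e := ZMod.chineseRemainder hab
  refine Nat.card_congr
    { toFun := fun x => (⟨fun i => (e (x.1 i)).1, ?_⟩, ⟨fun i => (e (x.1 i)).2, ?_⟩)
      invFun := fun y => ⟨fun i => e.symm (y.1.1 i, y.2.1 i), ?_⟩
      left_inv := ?_
      right_inv := ?_ }
  · have := qv_map A B c ((RingHom.fst (ZMod a) (ZMod b)).comp e.toRingHom) x.1
    rw [x.2, map_zero] at this
    exact this.symm
  · have := qv_map A B c ((RingHom.snd (ZMod a) (ZMod b)).comp e.toRingHom) x.1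
    rw [x.2, map_zero] at this
    exact this.symm
  · have h := qv_map A B c e.symm.toRingHom (fun i => (y.1.1 i, y.2.1 i))
    have h1 := qv_map A B c (RingHom.fst (ZMod a) (ZMod b)) (fun i => (y.1.1 i, y.2.1 i))
    have h2 := qv_map A B c (RingHom.snd (ZMod a) (ZMod b)) (fun i => (y.1.1 i, y.2.1 i))
    have h0 : qv A B c (fun i => (y.1.1 i, y.2.1 i)) = 0 := Prod.ext (h1.trans y.1.2) (h2.trans y.2.2)
    rw [h0, map_zero] at h
    exact h.symm
  · intro x
    apply Subtype.ext
    funext i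
    simp
  · intro y
    ext i <;> simp

theorem zc_one {m : ℕ} (A : Matrix (Fin m) (Fin m) ℤ) (B : Fin m → ℤ) (c : ℤ) :
    zc A B c 1 = 1 := by
  unfold zc
  rw [Nat.card_eq_one_iff_unique]
  exact ⟨⟨fun a b => Subtype.ext (Subsingleton.elim _ _)⟩, ⟨⟨0, Subsingleton.elim _ _⟩⟩⟩


theorem qv_single {m : ℕ} (A : Matrix (Fin m) (Fin m) ℤ) (B : Fin m → ℤ) (c : ℤ) {R : Type}
    [CommRing R] (x : Fin m → R) (i : Fin m) (t : R) :
    qv A B c (x + Pi.single i t) = qv A B c x + gv A B x i * t + (A i i : R) * t ^ 2 := by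
  rw [add_comm x, qv_add]
  have h1 : ∑ j, lv A x j * (Pi.single i t : Fin m → R) j = lv A x i * t := by
    rw [Finset.sum_eq_single i]
    · simp
    · intro j _ hj; simp [Pi.single_apply, hj]
    · simp
  have h2 : qv A B c (Pi.single i t : Fin m → R) = (A i i : R) * t ^ 2 + B i * t + c := by
    unfold qv
    rw [Finset.sum_eq_single i, Finset.sum_eq_single i, Finset.sum_eq_single i]
    · simp; ring
    · intro j _ hj; simp [Pi.single_apply, hj]
    · simp
    · intro j _ hj; simp [Pi.single_apply, hj]
    · simp
    · intro j _ hj; simp [Pi.single_apply, hj]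
    · simp
  rw [h1, h2, gv]; ring

theorem hensel_quad (p : ℕ) [Fact p.Prime] (a b c : ℤ_[p]) (h : ‖c‖ < ‖b‖ ^ 2) :
    ∃ t : ℤ_[p], c + b * t + a * t ^ 2 = 0 ∧ ‖t‖ < ‖b‖ := by
  let F : Polynomial ℤ_[p] := Polynomial.C c + Polynomial.C b * Polynomial.X +
    Polynomial.C a * Polynomial.X ^ 2
  have h1 : Polynomial.aeval (0 : ℤ_[p]) F = c := by simp [F]
  have h2 : Polynomial.aeval (0 : ℤ_[p]) F.derivative = b := by simp [F]
  obtain ⟨z, hz, hz2, -⟩ := hensels_lemma (F := F) (a := 0) (by rw [h1, h2]; exact h)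
  refine ⟨z, ?_, ?_⟩
  · simpa [F] using hz
  · rw [h2] at hz2; simpa using hz2

theorem hensel_count {m : ℕ} (A : Matrix (Fin m) (Fin m) ℤ) (B : Fin m → ℤ) (c : ℤ)
    (p : ℕ) [Fact p.Prime] (x₀ : Fin m → ℤ) (i : Fin m) (e v k : ℕ)
    (h0 : (p : ℤ) ^ e ∣ qv A B c x₀) (hv : ¬ (p : ℤ) ^ (v + 1) ∣ gv A B x₀ i)
    (hev : 2 * v + 1 ≤ e) (hk : e ≤ k) (hpk : p ∣ p ^ k) :
    p ^ ((k - e) * (m - 1)) ≤ Nat.card {x : Fin m → ZMod (p ^ k) // qv A B c x = 0 ∧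
      ∀ j, ZMod.castHom hpk (ZMod p) (x j) = (x₀ j : ZMod p)} := by
  classical
  have hp : p.Prime := Fact.out
  have hp0 : 0 < p := hp.pos
  have : NeZero (p ^ k) := ⟨(pow_pos hp0 k).ne'⟩
  let X : ({j : Fin m // j ≠ i} → Fin (p ^ (k - e))) → Fin m → ℤ := fun u j =>
    if hj : j ≠ i then x₀ j + (p : ℤ) ^ e * ((u ⟨j, hj⟩ : ℕ) : ℤ) else x₀ j
  have hXd : ∀ u j, (p : ℤ) ^ e ∣ X u j - x₀ j := by
    intro u j
    simp only [X]
    split_ifs <;> simp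
  have hmodq : ∀ u, (p : ℤ) ^ e ∣ qv A B c (X u) := by
    intro u
    have hc : ((p ^ e : ℕ) : ℤ) = (p : ℤ) ^ e := by push_cast; rfl
    rw [← hc, ← ZMod.intCast_zmod_eq_zero_iff_dvd] at h0 ⊢
    have e1 := qv_map A B c (Int.castRingHom (ZMod (p ^ e))) (X u)
    have e2 := qv_map A B c (Int.castRingHom (ZMod (p ^ e))) x₀
    have e3 : (fun j => (Int.castRingHom (ZMod (p ^ e))) (X u j)) =
        fun j => (Int.castRingHom (ZMod (p ^ e))) (x₀ j) := by
      funext j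
      have := hXd u j
      rw [← hc, ← ZMod.intCast_eq_intCast_iff_dvd_sub] at this
      exact this.symm
    rw [e3, ← e2] at e1
    simp only [eq_intCast] at e1
    rw [e1]; exact h0
  have hmodg : ∀ u, ¬ (p : ℤ) ^ (v + 1) ∣ gv A B (X u) i := by
    intro u
    have hc : ((p ^ (v + 1) : ℕ) : ℤ) = (p : ℤ) ^ (v + 1) := by push_cast; rfl
    rw [← hc, ← ZMod.intCast_zmod_eq_zero_iff_dvd] at hv ⊢
    have e1 := gv_map A B (Int.castRingHom (ZMod (p ^ (v + 1)))) (X u) i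
    have e2 := gv_map A B (Int.castRingHom (ZMod (p ^ (v + 1)))) x₀ i
    have e3 : (fun j => (Int.castRingHom (ZMod (p ^ (v + 1)))) (X u j)) =
        fun j => (Int.castRingHom (ZMod (p ^ (v + 1)))) (x₀ j) := by
      funext j
      have := (pow_dvd_pow (p : ℤ) (show v + 1 ≤ e by omega)).trans (hXd u j)
      rw [← hc, ← ZMod.intCast_eq_intCast_iff_dvd_sub] at this
      exact this.symm
    rw [e3, ← e2] at e1
    simp only [eq_intCast] at e1
    rw [e1]; exact hv
  have hroot : ∀ u, ∃ t : ℤ_[p], qv A B c ((fun j => ((X u j : ℤ) : ℤ_[p])) + Pi.single i t) = 0 ∧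
      ‖t‖ < 1 := by
    intro u
    have n1 : ‖((qv A B c (X u) : ℤ) : ℤ_[p])‖ ≤ (p : ℝ) ^ (-(e : ℤ)) :=
      PadicInt.norm_int_le_pow_iff_dvd.mpr (by exact_mod_cast hmodq u)
    have n2 : (p : ℝ) ^ (-(v : ℤ)) ≤ ‖((gv A B (X u) i : ℤ) : ℤ_[p])‖ := by
      by_contra hlt
      push Not at hlt
      apply hmodg u
      have : ‖((gv A B (X u) i : ℤ) : ℤ_[p])‖ ≤ (p : ℝ) ^ (-((v + 1 : ℕ) : ℤ)) := by
        rw [PadicInt.norm_le_pow_iff_norm_lt_pow_add_one]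
        have hz : -((v + 1 : ℕ) : ℤ) + 1 = -(v : ℤ) := by push_cast; ring
        rw [hz]; exact hlt
      exact_mod_cast PadicInt.norm_int_le_pow_iff_dvd.mp this
    have hlt : ‖((qv A B c (X u) : ℤ) : ℤ_[p])‖ < ‖((gv A B (X u) i : ℤ) : ℤ_[p])‖ ^ 2 := by
      calc _ ≤ (p : ℝ) ^ (-(e : ℤ)) := n1
        _ < (p : ℝ) ^ (-(2 * v : ℤ)) :=
            zpow_lt_zpow_right₀ (by exact_mod_cast hp.one_lt) (by omega)
        _ = ((p : ℝ) ^ (-(v : ℤ))) ^ 2 := by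
            rw [← zpow_natCast, ← _root_.zpow_mul]; congr 1; push_cast; ring
        _ ≤ _ := by gcongr
    obtain ⟨t, ht, ht2⟩ := hensel_quad p (A i i : ℤ_[p]) _ _ hlt
    refine ⟨t, ?_, ht2.trans_le (PadicInt.norm_le_one _)⟩
    rw [qv_single]
    have e1 := qv_map A B c (Int.castRingHom ℤ_[p]) (X u)
    have e2 := gv_map A B (Int.castRingHom ℤ_[p]) (X u) i
    simp only [eq_intCast] at e1 e2
    rw [← e1, ← e2]; exact ht
  choose t ht ht1 using hroot
  let Z : ({j : Fin m // j ≠ i} → Fin (p ^ (k - e))) → Fin m → ℤ_[p] := fun u =>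
    (fun j => ((X u j : ℤ) : ℤ_[p])) + Pi.single i (t u)
  have hfin : Finite {x : Fin m → ZMod (p ^ k) // qv A B c x = 0 ∧
      ∀ j, ZMod.castHom hpk (ZMod p) (x j) = (x₀ j : ZMod p)} := inferInstance
  have hinj := Nat.card_le_card_of_injective
    (fun u : ({j : Fin m // j ≠ i} → Fin (p ^ (k - e))) =>
      (⟨fun j => PadicInt.toZModPow k (Z u j), ?_, ?_⟩ : {x : Fin m → ZMod (p ^ k) //
        qv A B c x = 0 ∧ ∀ j, ZMod.castHom hpk (ZMod p) (x j) = (x₀ j : ZMod p)})) ?_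
  · refine le_trans (le_of_eq ?_) hinj
    rw [Nat.card_eq_fintype_card]
    simp only [Fintype.card_fun, Fintype.card_fin]
    rw [← pow_mul]
    congr 2
    rw [Fintype.card_subtype_compl, Fintype.card_subtype_eq, Fintype.card_fin]
  · rw [← qv_map, ht u, map_zero]
  · intro j
    have hφ : ∀ s : ℤ_[p], ‖s‖ < 1 → ((ZMod.castHom hpk (ZMod p)).comp (PadicInt.toZModPow k)) s = 0 := by
      intro s hs
      rw [PadicInt.norm_lt_one_iff_dvd] at hs
      obtain ⟨w, rfl⟩ := hs
      rw [map_mul, map_natCast]; simp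
    change ((ZMod.castHom hpk (ZMod p)).comp (PadicInt.toZModPow k)) (Z u j) = _
    have hz : Z u j = ((X u j : ℤ) : ℤ_[p]) + (Pi.single i (t u) : Fin m → ℤ_[p]) j := rfl
    rw [hz, map_add, map_intCast]
    have : (Pi.single i (t u) : Fin m → ℤ_[p]) j = if j = i then t u else 0 := by
      simp [Pi.single_apply]
    have e0 : ((ZMod.castHom hpk (ZMod p)).comp (PadicInt.toZModPow k))
        ((Pi.single i (t u) : Fin m → ℤ_[p]) j) = 0 := by
      rw [this]
      split_ifs
      · exact hφ _ (ht1 u)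
      · rw [map_zero]
    rw [e0, add_zero]
    have := (dvd_pow_self (p : ℤ) (show e ≠ 0 by omega)).trans (hXd u j)
    rw [← ZMod.intCast_eq_intCast_iff_dvd_sub] at this
    exact this.symm
  · intro u u' huu
    simp only [Subtype.mk.injEq] at huu
    funext ⟨j, hj⟩
    have h1 := congrFun huu j
    have hz : ∀ u, Z u j = ((x₀ j + (p : ℤ) ^ e * ((u ⟨j, hj⟩ : ℕ) : ℤ) : ℤ) : ℤ_[p]) := by
      intro u
      simp [Z, X, hj]
    simp only [hz, map_intCast] at h1
    push_cast at h1
    have h2 := add_left_cancel h1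
    have h3 : ((p ^ e * (u ⟨j, hj⟩ : ℕ) : ℕ) : ZMod (p ^ k)) =
        ((p ^ e * (u' ⟨j, hj⟩ : ℕ) : ℕ) : ZMod (p ^ k)) := by push_cast; exact h2
    have hlt : ∀ w : Fin (p ^ (k - e)), p ^ e * (w : ℕ) < p ^ k := by
      intro w
      calc p ^ e * (w : ℕ) < p ^ e * p ^ (k - e) :=
            Nat.mul_lt_mul_of_pos_left w.2 (pow_pos hp0 e)
        _ = p ^ k := by rw [← pow_add]; congr 1; omega
    have h4 := congrArg ZMod.val h3
    rw [ZMod.val_cast_of_lt (hlt _), ZMod.val_cast_of_lt (hlt _)] at h4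
    exact Fin.ext (Nat.eq_of_mul_eq_mul_left (pow_pos hp0 e) h4)


/-- Smooth zeros mod p. -/
noncomputable def sm {m : ℕ} (A : Matrix (Fin m) (Fin m) ℤ) (B : Fin m → ℤ) (c : ℤ) (p : ℕ) : ℕ :=
  Nat.card {x : Fin m → ZMod p // qv A B c x = 0 ∧ ∃ i, gv A B x i ≠ 0}

/-- Normalised density. -/
noncomputable def rho {m : ℕ} (A : Matrix (Fin m) (Fin m) ℤ) (B : Fin m → ℤ) (c : ℤ) (Q : ℕ) : ℝ :=
  (Q : ℝ) * zc A B c Q / (Q : ℝ) ^ m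

theorem zc_ge_sm {m : ℕ} (A : Matrix (Fin m) (Fin m) ℤ) (B : Fin m → ℤ) (c : ℤ)
    (p : ℕ) [Fact p.Prime] (k : ℕ) (hk : 1 ≤ k) :
    sm A B c p * p ^ ((k - 1) * (m - 1)) ≤ zc A B c (p ^ k) := by
  classical
  have hp : p.Prime := Fact.out
  have : NeZero (p ^ k) := ⟨(pow_pos hp.pos k).ne'⟩
  have hpk : p ∣ p ^ k := dvd_pow_self p (by omega)
  set S : Finset (Fin m → ZMod p) := Finset.univ.filter
    (fun x => qv A B c x = 0 ∧ ∃ i, gv A B x i ≠ 0) with hS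
  set Z : Finset (Fin m → ZMod (p ^ k)) := Finset.univ.filter (fun x => qv A B c x = 0) with hZ
  have hs : sm A B c p = S.card := by
    rw [sm, Nat.card_eq_fintype_card, Fintype.card_subtype]
  have hz : zc A B c (p ^ k) = Z.card := by
    rw [zc, Nat.card_eq_fintype_card, Fintype.card_subtype]
  let red : (Fin m → ZMod (p ^ k)) → (Fin m → ZMod p) := fun x j => ZMod.castHom hpk (ZMod p) (x j)
  have h1 := Finset.sum_card_fiberwise_eq_card_filter Z S red
  have h2 : ∀ x ∈ S, p ^ ((k - 1) * (m - 1)) ≤ (Z.filter (fun z => red z = x)).card := by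
    intro x hx
    obtain ⟨-, hx0, i, hi⟩ := Finset.mem_filter.mp hx
    have e0 : (fun j => (Int.castRingHom (ZMod p)) ((x j).val : ℤ)) = x := by funext j; simp
    have e1 := qv_map A B c (Int.castRingHom (ZMod p)) (fun j => ((x j).val : ℤ))
    have e2 := gv_map A B (Int.castRingHom (ZMod p)) (fun j => ((x j).val : ℤ)) i
    rw [e0] at e1 e2
    have := hensel_count A B c p (fun j => ((x j).val : ℤ)) i 1 0 k ?_ ?_ (by norm_num) hk hpk
    · refine this.trans (le_of_eq ?_)
      rw [Nat.card_eq_fintype_card, Fintype.card_subtype]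
      congr 1
      ext z
      simp only [Finset.mem_filter, Finset.mem_univ, true_and, hZ, red]
      refine and_congr_right fun _ => ?_
      constructor
      · intro h; funext j; rw [h j]; simp
      · intro h j; rw [← congrFun h j]; simp
    · rw [pow_one, ← ZMod.intCast_zmod_eq_zero_iff_dvd]
      simpa [hx0] using e1
    · rw [zero_add, pow_one, ← ZMod.intCast_zmod_eq_zero_iff_dvd]
      intro h
      rw [eq_intCast, h] at e2
      exact hi e2.symm
  calc sm A B c p * p ^ ((k - 1) * (m - 1)) = ∑ x ∈ S, p ^ ((k - 1) * (m - 1)) := by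
        rw [Finset.sum_const, hs, smul_eq_mul]
    _ ≤ ∑ x ∈ S, (Z.filter (fun z => red z = x)).card := Finset.sum_le_sum h2
    _ = (Z.filter (fun z => red z ∈ S)).card := h1
    _ ≤ Z.card := Finset.card_filter_le _ _
    _ = _ := hz.symm

theorem rho_ge_sm {m : ℕ} (hm : 0 < m) (A : Matrix (Fin m) (Fin m) ℤ) (B : Fin m → ℤ) (c : ℤ)
    (p : ℕ) [Fact p.Prime] (k : ℕ) (hk : 1 ≤ k) :
    (sm A B c p : ℝ) / (p : ℝ) ^ (m - 1) ≤ rho A B c (p ^ k) := by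
  have hp : (0 : ℝ) < p := by exact_mod_cast (Fact.out : p.Prime).pos
  have h := zc_ge_sm A B c p k hk
  have h' : (sm A B c p : ℝ) * (p : ℝ) ^ ((k - 1) * (m - 1)) ≤ zc A B c (p ^ k) := by exact_mod_cast h
  unfold rho
  push_cast
  rw [div_le_div_iff₀ (by positivity) (by positivity)]
  obtain ⟨m', rfl⟩ : ∃ m', m = m' + 1 := ⟨m - 1, by omega⟩
  obtain ⟨k', rfl⟩ : ∃ k', k = k' + 1 := ⟨k - 1, by omega⟩
  simp only [Nat.add_sub_cancel] at h' ⊢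
  calc (sm A B c p : ℝ) * ((p : ℝ) ^ (k' + 1)) ^ (m' + 1)
      = (p : ℝ) ^ (k' + 1) * (sm A B c p * (p : ℝ) ^ (k' * m')) * (p : ℝ) ^ m' := by ring
    _ ≤ _ := by gcongr

theorem sm_bound {m : ℕ} (hm : 0 < m) (A : Matrix (Fin m) (Fin m) ℤ) (B : Fin m → ℤ) (c : ℤ)
    (p : ℕ) [Fact p.Prime] (β : ℝ) (hβ : 0 ≤ β) (h : (p : ℝ) ^ 2 * kc A p ≤ β ^ 2 * (p : ℝ) ^ m) :
    1 - 2 * β ≤ (sm A B c p : ℝ) / (p : ℝ) ^ (m - 1) := by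
  classical
  have hpp : p.Prime := Fact.out
  have hp : (0 : ℝ) < p := by exact_mod_cast hpp.pos
  have hp1 : (1 : ℝ) ≤ p := by exact_mod_cast hpp.one_le
  -- total zeros
  have h1 := divisor_sum A B c p hpp.pos
  rw [hpp.divisors, Finset.sum_pair hpp.one_lt.ne] at h1
  have e1 : expSum m (fun x => qv A B c x) 1 = 1 := by
    have := divisor_sum A B c 1 one_pos
    simpa [zc_one] using this
  have hkc1 : (kc A p : ℝ) ≤ (p : ℝ) ^ m := by
    have : kc A p ≤ p ^ m := by
      refine (Finite.card_subtype_le _).trans ?_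
      simp
    exact_mod_cast this
  have hn : ‖expSum m (fun x => qv A B c x) p‖ ≤ (p : ℝ) * Real.sqrt ((p : ℝ) ^ m * kc A p) := by
    rw [expSum_eq]
    refine (norm_sum_le _ _).trans ?_
    refine (Finset.sum_le_card_nsmul _ _ (Real.sqrt ((p : ℝ) ^ m * kc A p)) ?_).trans ?_
    · intro a ha
      apply Real.le_sqrt_of_sq_le
      apply weyl
      rw [ZMod.isUnit_iff_coprime]
      exact (Finset.mem_filter.mp ha).2
    · rw [nsmul_eq_mul]
      gcongr
      refine (Finset.card_filter_le _ _).trans ?_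
      simp
  have hs : (p : ℝ) * Real.sqrt ((p : ℝ) ^ m * kc A p) ≤ β * (p : ℝ) ^ m := by
    apply le_of_sq_le_sq _ (by positivity)
    rw [mul_pow, Real.sq_sqrt (by positivity)]
    nlinarith [pow_pos hp m]
  have hzc : (1 - β) * (p : ℝ) ^ m ≤ p * zc A B c p := by
    rw [e1] at h1
    have h2 : ((p : ℂ) * zc A B c p) = (p : ℂ) ^ m + expSum m (fun x => qv A B c x) p := by
      have hp' : (p : ℂ) ≠ 0 := by exact_mod_cast hpp.ne_zero
      rw [_root_.zpow_neg, _root_.zpow_neg, zpow_natCast, zpow_natCast, Nat.cast_one, one_pow, inv_one,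
        one_mul] at h1
      have hpm : (p : ℂ) ^ m ≠ 0 := pow_ne_zero _ hp'
      rw [eq_div_iff hpm, add_mul, mul_right_comm, inv_mul_cancel₀ hpm, one_mul, one_mul] at h1
      simpa using h1.symm
    have h3 := congrArg Complex.re h2
    have h4 : ((p : ℂ) * zc A B c p).re = p * zc A B c p := by
      have : ((p : ℂ) * zc A B c p) = ((p * zc A B c p : ℝ) : ℂ) := by push_cast; rfl
      rw [this, Complex.ofReal_re]
    have h5 : ((p : ℂ) ^ m).re = (p : ℝ) ^ m := by
      have : ((p : ℂ) ^ m) = (((p : ℝ) ^ m : ℝ) : ℂ) := by push_cast; rfl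
      rw [this, Complex.ofReal_re]
    rw [Complex.add_re, h4, h5] at h3
    have h6 := (abs_le.mp (Complex.abs_re_le_norm (expSum m (fun x => qv A B c x) p))).1
    nlinarith
  -- singular zeros
  have hsing : zc A B c p ≤ sm A B c p + kc A p := by
    have c1 : zc A B c p = (Finset.univ.filter (fun x : Fin m → ZMod p => qv A B c x = 0)).card := by
      rw [zc, Nat.card_eq_fintype_card, Fintype.card_subtype]
    have c2 : sm A B c p = (Finset.univ.filter (fun x : Fin m → ZMod p => qv A B c x = 0 ∧
        ∃ i, gv A B x i ≠ 0)).card := by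
      rw [sm, Nat.card_eq_fintype_card, Fintype.card_subtype]
    have c3 : kc A p = (Finset.univ.filter (fun x : Fin m → ZMod p => ∀ i, lv A x i = 0)).card := by
      rw [kc, Nat.card_eq_fintype_card, Fintype.card_subtype]
    have c4 : (Finset.univ.filter (fun x : Fin m → ZMod p => ∀ i, gv A B x i = 0)).card ≤ kc A p := by
      rw [c3]
      by_cases hne : ∃ x₀ : Fin m → ZMod p, ∀ i, gv A B x₀ i = 0
      · obtain ⟨x₀, hx₀⟩ := hne
        refine Finset.card_le_card_of_injOn (fun x => x - x₀) ?_ ?_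
        · intro x hx
          simp only [Finset.coe_filter, Finset.mem_univ, true_and, Set.mem_ofPred_eq] at hx ⊢
          intro i
          have a1 := hx i
          have a2 := hx₀ i
          rw [gv] at a1 a2
          rw [lv_sub]
          linear_combination a1 - a2
        · intro x _ y _ hxy
          exact sub_left_injective hxy
      · push Not at hne
        rw [Finset.filter_false_of_mem]
        · simp
        · intro x _ hx
          obtain ⟨i, hi⟩ := hne x
          exact hi (hx i)
    rw [c1, c2]
    refine le_trans ?_ (Nat.add_le_add_left c4 _)
    refine le_trans (Finset.card_le_card ?_) (Finset.card_union_le _ _)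
    intro x hx
    simp only [Finset.mem_filter, Finset.mem_univ, true_and, Finset.mem_union] at hx ⊢
    by_cases hg : ∃ i, gv A B x i ≠ 0
    · exact Or.inl ⟨hx, hg⟩
    · push Not at hg
      exact Or.inr hg
  have hkc : (p : ℝ) * kc A p ≤ β * (p : ℝ) ^ m := by
    refine le_trans ?_ hs
    gcongr
    apply Real.le_sqrt_of_sq_le
    rw [sq]
    gcongr
  have hsing' : (zc A B c p : ℝ) ≤ sm A B c p + kc A p := by exact_mod_cast hsing
  obtain ⟨m', rfl⟩ : ∃ m', m = m' + 1 := ⟨m - 1, by omega⟩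
  rw [Nat.add_sub_cancel, le_div_iff₀ (by positivity)]
  have : (p : ℝ) * ((1 - 2 * β) * (p : ℝ) ^ m') ≤ p * sm A B c p := by
    have e : (p : ℝ) * ((1 - 2 * β) * (p : ℝ) ^ m') = (1 - 2 * β) * (p : ℝ) ^ (m' + 1) := by ring
    rw [e]
    nlinarith
  exact le_of_mul_le_mul_left this hp

theorem prod_one_sub_ge (S : Finset ℕ) (b : ℕ → ℝ) (h0 : ∀ i ∈ S, 0 ≤ b i) (h1 : ∀ i ∈ S, b i ≤ 1) :
    1 - ∑ i ∈ S, b i ≤ ∏ i ∈ S, (1 - b i) := by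
  classical
  induction S using Finset.induction_on with
  | empty => simp
  | insert a s ha ih =>
    rw [Finset.sum_insert ha, Finset.prod_insert ha]
    have i1 := ih (fun i hi => h0 i (Finset.mem_insert_of_mem hi))
      (fun i hi => h1 i (Finset.mem_insert_of_mem hi))
    have i2 := h0 a (Finset.mem_insert_self _ _)
    have i3 := h1 a (Finset.mem_insert_self _ _)
    have i4 : ∏ i ∈ s, (1 - b i) ≤ 1 := Finset.prod_le_one
      (fun i hi => by linarith [h1 i (Finset.mem_insert_of_mem hi)])
      (fun i hi => by linarith [h0 i (Finset.mem_insert_of_mem hi)])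
    nlinarith

theorem rho_assembly {m : ℕ} (A : Matrix (Fin m) (Fin m) ℤ) (B : Fin m → ℤ) (c : ℤ)
    (T : ℕ) (hT : 0 < T)
    (hbad : ∀ ℓ k : ℕ, ℓ.Prime → ℓ ∣ T → ((ℓ : ℝ) ^ (T.factorization ℓ * (m - 1)))⁻¹ ≤ rho A B c (ℓ ^ k))
    (b : ℕ → ℝ) (hb0 : ∀ ℓ, 0 ≤ b ℓ) (hb1 : ∀ ℓ, b ℓ ≤ 1)
    (hgood : ∀ ℓ k : ℕ, ℓ.Prime → ¬ ℓ ∣ T → 1 ≤ k → 1 - b ℓ ≤ rho A B c (ℓ ^ k))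
    (hsum : ∀ S : Finset ℕ, (∀ ℓ ∈ S, ℓ.Prime ∧ ¬ ℓ ∣ T) → ∑ ℓ ∈ S, b ℓ ≤ 1 / 2)
    (Q : ℕ) (hQ : 0 < Q) :
    ((T : ℝ) ^ (m - 1))⁻¹ / 2 ≤ rho A B c Q := by
  classical
  have h1 := Nat.multiplicative_factorization (rho A B c)
    (fun x y hxy => by
      rcases Nat.eq_zero_or_pos x with rfl | hx
      · have : y = 1 := by simpa using hxy
        subst this; simp [rho]
      rcases Nat.eq_zero_or_pos y with rfl | hy
      · have : x = 1 := by simpa using hxy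
        subst this; simp [rho]
      have hx' : (x : ℝ) ≠ 0 := by exact_mod_cast hx.ne'
      have hy' : (y : ℝ) ≠ 0 := by exact_mod_cast hy.ne'
      unfold rho; rw [zc_mul A B c x y hxy, div_mul_div_comm]; push_cast; rw [mul_pow]; congr 1; ring)
    (by simp [rho, zc_one]) hQ.ne'
  rw [h1, Finsupp.prod, Nat.support_factorization]
  rw [← Finset.prod_filter_mul_prod_filter_not Q.primeFactors (fun ℓ => ℓ ∣ T)]
  have hA : ((T : ℝ) ^ (m - 1))⁻¹ ≤ ∏ ℓ ∈ Q.primeFactors.filter (fun ℓ => ℓ ∣ T),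
      rho A B c (ℓ ^ Q.factorization ℓ) := by
    have hTe : ((T : ℝ) ^ (m - 1))⁻¹ = ∏ ℓ ∈ T.primeFactors, ((ℓ : ℝ) ^ (T.factorization ℓ * (m - 1)))⁻¹ := by
      conv_lhs => rw [← Nat.prod_factorization_pow_eq_self hT.ne']
      rw [Finsupp.prod, Nat.support_factorization]
      push_cast
      rw [← Finset.prod_pow, ← Finset.prod_inv_distrib]
      refine Finset.prod_congr rfl fun ℓ _ => ?_
      rw [pow_mul]
    rw [hTe]
    have hsub : Q.primeFactors.filter (fun ℓ => ℓ ∣ T) ⊆ T.primeFactors := by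
      intro ℓ hℓ
      rw [Finset.mem_filter] at hℓ
      exact Nat.mem_primeFactors.mpr ⟨Nat.prime_of_mem_primeFactors hℓ.1, hℓ.2, hT.ne'⟩
    calc ∏ ℓ ∈ T.primeFactors, ((ℓ : ℝ) ^ (T.factorization ℓ * (m - 1)))⁻¹
        ≤ ∏ ℓ ∈ Q.primeFactors.filter (fun ℓ => ℓ ∣ T), ((ℓ : ℝ) ^ (T.factorization ℓ * (m - 1)))⁻¹ := by
          rw [← Finset.prod_sdiff hsub]
          apply mul_le_of_le_one_left
          · exact Finset.prod_nonneg fun ℓ _ => by positivity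
          · apply Finset.prod_le_one
            · intro ℓ _; positivity
            · intro ℓ hℓ
              have : ℓ.Prime := Nat.prime_of_mem_primeFactors (Finset.mem_sdiff.mp hℓ).1
              apply inv_le_one_of_one_le₀
              apply one_le_pow₀
              exact_mod_cast this.one_le
      _ ≤ _ := by
          apply Finset.prod_le_prod
          · intro ℓ _; positivity
          · intro ℓ hℓ
            rw [Finset.mem_filter] at hℓ
            exact hbad ℓ _ (Nat.prime_of_mem_primeFactors hℓ.1) hℓ.2
  have hB : (1 / 2 : ℝ) ≤ ∏ ℓ ∈ Q.primeFactors.filter (fun ℓ => ¬ ℓ ∣ T),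
      rho A B c (ℓ ^ Q.factorization ℓ) := by
    set S := Q.primeFactors.filter (fun ℓ => ¬ ℓ ∣ T) with hS
    have i1 := hsum S (fun ℓ hℓ => ⟨Nat.prime_of_mem_primeFactors (Finset.mem_filter.mp hℓ).1,
      (Finset.mem_filter.mp hℓ).2⟩)
    have i2 := prod_one_sub_ge S b (fun i _ => hb0 i) (fun i _ => hb1 i)
    have i3 : ∏ ℓ ∈ S, (1 - b ℓ) ≤ ∏ ℓ ∈ S, rho A B c (ℓ ^ Q.factorization ℓ) := by
      apply Finset.prod_le_prod
      · intro ℓ _; linarith [hb1 ℓ]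
      · intro ℓ hℓ
        obtain ⟨hℓ1, hℓ2⟩ := Finset.mem_filter.mp hℓ
        refine hgood ℓ _ (Nat.prime_of_mem_primeFactors hℓ1) hℓ2 ?_
        exact (Nat.prime_of_mem_primeFactors hℓ1).factorization_pos_of_dvd hQ.ne'
          (Nat.dvd_of_mem_primeFactors hℓ1)
    linarith
  calc ((T : ℝ) ^ (m - 1))⁻¹ / 2 = ((T : ℝ) ^ (m - 1))⁻¹ * (1 / 2) := by ring
    _ ≤ _ := mul_le_mul hA hB (by norm_num) (le_trans (by positivity) hA)

theorem rho_bad {m : ℕ} (hm : 0 < m) (A' : Matrix (Fin m) (Fin m) ℤ) (B' : Fin m → ℤ) (c' : ℤ)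
    (T : ℕ) (hT : 0 < T) (x₀ : Fin m → ℤ) (i : Fin m) (h0 : (T : ℤ) ∣ qv A' B' c' x₀)
    (ℓ : ℕ) (hℓ : ℓ.Prime)
    (v : ℕ) (hv : 2 * v + 1 ≤ T.factorization ℓ) (hg : ¬ (ℓ : ℤ) ^ (v + 1) ∣ gv A' B' x₀ i) (k : ℕ) :
    ((ℓ : ℝ) ^ (T.factorization ℓ * (m - 1)))⁻¹ ≤
      rho ((T : ℤ) • A') ((T : ℤ) • B') ((T : ℤ) * c') (ℓ ^ k) := by
  classical
  have : Fact ℓ.Prime := ⟨hℓ⟩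
  set e := T.factorization ℓ with he
  have hed : (ℓ : ℤ) ^ e ∣ qv A' B' c' x₀ := by
    refine dvd_trans ?_ h0
    exact_mod_cast Nat.ordProj_dvd T ℓ
  have hnz : NeZero (ℓ ^ k) := ⟨(pow_pos hℓ.pos k).ne'⟩
  have hmono : zc A' B' c' (ℓ ^ k) ≤ zc ((T : ℤ) • A') ((T : ℤ) • B') ((T : ℤ) * c') (ℓ ^ k) := by
    unfold zc
    refine Nat.card_le_card_of_injective (fun x => ⟨x.1, ?_⟩) ?_
    · have : qv ((T : ℤ) • A') ((T : ℤ) • B') ((T : ℤ) * c') x.1 = (T : ZMod (ℓ ^ k)) * qv A' B' c' x.1 := by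
        simp only [qv, Matrix.smul_apply, Pi.smul_apply, smul_eq_mul, Int.cast_mul, Int.cast_natCast,
          mul_add, Finset.mul_sum, mul_assoc]
      rw [this, x.2, mul_zero]
    · intro x y hxy
      simp only [Subtype.mk.injEq] at hxy
      exact Subtype.ext hxy
  have hlow : ℓ ^ ((k - e) * (m - 1)) ≤ zc A' B' c' (ℓ ^ k) := by
    rcases le_or_gt e k with hek | hek
    · refine (hensel_count A' B' c' ℓ x₀ i e v k hed hg hv hek (dvd_pow_self _ (by omega))).trans ?_
      unfold zc
      refine Nat.card_le_card_of_injective (fun x => ⟨x.1, x.2.1⟩) ?_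
      intro x y hxy
      simp only [Subtype.mk.injEq] at hxy
      exact Subtype.ext hxy
    · rw [Nat.sub_eq_zero_of_le hek.le, zero_mul, pow_zero]
      have e1 := qv_map A' B' c' (Int.castRingHom (ZMod (ℓ ^ k))) x₀
      have e2 : (Int.castRingHom (ZMod (ℓ ^ k))) (qv A' B' c' x₀) = 0 := by
        rw [eq_intCast, ZMod.intCast_zmod_eq_zero_iff_dvd]
        refine dvd_trans ?_ hed
        push_cast
        exact pow_dvd_pow _ hek.le
      rw [e2] at e1
      have : Nonempty {x : Fin m → ZMod (ℓ ^ k) // qv A' B' c' x = 0} := ⟨⟨_, e1.symm⟩⟩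
      exact Nat.card_pos
  have hfin : ((ℓ : ℝ) ^ ((k - e) * (m - 1))) ≤ zc ((T : ℤ) • A') ((T : ℤ) • B') ((T : ℤ) * c') (ℓ ^ k) := by
    exact_mod_cast hlow.trans hmono
  have hp : (0 : ℝ) < ℓ := by exact_mod_cast hℓ.pos
  have hp1 : (1 : ℝ) ≤ ℓ := by exact_mod_cast hℓ.one_le
  unfold rho
  push_cast
  rw [inv_eq_one_div, div_le_div_iff₀ (by positivity) (by positivity), one_mul]
  obtain ⟨m', rfl⟩ : ∃ m', m = m' + 1 := ⟨m - 1, by omega⟩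
  rw [Nat.add_sub_cancel] at *
  calc ((ℓ : ℝ) ^ k) ^ (m' + 1) = (ℓ : ℝ) ^ k * (ℓ : ℝ) ^ (k * m') := by ring
    _ ≤ (ℓ : ℝ) ^ k * (ℓ : ℝ) ^ ((k - e) * m' + e * m') := by
        gcongr
        rw [← add_mul]; exact Nat.mul_le_mul_right _ (by omega)
    _ = (ℓ : ℝ) ^ k * (ℓ : ℝ) ^ ((k - e) * m') * (ℓ : ℝ) ^ (e * m') := by ring
    _ ≤ _ := by gcongr


theorem theta_vanish {p : ℕ} [Fact p.Prime] (f : Polynomial (ZMod p)) (s : ZMod p)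
    (hs : f.eval s ≠ 0) (M : ℕ) (hM : M ≤ p) : ∀ u : Polynomial (ZMod p),
    (∀ k < M, ((fun w : Polynomial (ZMod p) => f * Polynomial.derivative w)^[k] u).eval s = 0) →
      (Polynomial.X - Polynomial.C s) ^ M ∣ u := by
  induction M with
  | zero => intro u _; simp
  | succ M ih =>
    intro u hu
    have ih' := ih (by omega)
    have h1 : (Polynomial.X - Polynomial.C s) ^ M ∣ u := ih' u fun k hk => hu k (by omega)
    have h2 : (Polynomial.X - Polynomial.C s) ^ M ∣ f * Polynomial.derivative u := by
      apply ih'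
      intro k hk
      have := hu (k + 1) (by omega)
      rwa [Function.iterate_succ_apply] at this
    have hcop : IsCoprime ((Polynomial.X - Polynomial.C s) ^ M) f := by
      apply IsCoprime.pow_left
      rw [(Polynomial.irreducible_X_sub_C s).coprime_iff_not_dvd, Polynomial.dvd_iff_isRoot]
      exact hs
    have h3 := hcop.dvd_of_dvd_mul_left h2
    obtain ⟨w, rfl⟩ := h1
    rcases Nat.eq_zero_or_pos M with rfl | hMpos
    · have := hu 0 (by omega)
      simp only [Function.iterate_zero, id] at this
      rw [zero_add, pow_one, Polynomial.dvd_iff_isRoot]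
      exact this
    rw [Polynomial.derivative_mul] at h3
    have h4 : (Polynomial.X - Polynomial.C s) ^ M ∣
        Polynomial.derivative ((Polynomial.X - Polynomial.C s) ^ M) * w :=
      (dvd_add_left (Dvd.intro _ rfl)).mp h3
    obtain ⟨N, rfl⟩ : ∃ N, M = N + 1 := ⟨M - 1, by omega⟩
    rw [Polynomial.derivative_X_sub_C_pow, Nat.add_sub_cancel, pow_succ, mul_right_comm] at h4
    have hne : (Polynomial.X - Polynomial.C s) ^ N ≠ 0 := pow_ne_zero _ (Polynomial.X_sub_C_ne_zero s)
    rw [mul_comm (_ * w), mul_dvd_mul_iff_left hne, Polynomial.dvd_iff_isRoot] at h4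
    have h5 : w.eval s = 0 := by
      have h6 : ((N + 1 : ℕ) : ZMod p) * w.eval s = 0 := by
        simpa [Polynomial.IsRoot] using h4
      rcases mul_eq_zero.mp h6 with h | h
      · exfalso
        rw [ZMod.natCast_eq_zero_iff] at h
        exact absurd (Nat.le_of_dvd (by omega) h) (by omega)
      · exact h
    rw [pow_succ (Polynomial.X - Polynomial.C s) (N + 1)]
    apply mul_dvd_mul_left
    rw [Polynomial.dvd_iff_isRoot]
    exact h5

theorem pow_p_mod {p : ℕ} [Fact p.Prime] (f : Polynomial (ZMod p)) :
    (Polynomial.X : Polynomial (ZMod p)) ^ p ∣ f ^ p - Polynomial.C (f.coeff 0) := by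
  rw [← ZMod.expand_card f]
  have h : (Polynomial.X : Polynomial (ZMod p)) ∣ f - Polynomial.C (f.coeff 0) := by
    rw [Polynomial.X_dvd_iff]; simp
  have := map_dvd (Polynomial.expand (ZMod p) p) h
  simpa using this

theorem eq_of_dvd_X_pow {K : Type} [Field K] (u : Polynomial K) (n : ℕ) (h : Polynomial.X ^ n ∣ u)
    (hd : u.natDegree < n) : u = 0 := by
  by_contra hne
  have := Polynomial.natDegree_le_of_dvd h hne
  rw [Polynomial.natDegree_X_pow] at this
  omega

/-- The key nonvanishing step. -/
theorem stepanov_nonvanish {p : ℕ} [Fact p.Prime] (hp2 : p ≠ 2) (f : Polynomial (ZMod p))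
    (hd : f.natDegree ≤ 4) (h0 : f.coeff 0 ≠ 0)
    (hns : ¬ ∃ (c : ZMod p) (g : Polynomial (ZMod p)), f = Polynomial.C c * g ^ 2)
    (P Q W : Polynomial (ZMod p)) (hP : 2 * P.natDegree + 4 < p) (hQ : 2 * Q.natDegree + 4 < p)
    (h : P + f ^ ((p - 1) / 2) * Q + Polynomial.X ^ p * W = 0) : P = 0 ∧ Q = 0 := by
  have hp : p.Prime := Fact.out
  have hodd : 2 * ((p - 1) / 2) + 1 = p := by
    have := hp.eq_two_or_odd; omega
  have h1 : (Polynomial.X : Polynomial (ZMod p)) ^ p ∣ f * P ^ 2 - f ^ p * Q ^ 2 := by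
    have e1 : f ^ p = f * (f ^ ((p - 1) / 2)) ^ 2 := by
      rw [← pow_mul, ← pow_succ']; congr 1; omega
    have e2 : P = -(f ^ ((p - 1) / 2) * Q + Polynomial.X ^ p * W) := by linear_combination h
    rw [e1, e2]
    exact ⟨f * (2 * f ^ ((p - 1) / 2) * Q * W + Polynomial.X ^ p * W ^ 2), by ring⟩
  have h2 : (Polynomial.X : Polynomial (ZMod p)) ^ p ∣ f * P ^ 2 - Polynomial.C (f.coeff 0) * Q ^ 2 := by
    have := dvd_add h1 (Dvd.dvd.mul_right (pow_p_mod f) (Q ^ 2))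
    convert this using 1; ring
  have h3 : f * P ^ 2 - Polynomial.C (f.coeff 0) * Q ^ 2 = 0 := by
    apply eq_of_dvd_X_pow _ p h2
    refine lt_of_le_of_lt (Polynomial.natDegree_sub_le _ _) (max_lt ?_ ?_)
    · refine lt_of_le_of_lt Polynomial.natDegree_mul_le ?_
      have := Polynomial.natDegree_pow_le (p := P) (n := 2)
      omega
    · refine lt_of_le_of_lt (Polynomial.natDegree_C_mul_le _ _) ?_
      have := Polynomial.natDegree_pow_le (p := Q) (n := 2)
      omega
  by_cases hP0 : P = 0
  · refine ⟨hP0, ?_⟩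
    rw [hP0] at h3
    have : Polynomial.C (f.coeff 0) * Q ^ 2 = 0 := by linear_combination -h3
    rcases mul_eq_zero.mp this with h' | h'
    · exact absurd (Polynomial.C_eq_zero.mp h') h0
    · exact pow_eq_zero_iff (two_ne_zero) |>.mp h'
  · exfalso
    apply hns
    have hdvd : P ^ 2 ∣ Q ^ 2 := by
      have : P ^ 2 ∣ Polynomial.C (f.coeff 0) * Q ^ 2 := ⟨f, by linear_combination -h3⟩
      exact (IsUnit.dvd_mul_left (Polynomial.isUnit_C.mpr (IsUnit.mk0 _ h0))).mp this
    rw [UniqueFactorizationMonoid.pow_dvd_pow_iff_dvd two_ne_zero] at hdvd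
    obtain ⟨g, rfl⟩ := hdvd
    refine ⟨f.coeff 0, g, ?_⟩
    have hP2 : P ^ 2 ≠ 0 := pow_ne_zero _ hP0
    apply mul_right_cancel₀ hP2
    linear_combination h3


/-- `w ↦ f w'`. -/
noncomputable def tOne {K : Type} [Field K] (f : Polynomial K) : Polynomial K →ₗ[K] Polynomial K :=
  (LinearMap.mulLeft K f).comp Polynomial.derivative

/-- `w ↦ f w' - f' w / 2`. -/
noncomputable def tTwo {K : Type} [Field K] (f : Polynomial K) : Polynomial K →ₗ[K] Polynomial K :=
  tOne f - LinearMap.mulLeft K (Polynomial.C (1 / 2) * Polynomial.derivative f)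

theorem tOne_apply {K : Type} [Field K] (f w : Polynomial K) :
    tOne f w = f * Polynomial.derivative w := rfl

theorem tTwo_apply {K : Type} [Field K] (f w : Polynomial K) :
    tTwo f w = f * Polynomial.derivative w - Polynomial.C (1 / 2) * Polynomial.derivative f * w := rfl

theorem tOne_deg {K : Type} [Field K] (f : Polynomial K) (hd : f.natDegree ≤ 4) (k : ℕ) (w : Polynomial K) :
    ((tOne f ^ k) w).natDegree ≤ w.natDegree + 4 * k := by
  induction k generalizing w with
  | zero => simp
  | succ k ih =>
    rw [pow_succ, Module.End.mul_apply]
    refine (ih _).trans ?_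
    have h1 : (tOne f w).natDegree ≤ w.natDegree + 4 := by
      rw [tOne_apply]
      refine Polynomial.natDegree_mul_le.trans ?_
      have := Polynomial.natDegree_derivative_le w
      omega
    omega

theorem tTwo_deg {K : Type} [Field K] (f : Polynomial K) (hd : f.natDegree ≤ 4) (k : ℕ) (w : Polynomial K) :
    ((tTwo f ^ k) w).natDegree ≤ w.natDegree + 4 * k := by
  induction k generalizing w with
  | zero => simp
  | succ k ih =>
    rw [pow_succ, Module.End.mul_apply]
    refine (ih _).trans ?_
    have h1 : (tTwo f w).natDegree ≤ w.natDegree + 4 := by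
      rw [tTwo_apply]
      refine (Polynomial.natDegree_sub_le _ _).trans (max_le ?_ ?_)
      · refine Polynomial.natDegree_mul_le.trans ?_
        have := Polynomial.natDegree_derivative_le w
        omega
      · refine Polynomial.natDegree_mul_le.trans ?_
        have h2 := Polynomial.natDegree_C_mul_le (1 / 2 : K) (Polynomial.derivative f)
        have := Polynomial.natDegree_derivative_le f
        omega
    omega

/-- Auxiliary polynomial. -/
noncomputable def psi {p : ℕ} (f : Polynomial (ZMod p))
    (P Q : Fin 3 → Polynomial (ZMod p)) : Polynomial (ZMod p) :=
  ∑ j : Fin 3, Polynomial.X ^ (p * (j : ℕ)) * (P j + f ^ ((p - 1) / 2) * Q j)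

theorem psi_theta {p : ℕ} [Fact p.Prime] (hp2 : p ≠ 2) (f : Polynomial (ZMod p))
    (P Q : Fin 3 → Polynomial (ZMod p)) (k : ℕ) :
    (fun w : Polynomial (ZMod p) => f * Polynomial.derivative w)^[k] (psi f P Q) =
      psi f (fun j => (tOne f ^ k) (P j)) (fun j => (tTwo f ^ k) (Q j)) := by
  have hp : p.Prime := Fact.out
  have hodd : 2 * ((p - 1) / 2) + 1 = p := by
    have := hp.eq_two_or_odd; omega
  induction k generalizing P Q with
  | zero => simp
  | succ k ih =>
    rw [Function.iterate_succ_apply]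
    have h1 : f * Polynomial.derivative (psi f P Q) =
        psi f (fun j => tOne f (P j)) (fun j => tTwo f (Q j)) := by
      unfold psi
      rw [Polynomial.derivative_sum, Finset.mul_sum]
      refine Finset.sum_congr rfl fun j _ => ?_
      have d1 : Polynomial.derivative ((Polynomial.X : Polynomial (ZMod p)) ^ (p * (j : ℕ))) = 0 := by
        rw [Polynomial.derivative_X_pow]
        simp
      have d2 : f * Polynomial.derivative (f ^ ((p - 1) / 2)) =
          - Polynomial.C (1 / 2) * Polynomial.derivative f * f ^ ((p - 1) / 2) := by
        rw [Polynomial.derivative_pow]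
        have e1 : ((((p - 1) / 2 : ℕ)) : ZMod p) = -(1 / 2) := by
          have h2 : (2 : ZMod p) ≠ 0 := by
            intro h
            have : ((2 : ℕ) : ZMod p) = 0 := by exact_mod_cast h
            rw [ZMod.natCast_eq_zero_iff] at this
            exact hp2 ((Nat.prime_dvd_prime_iff_eq hp Nat.prime_two).mp this)
          have h3 : ((2 * ((p - 1) / 2) + 1 : ℕ) : ZMod p) = 0 := by rw [hodd]; simp
          rw [Nat.cast_add, Nat.cast_mul, Nat.cast_one, Nat.cast_two] at h3
          field_simp
          linear_combination h3
        have e2 : ∃ a, (p - 1) / 2 = a + 1 := ⟨(p - 1) / 2 - 1, by have := hp.two_le; omega⟩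
        obtain ⟨a, ha⟩ := e2
        rw [e1, ha, Nat.add_sub_cancel, map_neg]
        ring
      rw [Polynomial.derivative_mul, d1, zero_mul, zero_add, Polynomial.derivative_add,
        Polynomial.derivative_mul]
      simp only [tOne_apply, tTwo_apply]
      linear_combination Polynomial.X ^ (p * (j : ℕ)) * Q j * d2
    rw [h1, ih]
    simp only [pow_succ, Module.End.mul_apply]

theorem stepanov {p : ℕ} [Fact p.Prime] (hp : 300 ≤ p) (f : Polynomial (ZMod p))
    (hd : f.natDegree ≤ 4) (h0 : f.coeff 0 ≠ 0)
    (hns : ¬ ∃ (c : ZMod p) (g : Polynomial (ZMod p)), f = Polynomial.C c * g ^ 2)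
    (S : Finset (ZMod p)) (hS : ∀ s ∈ S, (f.eval s) ^ ((p - 1) / 2) = -1) :
    10 * S.card ≤ 9 * p := by
  classical
  have hpp : p.Prime := Fact.out
  have hp2 : p ≠ 2 := by omega
  have hodd : 2 * ((p - 1) / 2) + 1 = p := by
    have := hpp.eq_two_or_odd; omega
  set D := (p - 3) / 2 with hD
  let V := Polynomial.degreeLT (ZMod p) D
  have hfr : Module.finrank (ZMod p) V = D := by
    rw [(Polynomial.degreeLTEquiv (ZMod p) D).finrank_eq]; simp
  have hff : Module.Finite (ZMod p) V := Module.Finite.equiv (Polynomial.degreeLTEquiv (ZMod p) D).symm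
  let W := (Fin 3 → V) × (Fin 3 → V)
  have hfW : Module.finrank (ZMod p) W = 6 * D := by
    rw [Module.finrank_prod, Module.finrank_pi_fintype]
    simp only [hfr, Finset.sum_const, Finset.card_univ, Fintype.card_fin, smul_eq_mul]
    ring
  let Rk : ℕ → W →ₗ[(ZMod p)] Polynomial (ZMod p) := fun k => ∑ j : Fin 3,
    (LinearMap.mulLeft (ZMod p) ((Polynomial.X : Polynomial (ZMod p)) ^ (j : ℕ))).comp
      (((tOne f ^ k).comp (V.subtype.comp ((LinearMap.proj j).comp (LinearMap.fst (ZMod p) _ _)))) -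
       ((tTwo f ^ k).comp (V.subtype.comp ((LinearMap.proj j).comp (LinearMap.snd (ZMod p) _ _)))))
  have hRk : ∀ k (w : W), Rk k w = ∑ j : Fin 3, Polynomial.X ^ (j : ℕ) *
      ((tOne f ^ k) (w.1 j : Polynomial (ZMod p)) - (tTwo f ^ k) (w.2 j : Polynomial (ZMod p))) := by
    intro k w
    simp only [Rk, LinearMap.sum_apply]
    rfl
  let L : W →ₗ[(ZMod p)] (Fin 5 × Fin (D + 20) → (ZMod p)) := LinearMap.pi fun ki =>
    (Polynomial.lcoeff (ZMod p) (ki.2 : ℕ)).comp (Rk ki.1)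
  have hker : LinearMap.ker L ≠ ⊥ := by
    apply LinearMap.ker_ne_bot_of_finrank_lt
    rw [hfW]
    simp only [Module.finrank_fintype_fun_eq_card, Fintype.card_prod, Fintype.card_fin]
    omega
  obtain ⟨w, hwL, hw0⟩ := Submodule.exists_mem_ne_zero_of_ne_bot hker
  set P : Fin 3 → Polynomial (ZMod p) := fun j => (w.1 j : Polynomial (ZMod p)) with hPdef
  set Q : Fin 3 → Polynomial (ZMod p) := fun j => (w.2 j : Polynomial (ZMod p)) with hQdef
  have hdegV : ∀ v : V, (v : Polynomial (ZMod p)).natDegree + 1 ≤ D := by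
    intro v
    have := Polynomial.mem_degreeLT.mp v.2
    by_cases hv : (v : Polynomial (ZMod p)) = 0
    · rw [hv]; simp; omega
    · rw [Polynomial.degree_eq_natDegree hv] at this
      exact_mod_cast this
  have hP : ∀ j, (P j).natDegree + 1 ≤ D := fun j => hdegV _
  have hQ : ∀ j, (Q j).natDegree + 1 ≤ D := fun j => hdegV _
  have hR0 : ∀ k < 5, Rk k w = 0 := by
    intro k hk
    have hdeg : (Rk k w).natDegree < D + 20 := by
      rw [hRk]
      refine lt_of_le_of_lt (Polynomial.natDegree_sum_le_of_forall_le _ _ (n := D + 19) ?_) (by omega)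
      intro j _
      refine Polynomial.natDegree_mul_le.trans ?_
      rw [Polynomial.natDegree_X_pow]
      have a1 := tOne_deg f hd k (P j)
      have a2 := tTwo_deg f hd k (Q j)
      have a3 := hP j
      have a4 := hQ j
      have a5 := Polynomial.natDegree_sub_le ((tOne f ^ k) (P j)) ((tTwo f ^ k) (Q j))
      have a6 : max ((tOne f ^ k) (P j)).natDegree ((tTwo f ^ k) (Q j)).natDegree ≤ D + 15 :=
        max_le (by omega) (by omega)
      have a7 := j.2
      have a8 := a5.trans a6
      change (j : ℕ) + ((tOne f ^ k) (P j) - (tTwo f ^ k) (Q j)).natDegree ≤ D + 19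
      omega
    ext i
    rw [Polynomial.coeff_zero]
    by_cases hi : i < D + 20
    · have := congrFun (LinearMap.mem_ker.mp hwL) (⟨k, hk⟩, ⟨i, hi⟩)
      simpa [L] using this
    · exact Polynomial.coeff_eq_zero_of_natDegree_lt (by omega)
  -- vanishing
  have hvan : ∀ s ∈ S, (Polynomial.X - Polynomial.C s) ^ 5 ∣ psi f P Q := by
    intro s hs
    have hfs : f.eval s ≠ 0 := by
      intro h
      have := hS s hs
      rw [h, zero_pow (by omega)] at this
      exact (neg_ne_zero.mpr one_ne_zero) this.symm
    refine theta_vanish f s hfs 5 (by omega) _ ?_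
    intro k hk
    rw [psi_theta hp2]
    have h1 := congrArg (Polynomial.eval s) (hR0 k hk)
    rw [hRk, Polynomial.eval_finset_sum, Polynomial.eval_zero] at h1
    unfold psi
    rw [Polynomial.eval_finset_sum, ← h1]
    refine Finset.sum_congr rfl fun j _ => ?_
    simp only [Polynomial.eval_mul, Polynomial.eval_add, Polynomial.eval_sub, Polynomial.eval_pow,
      Polynomial.eval_X, hS s hs, pow_mul, ZMod.pow_card]
    ring
  -- nonvanishing
  have hne : psi f P Q ≠ 0 := by
    intro hz
    apply hw0
    have hPd : ∀ j, 2 * (P j).natDegree + 4 < p := fun j => by have := hP j; omega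
    have hQd : ∀ j, 2 * (Q j).natDegree + 4 < p := fun j => by have := hQ j; omega
    have hX : (Polynomial.X : Polynomial (ZMod p)) ^ p ≠ 0 := pow_ne_zero _ Polynomial.X_ne_zero
    unfold psi at hz
    rw [Fin.sum_univ_three] at hz
    simp only [Fin.val_zero, Fin.val_one, Fin.val_two, mul_zero, pow_zero, one_mul, mul_one] at hz
    obtain ⟨p0, q0⟩ := stepanov_nonvanish hp2 f hd h0 hns (P 0) (Q 0)
      ((P 1 + f ^ ((p - 1) / 2) * Q 1) + Polynomial.X ^ p * (P 2 + f ^ ((p - 1) / 2) * Q 2))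
      (hPd 0) (hQd 0) (by rw [← hz]; ring)
    rw [p0, q0] at hz
    have hz1 : P 1 + f ^ ((p - 1) / 2) * Q 1 + Polynomial.X ^ p * (P 2 + f ^ ((p - 1) / 2) * Q 2) = 0 := by
      apply mul_left_cancel₀ hX
      rw [mul_zero, ← hz]; ring
    obtain ⟨p1, q1⟩ := stepanov_nonvanish hp2 f hd h0 hns (P 1) (Q 1) _ (hPd 1) (hQd 1) hz1
    rw [p1, q1] at hz1
    have hz2 : P 2 + f ^ ((p - 1) / 2) * Q 2 + Polynomial.X ^ p * 0 = 0 := by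
      apply mul_left_cancel₀ hX
      linear_combination hz1
    obtain ⟨p2, q2⟩ := stepanov_nonvanish hp2 f hd h0 hns (P 2) (Q 2) _ (hPd 2) (hQd 2) hz2
    refine Prod.ext (funext fun j => Subtype.ext ?_) (funext fun j => Subtype.ext ?_)
    · change P j = 0
      fin_cases j <;> assumption
    · change Q j = 0
      fin_cases j <;> assumption
  -- degree count
  have hprod : ∏ s ∈ S, (Polynomial.X - Polynomial.C s) ^ 5 ∣ psi f P Q := by
    apply Finset.prod_dvd_of_coprime
    · intro a _ b _ hab
      exact (Polynomial.isCoprime_X_sub_C_of_isUnit_sub (sub_ne_zero.mpr hab).isUnit).pow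
    · exact hvan
  have hle := Polynomial.natDegree_le_of_dvd hprod hne
  rw [Polynomial.natDegree_prod _ _ (fun s _ => pow_ne_zero _ (Polynomial.X_sub_C_ne_zero s))] at hle
  simp only [Polynomial.natDegree_pow, Polynomial.natDegree_X_sub_C, mul_one, Finset.sum_const,
    smul_eq_mul] at hle
  have hup : (psi f P Q).natDegree ≤ 2 * p + (4 * ((p - 1) / 2) + D) := by
    refine Polynomial.natDegree_sum_le_of_forall_le _ _ ?_
    intro j _
    refine Polynomial.natDegree_mul_le.trans ?_
    rw [Polynomial.natDegree_X_pow]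
    have b1 : p * (j : ℕ) ≤ 2 * p := by
      have := j.2
      nlinarith
    have b2 : (f ^ ((p - 1) / 2)).natDegree ≤ 4 * ((p - 1) / 2) := by
      refine Polynomial.natDegree_pow_le.trans ?_
      rw [mul_comm]; exact Nat.mul_le_mul_right _ hd
    have b3 := Polynomial.natDegree_mul_le (p := f ^ ((p - 1) / 2)) (q := Q j)
    have b4 := Polynomial.natDegree_add_le (P j) (f ^ ((p - 1) / 2) * Q j)
    have b5 : max (P j).natDegree (f ^ ((p - 1) / 2) * Q j).natDegree ≤ 4 * ((p - 1) / 2) + D := by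
      have := hP j
      have := hQ j
      exact max_le (by omega) (by omega)
    omega
  omega


theorem hc_mul_one {σ : Type} (A B : MvPolynomial σ ℚ) (hA : A.IsHomogeneous 1) (n : ℕ) :
    homogeneousComponent (n + 1) (A * B) = A * homogeneousComponent n B := by
  conv_lhs => rw [← sum_homogeneousComponent B]
  rw [Finset.mul_sum, map_sum]
  have h1 : ∀ i, homogeneousComponent (n + 1) (A * homogeneousComponent i B) =
      if n = i then A * homogeneousComponent i B else 0 := by
    intro i
    have : A * homogeneousComponent i B ∈ homogeneousSubmodule σ ℚ (1 + i) :=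
      hA.mul (homogeneousComponent_isHomogeneous i B)
    rw [homogeneousComponent_of_mem this]
    by_cases h : n = i
    · rw [if_pos h, if_pos (by omega)]
    · rw [if_neg h, if_neg (by omega)]
  simp only [h1]
  rw [Finset.sum_ite_eq]
  split_ifs with h
  · rfl
  · rw [homogeneousComponent_eq_zero n B (by simpa using h), mul_zero]

theorem hinv_contra {σ : Type} (P A₁ B₁ A₂ B₂ : MvPolynomial σ ℚ) (hP : P.IsHomogeneous 3)
    (hA₁ : A₁.IsHomogeneous 1) (hA₂ : A₂.totalDegree ≤ 1) (hB₂ : B₂.totalDegree ≤ 2)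
    (h : P = A₁ * B₁ + A₂ * B₂) :
    ∃ L Q : Fin 4 → MvPolynomial σ ℚ,
      (∀ i, (L i).IsHomogeneous 1) ∧ (∀ i, (Q i).IsHomogeneous 2) ∧ P = ∑ i, L i * Q i := by
  have e1 : homogeneousComponent 3 P = P := by
    rw [homogeneousComponent_of_mem (n := 3) hP, if_pos rfl]
  have e2 : A₂ = C (coeff 0 A₂) + homogeneousComponent 1 A₂ := by
    conv_lhs => rw [← sum_homogeneousComponent A₂]
    have : A₂.totalDegree = 0 ∨ A₂.totalDegree = 1 := by omega
    rcases this with h | h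
    · rw [h, Finset.sum_range_one, homogeneousComponent_zero,
        homogeneousComponent_eq_zero 1 A₂ (by omega), add_zero]
    · rw [h, Finset.sum_range_succ, Finset.sum_range_one, homogeneousComponent_zero]
  have e3 : homogeneousComponent 3 (A₂ * B₂) = homogeneousComponent 1 A₂ * homogeneousComponent 2 B₂ := by
    conv_lhs => rw [e2]
    rw [add_mul, map_add, hc_mul_one _ _ (homogeneousComponent_isHomogeneous 1 A₂) 2,
      homogeneousComponent_C_mul, homogeneousComponent_eq_zero 3 B₂ (by omega), mul_zero, zero_add]
  have e4 := congrArg (homogeneousComponent 3) h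
  rw [e1, map_add, hc_mul_one _ _ hA₁ 2, e3] at e4
  refine ⟨![A₁, homogeneousComponent 1 A₂, 0, 0],
    ![homogeneousComponent 2 B₁, homogeneousComponent 2 B₂, 0, 0], ?_, ?_, ?_⟩
  · intro i
    fin_cases i
    · exact hA₁
    · exact homogeneousComponent_isHomogeneous _ _
    · exact isHomogeneous_zero _ _ _
    · exact isHomogeneous_zero _ _ _
  · intro i
    fin_cases i
    · exact homogeneousComponent_isHomogeneous _ _
    · exact homogeneousComponent_isHomogeneous _ _
    · exact isHomogeneous_zero _ _ _
    · exact isHomogeneous_zero _ _ _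
  · rw [e4, Fin.sum_univ_four]
    simp

theorem X_dvd_sub_subst {σ R : Type} [CommRing R] [DecidableEq σ] (i : σ) (q : MvPolynomial σ R) :
    X i ∣ q - aeval (fun j => if j = i then (0 : MvPolynomial σ R) else X j) q := by
  induction q using MvPolynomial.induction_on with
  | C a => simp [algebraMap_eq]
  | add p q hp hq =>
    rw [map_add, add_sub_add_comm]
    exact dvd_add hp hq
  | mul_X p j hp =>
    rw [map_mul, aeval_X]
    split_ifs with h
    · subst h; rw [mul_zero, sub_zero]; exact Dvd.intro_left _ rfl
    · rw [← sub_mul]; exact Dvd.dvd.mul_right hp _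

theorem factor_alt {σ : Type} [DecidableEq σ] [Finite σ] (i : σ) (α : ℚ) (hα : α ≠ 0) (q R S : MvPolynomial σ ℚ) (κ : ℚ)
    (hq : q.totalDegree ≤ 2) (hR : R.totalDegree ≤ 3)
    (h : q ^ 2 - C (4 * α) * X i * R = C κ * S ^ 2) :
    (∃ q' R', q = X i * q' ∧ R = X i * R') ∨
    (∃ l d : MvPolynomial σ ℚ, l.totalDegree ≤ 1 ∧ d.totalDegree ≤ 2 ∧ q = d + C α * X i * l ∧ R = l * d) := by
  by_cases hκ : IsSquare κ
  · right
    obtain ⟨ρ, rfl⟩ := hκ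
    have h1 : C (4 * α) * X i * R = (q - C ρ * S) * (q + C ρ * S) := by
      have hc : (C (ρ * ρ) : MvPolynomial σ ℚ) = C ρ * C ρ := C_mul
      rw [hc] at h
      linear_combination -h
    have key : ∃ S' : MvPolynomial σ ℚ, X i ∣ q - S' ∧ C (4 * α) * X i * R = (q - S') * (q + S') := by
      have hp : X i ∣ (q - C ρ * S) * (q + C ρ * S) := by
        rw [← h1]; exact ⟨C (4 * α) * R, by ring⟩
      rcases (X_prime (R := ℚ) (i := i)).dvd_or_dvd hp with h' | h'
      · exact ⟨C ρ * S, h', h1⟩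
      · refine ⟨-(C ρ * S), ?_, ?_⟩
        · simpa using h'
        · rw [h1]; ring
    obtain ⟨S', ⟨l₁, hl⟩, hS⟩ := key
    have hS2 : S' ^ 2 = q ^ 2 - C (4 * α) * X i * R := by rw [hS]; ring
    have hdeg : S'.totalDegree ≤ 2 := by
      by_cases hS0 : S' = 0
      · rw [hS0]; simp
      have : (S' ^ 2).totalDegree ≤ 4 := by
        rw [hS2]
        refine (totalDegree_sub _ _).trans (max_le ?_ ?_)
        · exact (totalDegree_pow _ _).trans (by omega)
        · refine (totalDegree_mul _ _).trans ?_
          have a1 := totalDegree_mul (C (4 * α)) (X i : MvPolynomial σ ℚ)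
          rw [totalDegree_C, totalDegree_X] at a1
          omega
      rw [pow_two, totalDegree_mul_of_isDomain hS0 hS0] at this
      omega
    have hldeg : l₁.totalDegree ≤ 1 := by
      by_cases hl0 : l₁ = 0
      · rw [hl0]; simp
      have : (X i * l₁).totalDegree ≤ 2 := by
        rw [← hl]
        exact (totalDegree_sub _ _).trans (max_le hq hdeg)
      rw [totalDegree_mul_of_isDomain (X_ne_zero i) hl0, totalDegree_X] at this
      omega
    have c1 : (C (1 / (2 * α)) : MvPolynomial σ ℚ) * C (2 * α) = 1 := by
      rw [← C_mul, ← C_1]; congr 1; field_simp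
    have c2 : (C (1 / 2) : MvPolynomial σ ℚ) * C 2 = 1 := by
      rw [← C_mul, ← C_1]; congr 1; norm_num
    have c3 : (C α : MvPolynomial σ ℚ) * C (1 / (2 * α)) = C (1 / 2) := by
      rw [← C_mul]; congr 1; field_simp
    have c4 : (C 2 : MvPolynomial σ ℚ) = 2 := map_ofNat C 2
    refine ⟨C (1 / (2 * α)) * l₁, C (1 / 2) * (q + S'), ?_, ?_, ?_, ?_⟩
    · exact (totalDegree_mul _ _).trans (by rw [totalDegree_C]; omega)
    · refine (totalDegree_mul _ _).trans ?_
      have := (totalDegree_add q S').trans (max_le hq hdeg)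
      rw [totalDegree_C]; omega
    · rw [c4] at c2
      linear_combination C (1 / 2) * hl - l₁ * X i * c3 - q * c2
    · have hX : (C (4 * α) * X i : MvPolynomial σ ℚ) ≠ 0 :=
        mul_ne_zero (by rw [Ne, C_eq_zero]; simpa using hα) (X_ne_zero i)
      apply mul_left_cancel₀ hX
      rw [hS, hl]
      have c5 : (C (4 * α) : MvPolynomial σ ℚ) * C (1 / (2 * α)) * C (1 / 2) = 1 := by
        rw [← C_mul, ← C_mul, ← C_1]; congr 1; field_simp; norm_num
      linear_combination - X i * l₁ * (q + S') * c5
  · left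
    set φ : MvPolynomial σ ℚ →ₐ[ℚ] MvPolynomial σ ℚ :=
      aeval (fun j => if j = i then (0 : MvPolynomial σ ℚ) else X j) with hφ
    have hφX : φ (X i) = 0 := by simp [hφ]
    have hφC : ∀ a, φ (C a) = C a := fun a => by simp [hφ, algebraMap_eq]
    have h1 : (φ q) ^ 2 = C κ * (φ S) ^ 2 := by
      have h1 := congrArg φ h
      have e : φ (q ^ 2 - C (4 * α) * X i * R) = (φ q) ^ 2 := by
        simp only [map_sub, map_mul φ, hφX, map_pow, mul_zero, zero_mul, sub_zero]
      have e' : φ (C κ * S ^ 2) = C κ * (φ S) ^ 2 := by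
        simp only [map_mul φ, map_pow, hφC]
      rw [e, e'] at h1
      exact h1
    have hS0 : φ S = 0 := by
      by_contra hne
      obtain ⟨a, ha⟩ : ∃ a : σ → ℚ, eval a (φ S) ≠ 0 := by
        by_contra hall
        push Not at hall
        exact hne (MvPolynomial.funext (fun a => by rw [hall a, map_zero]))
      have h2 := congrArg (eval a) h1
      simp only [map_sub, map_mul, map_pow, eval_C, map_zero, mul_zero, zero_mul, sub_zero] at h2
      apply hκ
      refine ⟨eval a (φ q) / eval a (φ S), ?_⟩
      field_simp
      linarith
    have hq0 : φ q = 0 := by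
      rw [hS0] at h1
      have : (φ q) ^ 2 = 0 := by linear_combination h1
      exact pow_eq_zero_iff two_ne_zero |>.mp this
    obtain ⟨q', hq'⟩ := X_dvd_sub_subst i q
    obtain ⟨S', hS'⟩ := X_dvd_sub_subst i S
    change q - φ q = _ at hq'
    change S - φ S = _ at hS'
    rw [hq0, sub_zero] at hq'
    rw [hS0, sub_zero] at hS'
    have hαu : (C (1 / (4 * α)) : MvPolynomial σ ℚ) * C (4 * α) = 1 := by
      rw [← C_mul, ← C_1]; congr 1; field_simp
    refine ⟨q', C (1 / (4 * α)) * (q' ^ 2 - C κ * S' ^ 2), hq', ?_⟩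
    have hX : (X i : MvPolynomial σ ℚ) ≠ 0 := X_ne_zero i
    apply mul_left_cancel₀ hX
    rw [hq', hS'] at h
    linear_combination (-X i * R) * hαu - C (1 / (4 * α)) * h


/-- Evaluation of an integer polynomial in a commutative ring. -/
noncomputable def ev {σ : Type} {R : Type} [CommRing R] (y : σ → R) (P : MvPolynomial σ ℤ) : R :=
  eval₂ (Int.castRingHom R) y P

theorem sm_ge {m : ℕ} (A : Matrix (Fin m) (Fin m) ℤ) (B : Fin m → ℤ) (c : ℤ)
    (p : ℕ) [Fact p.Prime] (i : Fin m)
    (h : ∀ w : Fin m → ZMod p, ∃ t, qv A B c (Function.update w i t) = 0 ∧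
      gv A B (Function.update w i t) i ≠ 0) : p ^ (m - 1) ≤ sm A B c p := by
  classical
  choose t ht using h
  let ex : ({j : Fin m // j ≠ i} → ZMod p) → (Fin m → ZMod p) := fun w j =>
    if hj : j ≠ i then w ⟨j, hj⟩ else 0
  let f : ({j : Fin m // j ≠ i} → ZMod p) →
      {x : Fin m → ZMod p // qv A B c x = 0 ∧ ∃ i, gv A B x i ≠ 0} :=
    fun w => ⟨Function.update (ex w) i (t (ex w)), (ht _).1, i, (ht _).2⟩
  have hf : Function.Injective f := by
    intro w w' hw
    have := congrArg Subtype.val hw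
    funext j
    have h1 := congrFun this j.1
    simpa [f, Function.update_of_ne j.2, ex, j.2] using h1
  have h1 := Nat.card_le_card_of_injective f hf
  have h2 : Nat.card ({j : Fin m // j ≠ i} → ZMod p) = p ^ (m - 1) := by
    rw [Nat.card_eq_fintype_card]
    simp [ZMod.card]
  rw [h2] at h1
  exact h1

theorem sz {N : ℕ} (P : MvPolynomial (Fin N) ℤ) (hP : P ≠ 0) :
    ∃ d p0 : ℕ, ∀ (p : ℕ) [Fact p.Prime], p0 ≤ p →
      (Nat.card {y : Fin N → ZMod p // ev y P = 0}) * p ≤ d * p ^ N := by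
  classical
  obtain ⟨s, hs⟩ := MvPolynomial.ne_zero_iff.mp hP
  refine ⟨P.totalDegree, (coeff s P).natAbs + 1, fun p _ hp => ?_⟩
  have hp0 : 0 < p := (Fact.out : p.Prime).pos
  set P' := MvPolynomial.map (Int.castRingHom (ZMod p)) P with hP'
  have hne : P' ≠ 0 := by
    intro h0
    have : coeff s P' = 0 := by rw [h0]; simp
    rw [hP', coeff_map] at this
    simp only [eq_intCast, ZMod.intCast_zmod_eq_zero_iff_dvd] at this
    have := Int.natAbs_dvd_natAbs.mpr this
    have := Nat.le_of_dvd (Int.natAbs_pos.mpr hs) this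
    simp at this
    omega
  have h1 := schwartz_zippel_totalDegree hne (Finset.univ : Finset (ZMod p))
  have h2 : P'.totalDegree ≤ P.totalDegree := by
    apply Finset.sup_mono
    exact support_map_subset _ _
  have h3 : Nat.card {y : Fin N → ZMod p // ev y P = 0} =
      (Finset.filter (fun f => eval f P' = 0) (Fintype.piFinset fun _ : Fin N => (Finset.univ : Finset (ZMod p)))).card := by
    rw [Nat.card_eq_fintype_card, Fintype.card_subtype]
    congr 1
    ext y
    simp only [hP', eval_map, ev, Finset.mem_filter, Fintype.mem_piFinset, Finset.mem_univ, true_and, implies_true]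
    exact (Finset.mem_filter.trans (and_iff_right (Finset.mem_univ _)))
  rw [← h3] at h1
  set M := Nat.card {y : Fin N → ZMod p // ev y P = 0}
  simp only [Finset.card_univ, ZMod.card] at h1
  rw [div_le_div_iff₀ (by positivity) (by positivity)] at h1
  have h4 : M * p ≤ P'.totalDegree * p ^ N := by exact_mod_cast h1
  exact h4.trans (Nat.mul_le_mul_right _ h2)

theorem coeff_line {R σ : Type} [CommRing R] [Fintype σ] (a b : σ → R) (d : σ → ℕ) (s : Finset σ) :
    (∏ i ∈ s, (Polynomial.C (a i) + Polynomial.C (b i) * Polynomial.X) ^ d i).natDegree ≤ ∑ i ∈ s, d i ∧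
    (∏ i ∈ s, (Polynomial.C (a i) + Polynomial.C (b i) * Polynomial.X) ^ d i).coeff (∑ i ∈ s, d i)
      = ∏ i ∈ s, b i ^ d i := by
  classical
  have hl : ∀ i, (Polynomial.C (a i) + Polynomial.C (b i) * Polynomial.X).natDegree ≤ 1 := by
    intro i
    refine (Polynomial.natDegree_add_le _ _).trans (max_le ?_ ?_)
    · simp
    · exact (Polynomial.natDegree_C_mul_le _ _).trans Polynomial.natDegree_X_le
  have hp : ∀ i, ((Polynomial.C (a i) + Polynomial.C (b i) * Polynomial.X) ^ d i).natDegree ≤ d i := by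
    intro i
    exact Polynomial.natDegree_pow_le_of_le (d i) (hl i) |>.trans (by omega)
  induction s using Finset.induction_on with
  | empty => simp
  | insert i s hi ih =>
    rw [Finset.prod_insert hi, Finset.sum_insert hi, Finset.prod_insert hi]
    constructor
    · exact Polynomial.natDegree_mul_le_of_le (hp i) ih.1
    · rw [Polynomial.coeff_mul_add_eq_of_natDegree_le (hp i) ih.1, ih.2]
      congr 1
      have := Polynomial.coeff_pow_of_natDegree_le (m := d i) (hl i)
      rw [mul_one] at this
      rw [this]; simp

theorem coeff_line' {R σ : Type} [CommRing R] [Fintype σ] (a b : σ → R) (P : MvPolynomial σ ℤ) (n : ℕ)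
    (hP : P.IsHomogeneous n) :
    (ev (fun i => Polynomial.C (a i) + Polynomial.C (b i) * Polynomial.X) P).natDegree ≤ n ∧
    (ev (fun i => Polynomial.C (a i) + Polynomial.C (b i) * Polynomial.X) P).coeff n = ev b P := by
  classical
  unfold ev
  rw [eval₂_eq', eval₂_eq']
  have hd : ∀ d ∈ P.support, ∑ i, d i = n := by
    intro d hd
    have := hP (mem_support_iff.mp hd)
    rw [← this, Finsupp.weight_apply, Finsupp.sum_fintype _ _ (by simp)]
    simp
  constructor
  · apply Polynomial.natDegree_sum_le_of_forall_le
    intro d hd'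
    have := (coeff_line a b d Finset.univ).1
    rw [hd d hd'] at this
    refine Polynomial.natDegree_mul_le.trans ?_
    simpa using this
  · rw [Polynomial.finset_sum_coeff]
    refine Finset.sum_congr rfl fun d hd' => ?_
    have := (coeff_line a b d Finset.univ).2
    rw [hd d hd'] at this
    rw [← this]
    have e : (Int.castRingHom (Polynomial R)) (coeff d P) = Polynomial.C ((coeff d P : ℤ) : R) := by simp
    rw [e, Polynomial.coeff_C_mul]
    simp

theorem ev_map {σ R S : Type} [CommRing R] [CommRing S] (f : R →+* S) (y : σ → R) (P : MvPolynomial σ ℤ) :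
    f (ev y P) = ev (fun i => f (y i)) P := by
  unfold ev
  rw [hom_eval₂]
  congr 1
  exact RingHom.ext_int _ _


theorem ev_hom {σ R : Type} [CommRing R] (y : σ → R) (P : MvPolynomial σ ℤ) :
    ev y P = eval₂Hom (Int.castRingHom R) y P := rfl

theorem not_sq_of {p : ℕ} [Fact p.Prime] (f : Polynomial (ZMod p)) (hd : f.natDegree ≤ 4) (h0 : f.coeff 0 ≠ 0)
    (hE : 64 * f.coeff 0 ^ 3 * f.coeff 4 - (4 * f.coeff 0 * f.coeff 2 - f.coeff 1 ^ 2) ^ 2 ≠ 0) :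
    ¬ ∃ c g, f = Polynomial.C c * g ^ 2 := by
  rintro ⟨c, g, rfl⟩
  have hc : c ≠ 0 := by
    rintro rfl
    simp at h0
  have hg : g.natDegree ≤ 2 := by
    rw [Polynomial.natDegree_C_mul hc, Polynomial.natDegree_pow] at hd
    omega
  obtain ⟨a, b, e, hg'⟩ : ∃ a b e, g = Polynomial.C a * Polynomial.X ^ 2 + Polynomial.C b * Polynomial.X + Polynomial.C e :=
    ⟨_, _, _, Polynomial.eq_quadratic_of_degree_le_two (Polynomial.natDegree_le_iff_degree_le.mp hg)⟩
  have hx : Polynomial.C c * g ^ 2 = Polynomial.C (c * a ^ 2) * Polynomial.X ^ 4 +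
      Polynomial.C (2 * c * a * b) * Polynomial.X ^ 3 + Polynomial.C (c * (b ^ 2 + 2 * a * e)) * Polynomial.X ^ 2
      + Polynomial.C (2 * c * b * e) * Polynomial.X ^ 1 + Polynomial.C (c * e ^ 2) * Polynomial.X ^ 0 := by
    rw [hg']
    simp only [map_mul, map_pow, map_add, map_ofNat]
    ring
  apply hE
  rw [hx]
  simp only [Polynomial.coeff_add, Polynomial.coeff_C_mul, Polynomial.coeff_X_pow]
  norm_num
  ring

theorem nonres_count {N : ℕ} (Δ : MvPolynomial (Fin N) ℤ) (hΔ : Δ.IsHomogeneous 4)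
    (hns : ¬ ∃ (κ : ℚ) (S : MvPolynomial (Fin N) ℚ), MvPolynomial.map (Int.castRingHom ℚ) Δ = C κ * S ^ 2) :
    ∃ p0 : ℕ, ∀ (p : ℕ) [Fact p.Prime], p0 ≤ p →
      100 * Nat.card {y : Fin N → ZMod p // (ev y Δ) ^ ((p - 1) / 2) = -1} ≤ 92 * p ^ N := by
  classical
  have hΔ0 : Δ ≠ 0 := by
    rintro rfl
    exact hns ⟨0, 0, by simp⟩
  obtain ⟨v, hv⟩ : ∃ v : Fin N → ℤ, ev v Δ ≠ 0 := by
    by_contra hall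
    push Not at hall
    apply hΔ0
    apply MvPolynomial.funext
    intro v
    have := hall v
    unfold ev at this
    rw [map_zero, eval, ← this]
    congr 1
  set δ := ev v Δ with hδ
  set D : Polynomial (MvPolynomial (Fin N) ℤ) :=
    ev (fun i => Polynomial.C (C (v i)) + Polynomial.C (X i) * Polynomial.X) Δ with hD
  have hD4 := (coeff_line' (fun i => C (v i)) (fun i : Fin N => (X i : MvPolynomial (Fin N) ℤ)) Δ 4 hΔ).2
  rw [← hD] at hD4
  have hevX : ev (fun i : Fin N => (X i : MvPolynomial (Fin N) ℤ)) Δ = Δ := by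
    unfold ev
    have : (Int.castRingHom (MvPolynomial (Fin N) ℤ)) = C := RingHom.ext_int _ _
    rw [this]
    exact eval₂_eta Δ
  rw [hevX] at hD4
  have key : ∀ (p : ℕ) (u : Fin N → ZMod p) (j : ℕ),
      (ev (fun i => Polynomial.C ((v i : ZMod p)) + Polynomial.C (u i) * Polynomial.X) Δ).coeff j = ev u (D.coeff j) := by
    intro p u j
    have h1 := ev_map (Polynomial.mapRingHom (eval₂Hom (Int.castRingHom (ZMod p)) u))
      (fun i => Polynomial.C (C (v i)) + Polynomial.C (X i) * Polynomial.X) Δ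
    rw [← hD] at h1
    have h2 := congrArg (fun f => Polynomial.coeff f j) h1
    simp only [Polynomial.coe_mapRingHom, Polynomial.coeff_map] at h2
    simp only [Polynomial.map_add, Polynomial.map_mul, Polynomial.map_C, Polynomial.map_X, coe_eval₂Hom,
      eval₂_C, eval₂_X, Int.coe_castRingHom] at h2
    rw [← h2]
    rfl
  set E : MvPolynomial (Fin N) ℤ := 64 * C δ ^ 3 * Δ - (4 * C δ * D.coeff 2 - D.coeff 1 ^ 2) ^ 2 with hE
  have hE0 : E ≠ 0 := by
    intro h0
    apply hns
    refine ⟨1 / (64 * (δ : ℚ) ^ 3), MvPolynomial.map (Int.castRingHom ℚ) (4 * C δ * D.coeff 2 - D.coeff 1 ^ 2), ?_⟩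
    have h1 := congrArg (MvPolynomial.map (Int.castRingHom ℚ)) h0
    rw [hE, map_sub, map_mul, map_zero, map_pow _ _ 2, sub_eq_zero] at h1
    rw [← h1]
    have h2 : MvPolynomial.map (Int.castRingHom ℚ) (64 * C δ ^ 3 : MvPolynomial (Fin N) ℤ) = C (64 * (δ : ℚ) ^ 3) := by
      simp [map_ofNat]
    rw [h2, ← mul_assoc, ← C_mul]
    have hδ' : (δ : ℚ) ≠ 0 := by exact_mod_cast hv
    rw [one_div, inv_mul_cancel₀ (by positivity), C_1, one_mul]
  obtain ⟨d, p1, hsz⟩ := sz E hE0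
  refine ⟨p1 + δ.natAbs + 300 + 50 * d + 46, fun p _ hp => ?_⟩
  have hpp : p.Prime := Fact.out
  have hδp : (δ : ZMod p) ≠ 0 := by
    intro h0
    rw [ZMod.intCast_zmod_eq_zero_iff_dvd] at h0
    have := Int.natAbs_dvd_natAbs.mpr h0
    have := Nat.le_of_dvd (Int.natAbs_pos.mpr hv) this
    simp at this
    omega
  have hZ := hsz p (by omega)
  set f : (Fin N → ZMod p) → Polynomial (ZMod p) := fun u =>
    ev (fun i => Polynomial.C ((v i : ZMod p)) + Polynomial.C (u i) * Polynomial.X) Δ with hf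
  have hf0 : ∀ u, (f u).coeff 0 = δ := by
    intro u
    rw [Polynomial.coeff_zero_eq_eval_zero]
    have h1 := ev_map (Polynomial.evalRingHom (0 : ZMod p))
      (fun i => Polynomial.C ((v i : ZMod p)) + Polynomial.C (u i) * Polynomial.X) Δ
    have h2 := ev_map (Int.castRingHom (ZMod p)) v Δ
    simp only [Polynomial.coe_evalRingHom, Polynomial.eval_add, Polynomial.eval_mul, Polynomial.eval_C, Polynomial.eval_X, mul_zero, add_zero] at h1
    simp only [Int.coe_castRingHom] at h2
    rw [hδ, h2, ← h1]
  have hfe : ∀ u s, (f u).eval s = ev (fun i => (v i : ZMod p) + u i * s) Δ := by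
    intro u s
    have h1 := ev_map (Polynomial.evalRingHom s)
      (fun i => Polynomial.C ((v i : ZMod p)) + Polynomial.C (u i) * Polynomial.X) Δ
    simp only [Polynomial.coe_evalRingHom, Polynomial.eval_add, Polynomial.eval_mul, Polynomial.eval_C, Polynomial.eval_X] at h1
    rw [← h1]
  have hSu : ∀ u, 10 * (Finset.univ.filter (fun s => ((f u).eval s) ^ ((p - 1) / 2) = -1)).card ≤
      9 * p + if ev u E = 0 then 10 * p else 0 := by
    intro u
    split_ifs with hu
    · have := Finset.card_le_univ (Finset.univ.filter (fun s => ((f u).eval s) ^ ((p - 1) / 2) = -1))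
      rw [ZMod.card] at this
      omega
    · rw [add_zero]
      refine stepanov (by omega) (f u) (coeff_line' _ _ Δ 4 hΔ).1 (by rw [hf0]; exact hδp) ?_ _ ?_
      · apply not_sq_of _ (coeff_line' _ _ Δ 4 hΔ).1 (by rw [hf0]; exact hδp)
        rw [hf0]
        change 64 * (δ : ZMod p) ^ 3 * (f u).coeff 4 - (4 * (δ : ZMod p) * (f u).coeff 2 - (f u).coeff 1 ^ 2) ^ 2 ≠ 0
        have e1 : ∀ j, (f u).coeff j = ev u (D.coeff j) := key p u
        rw [e1, e1, e1, hD4]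
        intro h0
        apply hu
        rw [← h0, hE]
        simp only [ev_hom, map_sub, map_mul, map_pow, map_ofNat, eval₂Hom_C, Int.coe_castRingHom]
      · intro s hs
        exact (Finset.mem_filter.mp hs).2
  set B := (Finset.univ.filter (fun y : Fin N → ZMod p => (ev y Δ) ^ ((p - 1) / 2) = -1)).card with hB
  have hBc : Nat.card {y : Fin N → ZMod p // (ev y Δ) ^ ((p - 1) / 2) = -1} = B := by
    rw [Nat.card_eq_fintype_card, Fintype.card_subtype]
  rw [hBc]
  have hsum : (p - 1) * B ≤ ∑ u, (Finset.univ.filter (fun s => ((f u).eval s) ^ ((p - 1) / 2) = -1)).card := by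
    have h1 : ∑ u, (Finset.univ.filter (fun s => ((f u).eval s) ^ ((p - 1) / 2) = -1)).card =
        ∑ s, (Finset.univ.filter (fun u => ((f u).eval s) ^ ((p - 1) / 2) = -1)).card := by
      simp only [Finset.card_filter]
      exact Finset.sum_comm
    rw [h1]
    have h2 : ∀ s : ZMod p, s ≠ 0 → (Finset.univ.filter (fun u => ((f u).eval s) ^ ((p - 1) / 2) = -1)).card = B := by
      intro s hs
      rw [hB]
      simp only [Finset.card_filter, hfe]
      have hinj : Function.Injective (fun (u : Fin N → ZMod p) (i : Fin N) => (v i : ZMod p) + u i * s) := by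
        intro u u' huu
        funext i
        have := congrFun huu i
        simp only [add_right_inj] at this
        exact mul_right_cancel₀ hs this
      exact (Finite.injective_iff_bijective.mp hinj).sum_comp
        (fun y => if (ev y Δ) ^ ((p - 1) / 2) = -1 then 1 else 0)
    calc (p - 1) * B = ∑ s ∈ Finset.univ.erase (0 : ZMod p), B := by
          rw [Finset.sum_const, Finset.card_erase_of_mem (Finset.mem_univ _), Finset.card_univ, ZMod.card, smul_eq_mul]
      _ = ∑ s ∈ Finset.univ.erase (0 : ZMod p), (Finset.univ.filter (fun u => ((f u).eval s) ^ ((p - 1) / 2) = -1)).card :=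
          Finset.sum_congr rfl fun s hs => (h2 s (Finset.ne_of_mem_erase hs)).symm
      _ ≤ _ := Finset.sum_le_sum_of_subset (Finset.subset_univ _)
  have hsum2 : 10 * ((p - 1) * B) ≤ 9 * p * p ^ N + 10 * (d * p ^ N) := by
    have h1 : 10 * ∑ u, (Finset.univ.filter (fun s => ((f u).eval s) ^ ((p - 1) / 2) = -1)).card ≤
        ∑ u : Fin N → ZMod p, (9 * p + if ev u E = 0 then 10 * p else 0) := by
      rw [Finset.mul_sum]
      exact Finset.sum_le_sum fun u _ => hSu u
    have h2 : ∑ u : Fin N → ZMod p, (9 * p + if ev u E = 0 then 10 * p else 0) =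
        9 * p * p ^ N + 10 * (Nat.card {y : Fin N → ZMod p // ev y E = 0} * p) := by
      rw [Finset.sum_add_distrib, Finset.sum_const, Finset.card_univ, ← Finset.sum_filter, Finset.sum_const,
        Nat.card_eq_fintype_card, Fintype.card_subtype]
      simp [ZMod.card]
      ring
    have : 10 * (Nat.card {y : Fin N → ZMod p // ev y E = 0} * p) ≤ 10 * (d * p ^ N) := by omega
    omega
  obtain ⟨P, rfl⟩ : ∃ P, p = P + 1 := ⟨p - 1, by omega⟩
  rw [Nat.add_sub_cancel] at hsum2
  have hP : 50 * d + 46 ≤ P := by omega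
  have hPpos : 0 < P := by omega
  apply Nat.le_of_mul_le_mul_left _ hPpos
  set X := (P + 1) ^ N
  nlinarith [Nat.zero_le X, Nat.mul_le_mul_right X hP]


/-- `y` is a good residue class at `p`. -/
def goodAt {m k : ℕ} (α : ℤ) (o : Fin m) (q0 : Fin m → MvPolynomial (Fin (k + 1)) ℤ)
    (R0 : MvPolynomial (Fin (k + 1)) ℤ) (p : ℕ) (y : Fin (k + 1) → ZMod p) : Prop :=
  ∀ (A : Matrix (Fin m) (Fin m) ℤ) (B : Fin m → ℤ) (c : ℤ),
    (∀ i j, (A i j : ZMod p) = if i = o ∧ j = o then (α : ZMod p) * y 0 else 0) →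
    (∀ i, (B i : ZMod p) = ev y (q0 i)) → ((c : ZMod p) = ev y R0) → p ^ (m - 1) ≤ sm A B c p

theorem qv_special {m : ℕ} {p : ℕ} (A : Matrix (Fin m) (Fin m) ℤ) (B : Fin m → ℤ) (c : ℤ) (o : Fin m)
    (a : ZMod p) (hA : ∀ i j, (A i j : ZMod p) = if i = o ∧ j = o then a else 0) (x : Fin m → ZMod p) :
    qv A B c x = a * x o * x o + ∑ i, (B i : ZMod p) * x i + c := by
  unfold qv
  congr 2
  rw [Finset.sum_eq_single o, Finset.sum_eq_single o]
  · rw [hA]; simp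
  · intro j _ hj; rw [hA]; simp [hj]
  · simp
  · intro i _ hi
    apply Finset.sum_eq_zero
    intro j _; rw [hA]; simp [hi]
  · simp

theorem gv_special {m : ℕ} {p : ℕ} (A : Matrix (Fin m) (Fin m) ℤ) (B : Fin m → ℤ) (o : Fin m)
    (a : ZMod p) (hA : ∀ i j, (A i j : ZMod p) = if i = o ∧ j = o then a else 0) (x : Fin m → ZMod p) (i : Fin m) :
    gv A B x i = (if i = o then 2 * a * x o else 0) + (B i : ZMod p) := by
  unfold gv lv
  congr 1
  push_cast
  simp only [hA]
  split_ifs with h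
  · subst h
    rw [Finset.sum_eq_single i]
    · simp; ring
    · intro j _ hj; simp [hj]
    · simp
  · apply Finset.sum_eq_zero
    intro j _; simp [h]

theorem goodAt_A {m k : ℕ} (α : ℤ) (o : Fin m) (q0 : Fin m → MvPolynomial (Fin (k + 1)) ℤ)
    (R0 : MvPolynomial (Fin (k + 1)) ℤ) (p : ℕ) [Fact p.Prime] (y : Fin (k + 1) → ZMod p) (i : Fin m) (hi : i ≠ o)
    (h : ev y (q0 i) ≠ 0) : goodAt α o q0 R0 p y := by
  classical
  intro A B c hA hB hc
  apply sm_ge A B c p i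
  intro w
  have hBi : (B i : ZMod p) ≠ 0 := by rw [hB]; exact h
  set S := ∑ j ∈ Finset.univ.erase i, (B j : ZMod p) * w j
  refine ⟨-(α * y 0 * w o * w o + S + c) / B i, ?_, ?_⟩
  · rw [qv_special A B c o _ hA, Function.update_of_ne hi.symm, ← Finset.add_sum_erase _ _ (Finset.mem_univ i),
      Function.update_self]
    have : ∑ j ∈ Finset.univ.erase i, (B j : ZMod p) *
        Function.update w i (-(α * y 0 * w o * w o + S + c) / B i) j = S := by
      refine Finset.sum_congr rfl fun j hj => ?_
      rw [Function.update_of_ne (Finset.ne_of_mem_erase hj)]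
    rw [this]
    field_simp
    ring
  · rw [gv_special A B o _ hA, if_neg hi, zero_add]
    exact hBi

theorem goodAt_B {m k : ℕ} (α : ℤ) (o : Fin m) (q0 : Fin m → MvPolynomial (Fin (k + 1)) ℤ)
    (R0 : MvPolynomial (Fin (k + 1)) ℤ) (p : ℕ) [Fact p.Prime] (hp2 : (2 : ZMod p) ≠ 0) (hα : (α : ZMod p) ≠ 0)
    (y : Fin (k + 1) → ZMod p) (hq : ∀ i, i ≠ o → q0 i = 0) (hy : y 0 ≠ 0) (s : ZMod p) (hs : s ≠ 0)
    (h : ev y (q0 o) ^ 2 - 4 * α * y 0 * ev y R0 = s * s) : goodAt α o q0 R0 p y := by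
  classical
  intro A B c hA hB hc
  apply sm_ge A B c p o
  intro w
  have ha : (2 * (α * y 0) : ZMod p) ≠ 0 := mul_ne_zero hp2 (mul_ne_zero hα hy)
  set t := (s - B o) / (2 * (α * y 0)) with ht
  have ht' : 2 * (α * y 0) * t = s - B o := by rw [ht]; field_simp
  refine ⟨t, ?_, ?_⟩
  · rw [qv_special A B c o _ hA, Finset.sum_eq_single o]
    · rw [Function.update_self, hc]
      rw [hB o] at ht' ⊢
      have h4 : (4 * (α * y 0) : ZMod p) ≠ 0 := by
        have : (4 * (α * y 0) : ZMod p) = 2 * (2 * (α * y 0)) := by ring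
        rw [this]; exact mul_ne_zero hp2 ha
      apply (mul_eq_zero_iff_left h4).mp
      linear_combination (2 * (α * y 0) * t + s + ev y (q0 o)) * ht' - h
    · intro j _ hj
      rw [hB, hq j hj]; simp [ev]
    · simp
  · rw [gv_special A B o _ hA, if_pos rfl, Function.update_self, ht']
    simpa using hs

theorem card_compl_ge {ι : Type} [Fintype ι] (P : ι → Prop) :
    Fintype.card ι ≤ Nat.card {x // P x} + Nat.card {x // ¬ P x} := by
  classical
  rw [Nat.card_eq_fintype_card, Nat.card_eq_fintype_card, Fintype.card_subtype_compl]
  omega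

theorem card_or_le {ι : Type} [Fintype ι] (P Q R : ι → Prop) (h : ∀ x, P x → Q x ∨ R x) :
    Nat.card {x // P x} ≤ Nat.card {x // Q x} + Nat.card {x // R x} := by
  classical
  rw [Nat.card_eq_fintype_card, Nat.card_eq_fintype_card, Nat.card_eq_fintype_card, Fintype.card_subtype,
    Fintype.card_subtype, Fintype.card_subtype]
  refine (Finset.card_le_card ?_).trans (Finset.card_union_le _ _)
  intro x hx
  simp only [Finset.mem_filter, Finset.mem_univ, true_and, Finset.mem_union] at hx ⊢
  exact h x hx

theorem good_count {m k : ℕ} (α : ℤ) (hα : α ≠ 0) (o : Fin m) (q0 : Fin m → MvPolynomial (Fin (k + 1)) ℤ)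
    (R0 : MvPolynomial (Fin (k + 1)) ℤ) (hq0 : ∀ i, (q0 i).IsHomogeneous 2) (hR0 : R0.IsHomogeneous 3)
    (H : (∃ i, i ≠ o ∧ q0 i ≠ 0) ∨ ((∀ i, i ≠ o → q0 i = 0) ∧
      ¬ ∃ (κ : ℚ) (S : MvPolynomial (Fin (k + 1)) ℚ),
        MvPolynomial.map (Int.castRingHom ℚ) (q0 o ^ 2 - C (4 * α) * X 0 * R0) = C κ * S ^ 2)) :
    ∃ p0 : ℕ, ∀ (p : ℕ) [Fact p.Prime], p0 ≤ p →
      p ^ (k + 1) ≤ 20 * Nat.card {y : Fin (k + 1) → ZMod p // goodAt α o q0 R0 p y} := by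
  classical
  rcases H with ⟨i, hi, hqi⟩ | ⟨hq, hns⟩
  · obtain ⟨d, p0, h⟩ := sz (q0 i) hqi
    refine ⟨p0 + 2 * d, fun p _ hp => ?_⟩
    have h1 := h p (by omega)
    have h2 := card_compl_ge (fun y : Fin (k + 1) → ZMod p => ev y (q0 i) = 0)
    have h3 : Nat.card {y : Fin (k + 1) → ZMod p // ¬ ev y (q0 i) = 0} ≤
        Nat.card {y : Fin (k + 1) → ZMod p // goodAt α o q0 R0 p y} := by
      apply Nat.card_le_card_of_injective (fun y => ⟨y.1, goodAt_A α o q0 R0 p y.1 i hi y.2⟩)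
      intro a b hab
      simp only [Subtype.mk.injEq] at hab
      exact Subtype.ext hab
    rw [Fintype.card_fun, ZMod.card, Fintype.card_fin] at h2
    set Z := Nat.card {y : Fin (k + 1) → ZMod p // ev y (q0 i) = 0}
    have h4 : 2 * Z ≤ p ^ (k + 1) := by
      have hp0 : 0 < p := (Fact.out : p.Prime).pos
      apply Nat.le_of_mul_le_mul_left _ hp0
      calc p * (2 * Z) = 2 * (Z * p) := by ring
        _ ≤ 2 * (d * p ^ (k + 1)) := by omega
        _ = (2 * d) * p ^ (k + 1) := by ring
        _ ≤ p * p ^ (k + 1) := Nat.mul_le_mul_right _ (by omega)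
    omega
  · set Δ := q0 o ^ 2 - C (4 * α) * X 0 * R0 with hΔ
    have hhom : Δ.IsHomogeneous 4 := by
      apply IsHomogeneous.sub
      · exact (hq0 o).pow 2
      · have := ((isHomogeneous_C (Fin (k + 1)) (4 * α)).mul (isHomogeneous_X ℤ (0 : Fin (k + 1)))).mul hR0
        exact this
    have hΔ0 : Δ ≠ 0 := by
      intro h0
      exact hns ⟨0, 0, by rw [h0]; simp⟩
    obtain ⟨p1, h1⟩ := nonres_count Δ hhom hns
    obtain ⟨d, p2, h2⟩ := sz (X 0 * Δ) (mul_ne_zero (X_ne_zero _) hΔ0)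
    refine ⟨p1 + p2 + 100 * d + α.natAbs + 3, fun p _ hp => ?_⟩
    have h1 := h1 p (by omega)
    have h2 := h2 p (by omega)
    have hp2 : (2 : ZMod p) ≠ 0 := by
      intro h0
      have : ((2 : ℕ) : ZMod p) = 0 := by exact_mod_cast h0
      rw [ZMod.natCast_eq_zero_iff] at this
      have := Nat.le_of_dvd (by norm_num) this
      omega
    have hαp : (α : ZMod p) ≠ 0 := by
      intro h0
      rw [ZMod.intCast_zmod_eq_zero_iff_dvd] at h0
      have := Int.natAbs_dvd_natAbs.mpr h0
      have := Nat.le_of_dvd (Int.natAbs_pos.mpr hα) this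
      simp at this
      omega
    have h3 := card_compl_ge (fun y : Fin (k + 1) → ZMod p => goodAt α o q0 R0 p y)
    have h4 := card_or_le (fun y : Fin (k + 1) → ZMod p => ¬ goodAt α o q0 R0 p y)
      (fun y => (ev y Δ) ^ ((p - 1) / 2) = -1) (fun y => ev y (X 0 * Δ) = 0) (by
        intro y hy
        by_contra hcon
        push Not at hcon
        obtain ⟨c1, c2⟩ := hcon
        apply hy
        have e1 : ev y (X 0 * Δ) = y 0 * ev y Δ := by simp [ev]
        have e2 : ev y Δ = ev y (q0 o) ^ 2 - 4 * α * y 0 * ev y R0 := by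
          rw [hΔ]
          simp only [ev_hom, map_sub, map_mul, map_pow, map_ofNat, eval₂Hom_C, eval₂Hom_X', Int.coe_castRingHom]
        rw [e1] at c2
        have hy0 := left_ne_zero_of_mul c2
        have hΔy := right_ne_zero_of_mul c2
        have hsq : IsSquare (ev y Δ) := by
          have hodd : p % 2 = 1 := Nat.odd_iff.mp ((Fact.out : p.Prime).odd_of_ne_two (by omega))
          have hpd : (p - 1) / 2 = p / 2 := by omega
          rw [hpd] at c1
          exact (ZMod.euler_criterion p hΔy).mpr ((ZMod.pow_div_two_eq_neg_one_or_one p hΔy).resolve_right c1)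
        obtain ⟨s, hs⟩ := hsq
        refine goodAt_B α o q0 R0 p hp2 hαp y hq hy0 s ?_ (by rw [← e2, hs])
        rintro rfl
        apply hΔy
        rw [hs, zero_mul])
    rw [Fintype.card_fun, ZMod.card, Fintype.card_fin] at h3
    set Z := Nat.card {y : Fin (k + 1) → ZMod p // ev y (X 0 * Δ) = 0}
    have h5 : 100 * Z ≤ p ^ (k + 1) := by
      have hp0 : 0 < p := (Fact.out : p.Prime).pos
      apply Nat.le_of_mul_le_mul_left _ hp0
      calc p * (100 * Z) = 100 * (Z * p) := by ring
        _ ≤ 100 * (d * p ^ (k + 1)) := by omega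
        _ = (100 * d) * p ^ (k + 1) := by ring
        _ ≤ p * p ^ (k + 1) := Nat.mul_le_mul_right _ (by omega)
    omega


theorem hinv_contra' {σ : Type} (P A₁ B₁ A₂ B₂ : MvPolynomial σ ℚ) (hP : P.IsHomogeneous 3)
    (hA₁ : A₁.IsHomogeneous 1) (hA₂ : A₂.IsHomogeneous 1) 
    (h : P = A₁ * B₁ + A₂ * B₂) :
    ∃ L Q : Fin 4 → MvPolynomial σ ℚ,
      (∀ i, (L i).IsHomogeneous 1) ∧ (∀ i, (Q i).IsHomogeneous 2) ∧ P = ∑ i, L i * Q i := by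
  have e1 : homogeneousComponent 3 P = P := by
    rw [homogeneousComponent_of_mem (n := 3) hP, if_pos rfl]
  have e4 := congrArg (homogeneousComponent 3) h
  rw [e1, map_add, hc_mul_one _ _ hA₁ 2, hc_mul_one _ _ hA₂ 2] at e4
  apply hinv_contra P A₁ (homogeneousComponent 2 B₁) A₂ (homogeneousComponent 2 B₂) hP hA₁ hA₂.totalDegree_le
    (homogeneousComponent_isHomogeneous _ _).totalDegree_le e4

/-- restriction to `y₀ = 0` -/
noncomputable def res0 {k : ℕ} (P : MvPolynomial (Fin (k + 2)) ℤ) : MvPolynomial (Fin (k + 1)) ℤ :=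
  ev (Fin.cons 0 (fun i : Fin (k + 1) => (X i : MvPolynomial (Fin (k + 1)) ℤ))) P

theorem ev_res0 {k : ℕ} {R : Type} [CommRing R] (P : MvPolynomial (Fin (k + 2)) ℤ) (y : Fin (k + 1) → R) :
    ev y (res0 P) = ev (Fin.cons 0 y : Fin (k + 2) → R) P := by
  unfold res0
  rw [ev_hom y, ev_map]
  congr 1
  funext i
  refine Fin.cases ?_ (fun j => ?_) i
  · simp
  · simp

theorem res0_homog {k n : ℕ} (P : MvPolynomial (Fin (k + 2)) ℤ) (hP : P.IsHomogeneous n) :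
    (res0 P).IsHomogeneous n := by
  unfold res0 ev
  rw [eval₂_eq']
  apply IsHomogeneous.sum
  intro d hd
  have hdn : ∑ i, d i = n := by
    have := hP (mem_support_iff.mp hd)
    rw [← this, Finsupp.weight_apply, Finsupp.sum_fintype _ _ (by simp)]
    simp
  have e : (Int.castRingHom (MvPolynomial (Fin (k + 1)) ℤ)) (coeff d P) = C (coeff d P) := by simp
  rw [e, ← zero_add n]
  apply (isHomogeneous_C _ _).mul
  rw [← hdn]
  apply IsHomogeneous.prod
  intro i _
  have h1 : ((Fin.cons 0 (fun i : Fin (k + 1) => (X i : MvPolynomial (Fin (k + 1)) ℤ)) :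
      Fin (k + 2) → MvPolynomial (Fin (k + 1)) ℤ) i).IsHomogeneous 1 := by
    refine Fin.cases ?_ (fun j => ?_) i
    · simpa using isHomogeneous_zero _ _ _
    · simpa using isHomogeneous_X _ _
  simpa using h1.pow (d i)

theorem X_dvd_res0 {m k : ℕ} (P : MvPolynomial (Fin (k + 2)) ℤ) :
    (X (Sum.inr 0) : MvPolynomial (Fin m ⊕ Fin (k + 2)) ℚ) ∣
      MvPolynomial.map (Int.castRingHom ℚ) (rename Sum.inr P) -
        rename (fun i : Fin (k + 1) => Sum.inr i.succ) (MvPolynomial.map (Int.castRingHom ℚ) (res0 P)) := by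
  induction P using MvPolynomial.induction_on with
  | C a =>
    have : res0 (C a : MvPolynomial (Fin (k + 2)) ℤ) = C a := by
      unfold res0 ev
      rw [eval₂_C]
      simp
    rw [this, rename_C, map_C, map_C, rename_C, sub_self]
    exact dvd_zero _
  | add p q hp hq =>
    have : res0 (p + q) = res0 p + res0 q := by simp [res0, ev]
    rw [this]
    simp only [map_add]
    rw [add_sub_add_comm]
    exact dvd_add hp hq
  | mul_X p j hp =>
    have : res0 (p * X j) = res0 p * (Fin.cons 0 (fun i : Fin (k + 1) => (X i : MvPolynomial (Fin (k + 1)) ℤ)) :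
      Fin (k + 2) → MvPolynomial (Fin (k + 1)) ℤ) j := by simp [res0, ev]
    rw [this]
    simp only [map_mul, rename_X, map_X]
    refine Fin.cases ?_ (fun j => ?_) j
    · simp
    · simp only [Fin.cons_succ, map_X, rename_X]
      rw [← sub_mul]
      exact Dvd.dvd.mul_right hp _

theorem case_H {m k : ℕ} (α : ℤ) (hα : α ≠ 0) (o : Fin m) (A₁ : Matrix (Fin m) (Fin m) ℤ)
    (q : Fin m → MvPolynomial (Fin (k + 2)) ℤ) (hq : ∀ j, (q j).IsHomogeneous 2)
    (R : MvPolynomial (Fin (k + 2)) ℤ) (hR : R.IsHomogeneous 3)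
    (Cpoly : MvPolynomial (Fin m ⊕ Fin (k + 2)) ℤ)
    (hC : Cpoly = X (Sum.inr 0) *
        rename Sum.inl (∑ a, ∑ b, C (A₁ a b) * X a * X b)
      + C α * X (Sum.inr 1) * X (Sum.inl o) ^ 2
      + ∑ i, X (Sum.inl i) * rename Sum.inr (q i) + rename Sum.inr R)
    (hhinv : ¬ ∃ L Q : Fin 4 → MvPolynomial (Fin m ⊕ Fin (k + 2)) ℚ,
      (∀ i, (L i).IsHomogeneous 1) ∧ (∀ i, (Q i).IsHomogeneous 2) ∧
        MvPolynomial.map (Int.castRingHom ℚ) Cpoly = ∑ i, L i * Q i) :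
    (∃ i, i ≠ o ∧ res0 (q i) ≠ 0) ∨ ((∀ i, i ≠ o → res0 (q i) = 0) ∧
      ¬ ∃ (κ : ℚ) (S : MvPolynomial (Fin (k + 1)) ℚ),
        MvPolynomial.map (Int.castRingHom ℚ) (res0 (q o) ^ 2 - C (4 * α) * X 0 * res0 R) = C κ * S ^ 2) := by
  by_cases hcase : ∃ i, i ≠ o ∧ res0 (q i) ≠ 0
  · exact Or.inl hcase
  push Not at hcase
  refine Or.inr ⟨hcase, ?_⟩
  rintro ⟨κ, S, hS⟩
  apply hhinv
  have hhom : (MvPolynomial.map (Int.castRingHom ℚ) Cpoly).IsHomogeneous 3 := by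
    apply IsHomogeneous.map
    rw [hC]
    refine ((IsHomogeneous.add ?_ ?_).add ?_).add ?_
    · have h1 : (∑ a, ∑ b, C (A₁ a b) * X a * X b : MvPolynomial (Fin m) ℤ).IsHomogeneous 2 := by
        apply IsHomogeneous.sum
        intro a _
        apply IsHomogeneous.sum
        intro b _
        exact ((isHomogeneous_C _ (A₁ a b)).mul (isHomogeneous_X ℤ a)).mul (isHomogeneous_X ℤ b)
      exact (isHomogeneous_X ℤ _).mul h1.rename_isHomogeneous
    · exact ((isHomogeneous_C _ α).mul (isHomogeneous_X ℤ _)).mul ((isHomogeneous_X ℤ _).pow 2)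
    · apply IsHomogeneous.sum
      intro i _
      exact (isHomogeneous_X ℤ _).mul (hq i).rename_isHomogeneous
    · exact hR.rename_isHomogeneous
  set ι : MvPolynomial (Fin (k + 1)) ℚ →ₐ[ℚ] MvPolynomial (Fin m ⊕ Fin (k + 2)) ℚ :=
    rename (fun i : Fin (k + 1) => Sum.inr i.succ) with hι
  set q' := MvPolynomial.map (Int.castRingHom ℚ) (res0 (q o)) with hq'
  set R' := MvPolynomial.map (Int.castRingHom ℚ) (res0 R) with hR'
  have hmain : ∃ U, MvPolynomial.map (Int.castRingHom ℚ) Cpoly = X (Sum.inr 0) * U +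
      (C (α : ℚ) * X (Sum.inr 1) * X (Sum.inl o) ^ 2 + X (Sum.inl o) * ι q' + ι R') := by
    have hd : ∀ P : MvPolynomial (Fin (k + 2)) ℤ, ∃ V, MvPolynomial.map (Int.castRingHom ℚ) (rename Sum.inr P) =
        X (Sum.inr 0) * V + ι (MvPolynomial.map (Int.castRingHom ℚ) (res0 P)) := by
      intro P
      obtain ⟨V, hV⟩ := X_dvd_res0 (m := m) P
      exact ⟨V, by rw [← hV]; ring⟩
    choose V hV using hd
    generalize (rename Sum.inl (∑ a, ∑ b, C (A₁ a b) * X a * X b) : MvPolynomial (Fin m ⊕ Fin (k + 2)) ℤ) = G at hC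
    refine ⟨MvPolynomial.map (Int.castRingHom ℚ) G +
      ∑ i, X (Sum.inl i) * V (q i) + V R, ?_⟩
    have hsum : ∑ i, (X (Sum.inl i) : MvPolynomial (Fin m ⊕ Fin (k + 2)) ℚ) * (X (Sum.inr 0) * V (q i) +
        ι (MvPolynomial.map (Int.castRingHom ℚ) (res0 (q i)))) =
        X (Sum.inr 0) * ∑ i, X (Sum.inl i) * V (q i) + X (Sum.inl o) * ι q' := by
      simp only [mul_add]
      rw [Finset.sum_add_distrib, Finset.mul_sum]
      congr 1
      · exact Finset.sum_congr rfl fun i _ => by ring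
      · rw [Finset.sum_eq_single o]
        · intro i _ hi
          rw [hcase i hi]; simp
        · simp
    rw [hC, map_add, map_add, map_add, map_mul, map_mul, map_mul, map_pow, map_X, map_X, map_X, map_C, map_sum, hV R]
    have : ∀ i, MvPolynomial.map (Int.castRingHom ℚ) (X (Sum.inl i) * rename Sum.inr (q i)) =
        (X (Sum.inl i) : MvPolynomial (Fin m ⊕ Fin (k + 2)) ℚ) * (X (Sum.inr 0) * V (q i) +
        ι (MvPolynomial.map (Int.castRingHom ℚ) (res0 (q i)))) := by
      intro i
      rw [map_mul, map_X, hV]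
    simp only [this]
    rw [hsum, Int.coe_castRingHom]
    ring
  obtain ⟨U, hU⟩ := hmain
  have hS' : q' ^ 2 - C (4 * (α : ℚ)) * X 0 * R' = C κ * S ^ 2 := by
    have e : C (4 * (α : ℚ)) = MvPolynomial.map (Int.castRingHom ℚ) (C (4 * α) : MvPolynomial (Fin (k + 1)) ℤ) := by
      rw [map_C]; simp
    rw [← hS, map_sub, map_mul (MvPolynomial.map (Int.castRingHom ℚ)), map_mul (MvPolynomial.map (Int.castRingHom ℚ)),
      map_pow, ← e, map_X]
  have hq'd : q'.totalDegree ≤ 2 := ((res0_homog _ (hq o)).map _).totalDegree_le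
  have hR'd : R'.totalDegree ≤ 3 := ((res0_homog _ hR).map _).totalDegree_le
  have hι0 : ι (X 0) = X (Sum.inr 1) := by rw [hι, rename_X]; rfl
  rcases factor_alt 0 (α : ℚ) (by exact_mod_cast hα) q' R' S κ hq'd hR'd hS' with ⟨q'', R'', h1, h2⟩ | ⟨l, d, hl, hd, h1, h2⟩
  · apply hinv_contra' _ (X (Sum.inr 0)) U (X (Sum.inr 1))
      (C (α : ℚ) * X (Sum.inl o) ^ 2 + X (Sum.inl o) * ι q'' + ι R'') hhom (isHomogeneous_X _ _) (isHomogeneous_X _ _)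
    rw [hU, h1, h2, map_mul, map_mul, hι0]
    ring
  · apply hinv_contra _ (X (Sum.inr 0)) U (X (Sum.inl o) + ι l)
      (C (α : ℚ) * X (Sum.inr 1) * X (Sum.inl o) + ι d) hhom (isHomogeneous_X _ _)
    · refine (totalDegree_add _ _).trans (max_le ?_ ?_)
      · rw [totalDegree_X]
      · exact (totalDegree_rename_le _ _).trans hl
    · refine (totalDegree_add _ _).trans (max_le ?_ ?_)
      · exact (((isHomogeneous_C _ (α : ℚ)).mul (isHomogeneous_X ℚ _)).mul (isHomogeneous_X ℚ _)).totalDegree_le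
      · exact (totalDegree_rename_le _ _).trans hd
    · have hιC : ι (C (α : ℚ)) = C (α : ℚ) := by rw [hι, rename_C]
      rw [hU, h1, h2, map_mul, map_add, map_mul, map_mul, hι0, hιC]
      ring


theorem exists_li_rows {ι κ : Type} [Fintype ι] [Fintype κ] (B : Matrix ι κ ℚ) (h : 5 ≤ B.rank) :
    ∃ I : Fin 5 → ι, Function.Injective I ∧ LinearIndependent ℚ (fun i => B (I i)) := by
  classical
  obtain ⟨τ, a, ha, hsp, hli⟩ := exists_linearIndependent' ℚ B.row
  have : Finite τ := Finite.of_injective a ha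
  have : Fintype τ := Fintype.ofFinite τ
  have hc : 5 ≤ Fintype.card τ := by
    rw [Matrix.rank_eq_finrank_span_row, ← hsp, finrank_span_eq_card hli] at h
    exact h
  obtain ⟨e⟩ : Nonempty (Fin 5 ↪ τ) := by
    apply Function.Embedding.nonempty_of_card_le
    simpa using hc
  exact ⟨a ∘ e, ha.comp e.injective, hli.comp e e.injective⟩

theorem exists_minor {m : ℕ} (M : Matrix (Fin m) (Fin m) ℤ) (h : 5 ≤ (M.map ((↑) : ℤ → ℚ)).rank) :
    ∃ I J : Fin 5 → Fin m, Function.Injective I ∧ Function.Injective J ∧ (M.submatrix I J).det ≠ 0 := by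
  classical
  set B := M.map ((↑) : ℤ → ℚ) with hB
  obtain ⟨I, hI, hli⟩ := exists_li_rows B h
  have h1 : (B.submatrix I id).rank = 5 := by
    have : LinearIndependent ℚ (B.submatrix I id).row := hli
    simpa using this.rank_matrix
  have h2 : 5 ≤ (B.submatrix I id)ᵀ.rank := by rw [rank_transpose, h1]
  obtain ⟨J, hJ, hlj⟩ := exists_li_rows _ h2
  refine ⟨I, J, hI, hJ, ?_⟩
  have h3 : IsUnit (B.submatrix I J)ᵀ := by
    rw [← Matrix.linearIndependent_rows_iff_isUnit]
    exact hlj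
  rw [Matrix.isUnit_iff_isUnit_det, det_transpose, isUnit_iff_ne_zero] at h3
  intro h0
  apply h3
  have : B.submatrix I J = (Int.castRingHom ℚ).mapMatrix (M.submatrix I J) := by
    ext i j; simp [hB]
  rw [this, ← RingHom.map_det, h0, map_zero]

/-- matrix unit at `(o,o)` -/
def Eo {m : ℕ} (o : Fin m) : Matrix (Fin m) (Fin m) ℤ := fun i j => if i = o ∧ j = o then 1 else 0

theorem minor_data {m : ℕ} (M : Matrix (Fin m) (Fin m) ℤ) (o : Fin m) (I J : Fin 5 → Fin m)
    (hI : Function.Injective I) (hJ : Function.Injective J) (hd : (M.submatrix I J).det ≠ 0) :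
    ∃ (d' d4 : ℤ) (I4 J4 : Fin 4 → Fin m), d4 ≠ 0 ∧ Function.Injective J4 ∧
      (∀ s t : ℤ, ((s • M + t • Eo o).submatrix I J).det = s ^ 4 * (s * (M.submatrix I J).det + t * d')) ∧
      (∀ s t : ℤ, ((s • M + t • Eo o).submatrix I4 J4).det = s ^ 4 * d4) ∧
      (∃ i j, i ≠ o ∧ M i j ≠ 0) := by
  classical
  obtain ⟨i0, hi0⟩ : ∃ i0, ∀ i, i ≠ i0 → I i ≠ o := by
    by_cases h : ∃ i0, I i0 = o
    · obtain ⟨i0, h⟩ := h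
      exact ⟨i0, fun i hi hh => hi (hI (hh.trans h.symm))⟩
    · push Not at h
      exact ⟨0, fun i _ => h i⟩
  have hexp := det_succ_row (M.submatrix I J) i0
  have hne : ∃ j ∈ (Finset.univ : Finset (Fin 5)), (-1 : ℤ) ^ ((i0 : ℕ) + (j : ℕ)) * (M.submatrix I J) i0 j *
      ((M.submatrix I J).submatrix i0.succAbove j.succAbove).det ≠ 0 := by
    apply Finset.exists_ne_zero_of_sum_ne_zero
    rw [← hexp]; exact hd
  obtain ⟨j0, -, hj0⟩ := hne
  have hd4 := right_ne_zero_of_mul hj0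
  have hsub : ∀ (s t : ℤ) (j : Fin 5), ((s • M + t • Eo o).submatrix I J).submatrix i0.succAbove j.succAbove =
      s • ((M.submatrix I J).submatrix i0.succAbove j.succAbove) := by
    intro s t j
    ext a b
    have := hi0 (i0.succAbove a) (Fin.succAbove_ne _ _)
    simp only [submatrix_apply, Matrix.add_apply, Matrix.smul_apply, smul_eq_mul, Eo, this, false_and, if_false, mul_zero, add_zero]
  refine ⟨∑ j : Fin 5, (-1 : ℤ) ^ ((i0 : ℕ) + (j : ℕ)) * (Eo o (I i0) (J j)) *
      ((M.submatrix I J).submatrix i0.succAbove j.succAbove).det, _, I ∘ i0.succAbove, J ∘ j0.succAbove, hd4,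
      hJ.comp Fin.succAbove_right_injective, ?_, ?_, ?_⟩
  · intro s t
    rw [det_succ_row _ i0]
    simp only [hsub, det_smul, Fintype.card_fin]
    conv_rhs => rw [hexp]
    rw [Finset.mul_sum, Finset.mul_sum, ← Finset.sum_add_distrib, Finset.mul_sum]
    refine Finset.sum_congr rfl fun j _ => ?_
    simp only [submatrix_apply, Matrix.add_apply, Matrix.smul_apply, smul_eq_mul]
    ring
  · intro s t
    have := congrArg det (hsub s t j0)
    rw [det_smul, Fintype.card_fin] at this
    exact this
  · by_contra hcon
    push Not at hcon
    apply hd4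
    apply det_eq_zero_of_row_eq_zero 0
    intro j
    exact hcon _ _ (hi0 (i0.succAbove 0) (Fin.succAbove_ne _ _))

theorem exists_xstar {m : ℕ} (A : Matrix (Fin m) (Fin m) ℤ) (o : Fin m) (h : ∃ i j, i ≠ o ∧ (A + Aᵀ) i j ≠ 0) :
    ∃ (x : Fin m → ℤ) (i : Fin m), i ≠ o ∧ x o ≠ 0 ∧ lv A x i ≠ 0 := by
  classical
  obtain ⟨i, j, hi, hij⟩ := h
  have hs : ∀ j, lv A (Pi.single j (1 : ℤ)) i = A i j + A j i := by
    intro j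
    unfold lv
    rw [Finset.sum_eq_single j]
    · simp
    · intro b _ hb; simp [hb]
    · simp
  by_cases ho : A i o + A o i = 0
  · have hjo : j ≠ o := by
      rintro rfl
      exact hij ho
    refine ⟨Pi.single o 1 + Pi.single j 1, i, hi, ?_, ?_⟩
    · simp [hjo.symm]
    · rw [lv_add, hs, hs, ho, zero_add]; exact hij
  · refine ⟨Pi.single o 1, i, hi, by simp, ?_⟩
    rw [hs]; exact ho


theorem ev_smul {σ : Type} [Fintype σ] (P : MvPolynomial σ ℤ) (n : ℕ) (hP : P.IsHomogeneous n) (T : ℤ)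
    (w : σ → ℤ) : ev (fun i => T * w i) P = T ^ n * ev w P := by
  unfold ev
  rw [eval₂_eq', eval₂_eq', Finset.mul_sum]
  refine Finset.sum_congr rfl fun d hd => ?_
  have hdn : ∑ i, d i = n := by
    have := hP (mem_support_iff.mp hd)
    rw [← this, Finsupp.weight_apply, Finsupp.sum_fintype _ _ (by simp)]
    simp
  simp only [mul_pow]
  rw [Finset.prod_mul_distrib, Finset.prod_pow_eq_pow_sum, hdn]
  ring

theorem qv_lin {m : ℕ} (A : Matrix (Fin m) (Fin m) ℤ) (o : Fin m) (s t : ℤ) (B : Fin m → ℤ) (c : ℤ) (x : Fin m → ℤ) :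
    qv (s • A + t • Eo o) B c x = s * qv A 0 0 x + t * x o ^ 2 + ∑ i, B i * x i + c := by
  have h1 : ∑ i, ∑ j, Eo o i j * x i * x j = x o ^ 2 := by
    rw [Finset.sum_eq_single o, Finset.sum_eq_single o]
    · simp [Eo]; ring
    · intro j _ hj; simp [Eo, hj]
    · simp
    · intro i _ hi
      apply Finset.sum_eq_zero
      intro j _; simp [Eo, hi]
    · simp
  unfold qv
  simp only [Matrix.add_apply, Matrix.smul_apply, smul_eq_mul, Int.cast_id, Pi.zero_apply, zero_mul,
    Finset.sum_const_zero, add_zero]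
  rw [← h1]
  refine congrArg (fun u => u + ∑ i, B i * x i + c) ?_
  rw [Finset.mul_sum, Finset.mul_sum, ← Finset.sum_add_distrib]
  refine Finset.sum_congr rfl fun i _ => ?_
  rw [Finset.mul_sum, Finset.mul_sum, ← Finset.sum_add_distrib]
  refine Finset.sum_congr rfl fun j _ => ?_
  ring

theorem lv_lin {m : ℕ} (A : Matrix (Fin m) (Fin m) ℤ) (o : Fin m) (s t : ℤ) (x : Fin m → ℤ) (i : Fin m) (hi : i ≠ o) :
    lv (s • A + t • Eo o) x i = s * lv A x i := by
  unfold lv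
  rw [Finset.mul_sum]
  refine Finset.sum_congr rfl fun j _ => ?_
  simp only [Matrix.add_apply, Matrix.smul_apply, smul_eq_mul, Int.cast_id, Eo, hi, false_and, and_false, if_false]
  ring

theorem sym_lin {m : ℕ} (A : Matrix (Fin m) (Fin m) ℤ) (o : Fin m) (s t : ℤ) :
    (s • A + t • Eo o) + (s • A + t • Eo o)ᵀ = s • (A + Aᵀ) + (2 * t) • Eo o := by
  ext i j
  simp only [Matrix.add_apply, Matrix.smul_apply, smul_eq_mul, Matrix.transpose_apply, Eo, and_comm]
  ring

theorem eval_Cpoly {m k : ℕ} (α : ℤ) (o : Fin m) (A₁ : Matrix (Fin m) (Fin m) ℤ)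
    (q : Fin m → MvPolynomial (Fin (k + 2)) ℤ) 
    (R : MvPolynomial (Fin (k + 2)) ℤ) 
    (Cpoly : MvPolynomial (Fin m ⊕ Fin (k + 2)) ℤ)
    (hC : Cpoly = X (Sum.inr 0) *
        rename Sum.inl (∑ a, ∑ b, C (A₁ a b) * X a * X b)
      + C α * X (Sum.inr 1) * X (Sum.inl o) ^ 2
      + ∑ i, X (Sum.inl i) * rename Sum.inr (q i) + rename Sum.inr R) (x : Fin m → ℤ) (y : Fin (k + 2) → ℤ) :
    eval (Sum.elim x y) Cpoly = qv (y 0 • A₁ + (α * y 1) • Eo o) (fun i => ev y (q i)) (ev y R) x := by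
  have he : ∀ P : MvPolynomial (Fin (k + 2)) ℤ, eval (Sum.elim x y) (rename Sum.inr P) = ev y P := by
    intro P
    rw [eval_rename]
    unfold ev eval
    rfl
  rw [qv_lin, hC]
  simp only [map_add, map_mul, map_sum, map_pow, eval_X, MvPolynomial.eval_C, he, Sum.elim_inr, Sum.elim_inl, rename_X, rename_C]
  unfold qv
  simp only [Int.cast_id, Pi.zero_apply, zero_mul, Finset.sum_const_zero, add_zero]
  congr 2
  exact Finset.sum_congr rfl fun i _ => by ring

/-- the vector `y` attached to `(p, z)` -/
def yv {k : ℕ} (s t T : ℤ) (p : ℕ) (z : Fin (k + 1) → ℤ) : Fin (k + 2) → ℤ :=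
  Fin.cons (p * s) (fun j => (if j = 0 then p * t else 0) + T * z j)

theorem yv_zero {k : ℕ} (s t T : ℤ) (p : ℕ) (z : Fin (k + 1) → ℤ) : yv s t T p z 0 = p * s := rfl
theorem yv_one {k : ℕ} (s t T : ℤ) (p : ℕ) (z : Fin (k + 1) → ℤ) : yv s t T p z 1 = p * t + T * z 0 := rfl

/-- Bad primes. -/
theorem bad_bound {m k : ℕ} (hm : 0 < m) (α : ℤ) (o : Fin m) (A₁ : Matrix (Fin m) (Fin m) ℤ)
    (q : Fin m → MvPolynomial (Fin (k + 2)) ℤ) (hq : ∀ j, (q j).IsHomogeneous 2)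
    (R : MvPolynomial (Fin (k + 2)) ℤ) (hR : R.IsHomogeneous 3)
    (x : Fin m → ℤ) (i : Fin m) (hi : i ≠ o) (D : ℤ) (hD : D = α * x o ^ 2 * lv A₁ x i) (hD0 : D ≠ 0)
    (T : ℕ) (hT : 0 < T) (hTD : ∀ ℓ : ℕ, ℓ.Prime → ℓ ∣ T → 2 * D.natAbs.factorization ℓ + 1 ≤ T.factorization ℓ)
    (p : ℕ) (hp : p.Prime) (hpT : ¬ p ∣ T) (z : Fin (k + 1) → ℤ) (y : Fin (k + 2) → ℤ)
    (hy : y = fun j => (T : ℤ) * yv (α * x o ^ 2) (- qv A₁ 0 0 x) T p z j) (ℓ e : ℕ) (hℓ : ℓ.Prime) (hℓT : ℓ ∣ T) :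
    ((ℓ : ℝ) ^ (T.factorization ℓ * (m - 1)))⁻¹ ≤
      rho (y 0 • A₁ + (α * y 1) • Eo o) (fun i => ev y (q i)) (ev y R) (ℓ ^ e) := by
  set w := yv (α * x o ^ 2) (- qv A₁ 0 0 x) (T : ℤ) p z with hw
  have hw0 : w 0 = p * (α * x o ^ 2) := yv_zero _ _ _ _ _
  have hw1 : w 1 = p * (- qv A₁ 0 0 x) + T * z 0 := yv_one _ _ _ _ _
  have e1 : (y 0 • A₁ + (α * y 1) • Eo o) = (T : ℤ) • (w 0 • A₁ + (α * w 1) • Eo o) := by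
    rw [hy]
    ext a b
    simp only [Matrix.add_apply, Matrix.smul_apply, smul_eq_mul]
    ring
  have e2 : (fun i => ev y (q i)) = (T : ℤ) • (fun i => (T : ℤ) * ev w (q i)) := by
    funext i
    rw [hy, ev_smul _ 2 (hq i)]
    simp only [Pi.smul_apply, smul_eq_mul]
    ring
  have e3 : ev y R = (T : ℤ) * ((T : ℤ) ^ 2 * ev w R) := by
    rw [hy, ev_smul _ 3 hR]
    ring
  rw [e1, e2, e3]
  refine rho_bad hm _ _ _ T hT x i ?_ ℓ hℓ (D.natAbs.factorization ℓ) (hTD ℓ hℓ hℓT) ?_ e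
  · rw [qv_lin, hw0, hw1]
    have : ∑ i, (T : ℤ) * ev w (q i) * x i = T * ∑ i, ev w (q i) * x i := by
      rw [Finset.mul_sum]
      exact Finset.sum_congr rfl fun i _ => by ring
    rw [this]
    exact ⟨α * z 0 * x o ^ 2 + ∑ i, ev w (q i) * x i + T * ev w R, by ring⟩
  · unfold gv
    rw [lv_lin _ _ _ _ _ _ hi, hw0]
    intro hdvd
    have hdT : (ℓ : ℤ) ^ (D.natAbs.factorization ℓ + 1) ∣ (T : ℤ) := by
      have h1 : ℓ ^ (D.natAbs.factorization ℓ + 1) ∣ T := by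
        rw [hℓ.pow_dvd_iff_le_factorization hT.ne']
        have := hTD ℓ hℓ hℓT
        omega
      exact_mod_cast h1
    have h2 : (ℓ : ℤ) ^ (D.natAbs.factorization ℓ + 1) ∣ p * D := by
      have h3 := dvd_sub hdvd (Dvd.dvd.mul_right hdT (ev w (q i)))
      have h4 : (p : ℤ) * D = p * (α * x o ^ 2) * lv A₁ x i + ((((T : ℤ) * ev w (q i) : ℤ)) : ℤ) - T * ev w (q i) := by
        rw [hD]; ring
      rw [h4]
      exact h3
    have h5 : IsCoprime ((ℓ : ℤ) ^ (D.natAbs.factorization ℓ + 1)) (p : ℤ) := by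
      apply IsCoprime.pow_left
      rw [Nat.isCoprime_iff_coprime]
      rw [Nat.coprime_primes hℓ hp]
      rintro rfl
      exact hpT hℓT
    have h6 := h5.dvd_of_dvd_mul_left h2
    have h7 : ℓ ^ (D.natAbs.factorization ℓ + 1) ∣ D.natAbs := by
      have := Int.natAbs_dvd_natAbs.mpr h6
      rwa [Int.natAbs_pow, Int.natAbs_natCast] at this
    rw [hℓ.pow_dvd_iff_le_factorization (Int.natAbs_ne_zero.mpr hD0)] at h7
    omega


theorem good4 {m : ℕ} (hm : 0 < m) (A : Matrix (Fin m) (Fin m) ℤ) (B : Fin m → ℤ) (c : ℤ)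
    (I J : Fin 4 → Fin m) (hJ : Function.Injective J) (ℓ : ℕ) (hℓ : ℓ.Prime)
    (hD : ¬ ((ℓ : ℤ) ∣ ((A + Aᵀ).submatrix I J).det)) (k : ℕ) (hk : 1 ≤ k) :
    1 - 2 / (ℓ : ℝ) ≤ rho A B c (ℓ ^ k) := by
  haveI : Fact ℓ.Prime := ⟨hℓ⟩
  have hl0 : (0 : ℝ) < ℓ := by exact_mod_cast hℓ.pos
  refine le_trans ?_ (rho_ge_sm hm A B c ℓ k hk)
  have h4 : 4 ≤ m := by simpa using Fintype.card_le_of_injective J hJ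
  have h1 := sm_bound hm A B c ℓ (1 / ℓ) (by positivity) (by
    have h2 : (kc A ℓ : ℝ) ≤ (ℓ : ℝ) ^ (m - 4) := by exact_mod_cast kc_le_prime A I J hJ ℓ hD
    obtain ⟨n, rfl⟩ : ∃ n, m = n + 4 := ⟨m - 4, by omega⟩
    rw [Nat.add_sub_cancel] at h2
    calc (ℓ : ℝ) ^ 2 * kc A ℓ ≤ (ℓ : ℝ) ^ 2 * (ℓ : ℝ) ^ n := by gcongr
      _ = (1 / (ℓ : ℝ)) ^ 2 * (ℓ : ℝ) ^ (n + 4) := by field_simp; ring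
      _ ≤ _ := le_refl _)
  rw [show 2 / (ℓ : ℝ) = 2 * (1 / ℓ) by ring]
  exact h1

theorem good5 {m : ℕ} (hm : 0 < m) (A : Matrix (Fin m) (Fin m) ℤ) (B : Fin m → ℤ) (c : ℤ)
    (I J : Fin 5 → Fin m) (hJ : Function.Injective J) (ℓ : ℕ) (hℓ : ℓ.Prime)
    (hD : ¬ ((ℓ : ℤ) ∣ ((A + Aᵀ).submatrix I J).det)) (k : ℕ) (hk : 1 ≤ k) :
    1 - 2 * (1 / ((ℓ : ℝ) * Real.sqrt ℓ)) ≤ rho A B c (ℓ ^ k) := by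
  haveI : Fact ℓ.Prime := ⟨hℓ⟩
  have hl0 : (0 : ℝ) < ℓ := by exact_mod_cast hℓ.pos
  refine le_trans ?_ (rho_ge_sm hm A B c ℓ k hk)
  have h4 : 5 ≤ m := by simpa using Fintype.card_le_of_injective J hJ
  refine sm_bound hm A B c ℓ (1 / ((ℓ : ℝ) * Real.sqrt ℓ)) (by positivity) ?_
  have h2 : (kc A ℓ : ℝ) ≤ (ℓ : ℝ) ^ (m - 5) := by exact_mod_cast kc_le_prime A I J hJ ℓ hD
  obtain ⟨n, rfl⟩ : ∃ n, m = n + 5 := ⟨m - 5, by omega⟩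
  rw [Nat.add_sub_cancel] at h2
  have hs : Real.sqrt ℓ ^ 2 = (ℓ : ℝ) := Real.sq_sqrt hl0.le
  have e : (1 / ((ℓ : ℝ) * Real.sqrt ℓ)) ^ 2 = 1 / (ℓ : ℝ) ^ 3 := by
    rw [div_pow, mul_pow, hs]; ring
  calc (ℓ : ℝ) ^ 2 * kc A ℓ ≤ (ℓ : ℝ) ^ 2 * (ℓ : ℝ) ^ n := by gcongr
    _ = (1 / (ℓ : ℝ) ^ 3) * (ℓ : ℝ) ^ (n + 5) := by field_simp; ring
    _ = _ := by rw [e]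

theorem tail_exists : ∃ w : ℕ, ∀ S : Finset ℕ, (∀ ℓ ∈ S, w < ℓ) →
    ∑ ℓ ∈ S, 2 * (1 / ((ℓ : ℝ) * Real.sqrt ℓ)) ≤ 1 / 4 := by
  have hs : Summable (fun n : ℕ => 2 * (1 / ((n : ℝ) * Real.sqrt n))) := by
    apply Summable.mul_left
    have h1 := Real.summable_one_div_nat_rpow.mpr (show (1 : ℝ) < 3 / 2 by norm_num)
    refine h1.congr fun n => ?_
    rcases Nat.eq_zero_or_pos n with rfl | hn
    · norm_num
    · have : (0 : ℝ) < n := by exact_mod_cast hn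
      rw [show (3 / 2 : ℝ) = 1 + 1 / 2 by norm_num, Real.rpow_add this, Real.rpow_one, ← Real.sqrt_eq_rpow]
  rw [summable_iff_vanishing_norm] at hs
  obtain ⟨s, hs⟩ := hs (1 / 4) (by norm_num)
  refine ⟨s.sup id, fun S hS => ?_⟩
  have := hs S (by
    rw [Finset.disjoint_left]
    intro a ha has
    have h1 := hS a ha
    have h2 : id a ≤ s.sup id := Finset.le_sup has
    simp at h2
    omega)
  exact (le_abs_self _).trans this.le

theorem single_bound {m k : ℕ} (hm : 0 < m) (α : ℤ) (o : Fin m) (A₁ : Matrix (Fin m) (Fin m) ℤ)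
    (q : Fin m → MvPolynomial (Fin (k + 2)) ℤ) (hq : ∀ j, (q j).IsHomogeneous 2)
    (R : MvPolynomial (Fin (k + 2)) ℤ) (hR : R.IsHomogeneous 3)
    (Cpoly : MvPolynomial (Fin m ⊕ Fin (k + 2)) ℤ)
    (hC : Cpoly = X (Sum.inr 0) *
        rename Sum.inl (∑ a, ∑ b, C (A₁ a b) * X a * X b)
      + C α * X (Sum.inr 1) * X (Sum.inl o) ^ 2
      + ∑ i, X (Sum.inl i) * rename Sum.inr (q i) + rename Sum.inr R)
    (I J : Fin 5 → Fin m) (hJ : Function.Injective J) (d d' d4 : ℤ) (I4 J4 : Fin 4 → Fin m) (hJ4 : Function.Injective J4)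
    (h5 : ∀ s t : ℤ, ((s • (A₁ + A₁ᵀ) + t • Eo o).submatrix I J).det = s ^ 4 * (s * d + t * d'))
    (h4 : ∀ s t : ℤ, ((s • (A₁ + A₁ᵀ) + t • Eo o).submatrix I4 J4).det = s ^ 4 * d4)
    (x : Fin m → ℤ) (i : Fin m) (hi : i ≠ o) (D : ℤ) (hD : D = α * x o ^ 2 * lv A₁ x i) (hD0 : D ≠ 0)
    (T : ℕ) (hT : 0 < T) (hTD : ∀ ℓ : ℕ, ℓ.Prime → ℓ ∣ T → 2 * D.natAbs.factorization ℓ + 1 ≤ T.factorization ℓ)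
    (hDT : D ∣ T) (h4T : d4 ∣ T)
    (w : ℕ) (hw : ∀ S : Finset ℕ, (∀ ℓ ∈ S, w < ℓ) → ∑ ℓ ∈ S, 2 * (1 / ((ℓ : ℝ) * Real.sqrt ℓ)) ≤ 1 / 4)
    (hwT : ∀ ℓ : ℕ, ℓ.Prime → ¬ ℓ ∣ T → w < ℓ)
    (p : ℕ) (hp : p.Prime) (hpT : ¬ p ∣ T) (z : Fin (k + 1) → ℤ) (y : Fin (k + 2) → ℤ)
    (hy : y = fun j => (T : ℤ) * yv (α * x o ^ 2) (- qv A₁ 0 0 x) T p z j)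
    (hgood : goodAt α o (fun i => res0 (q i)) (res0 R) p (fun j => ((T : ZMod p)) ^ 2 * (z j : ZMod p)))
    (D' : ℤ) (hD' : D' = p * (α * x o ^ 2 * d + 2 * α * (- qv A₁ 0 0 x) * d') + 2 * α * T * d' * z 0) (hD'0 : D' ≠ 0)
    (hsumD : ∀ S : Finset ℕ, (∀ ℓ ∈ S, ℓ.Prime ∧ ¬ ℓ ∣ T ∧ ℓ ≠ p ∧ (ℓ : ℤ) ∣ D') → ∑ ℓ ∈ S, 1 / (ℓ : ℝ) ≤ 1 / 8) :
    ((T : ℝ) ^ (m - 1))⁻¹ / 2 ≤ (singSeries m fun x => eval (Sum.elim x y) Cpoly).re := by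
  classical
  have hF : (fun x => eval (Sum.elim x y) Cpoly) =
      fun x => qv (y 0 • A₁ + (α * y 1) • Eo o) (fun i => ev y (q i)) (ev y R) x := by
    funext x
    exact eval_Cpoly α o A₁ q R Cpoly hC x y
  rw [hF]
  set A := y 0 • A₁ + (α * y 1) • Eo o with hA
  set B : Fin m → ℤ := fun i => ev y (q i) with hB
  set c : ℤ := ev y R with hc
  set s : ℤ := α * x o ^ 2 with hs
  have hy0 : y 0 = T * (p * s) := by rw [hy]; rfl
  have hy1 : y 1 = T * (p * (- qv A₁ 0 0 x) + T * z 0) := by rw [hy]; rfl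
  have hsD : s ∣ D := ⟨_, hD⟩
  have hs0 : s ≠ 0 := by rintro h0; rw [h0, zero_mul] at hD; exact hD0 hD
  have hT0 : (T : ℤ) ≠ 0 := by exact_mod_cast hT.ne'
  have hp0 : (p : ℤ) ≠ 0 := by exact_mod_cast hp.ne_zero
  have hdet5 : ((A + Aᵀ).submatrix I J).det = (T * (p * s)) ^ 4 * (T * D') := by
    rw [hA, sym_lin, h5, hD', hy0, hy1]
    ring
  have hdet4 : ((A + Aᵀ).submatrix I4 J4).det = (T * (p * s)) ^ 4 * d4 := by
    rw [hA, sym_lin, h4, hy0]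
  have hsummable := term_summable A B c I J hJ (by
    rw [hdet5]
    exact mul_ne_zero (pow_ne_zero _ (mul_ne_zero hT0 (mul_ne_zero hp0 hs0))) (mul_ne_zero hT0 hD'0))
  have hy0ℓ : ∀ ℓ : ℕ, ℓ.Prime → ¬ ℓ ∣ T → ℓ ≠ p → ¬ (ℓ : ℤ) ∣ (T * (p * s)) ^ 4 := by
    intro ℓ hℓ hℓT hℓp hdvd
    have hpr : Prime (ℓ : ℤ) := Nat.prime_iff_prime_int.mp hℓ
    have hTn : ¬ (ℓ : ℤ) ∣ T := by exact_mod_cast hℓT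
    rcases hpr.dvd_or_dvd (hpr.dvd_of_dvd_pow hdvd) with h | h
    · exact hTn h
    · rcases hpr.dvd_or_dvd h with h | h
      · have : ℓ ∣ p := by exact_mod_cast h
        exact hℓp ((Nat.prime_dvd_prime_iff_eq hℓ hp).mp this)
      · exact hTn ((h.trans hsD).trans hDT)
  set b : ℕ → ℝ := fun ℓ => if ℓ.Prime ∧ ¬ ℓ ∣ T ∧ ℓ ≠ p then
    (if (ℓ : ℤ) ∣ D' then 2 * (1 / (ℓ : ℝ)) else 2 * (1 / ((ℓ : ℝ) * Real.sqrt ℓ))) else 0 with hb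
  refine singSeries_lower A B c hsummable _ fun Q hQ => ?_
  refine rho_assembly A B c T hT ?_ b ?_ ?_ ?_ ?_ Q hQ
  · intro ℓ e hℓ hℓT
    exact bad_bound hm α o A₁ q hq R hR x i hi D hD hD0 T hT hTD p hp hpT z y hy ℓ e hℓ hℓT
  · intro ℓ
    simp only [hb]
    split_ifs <;> positivity
  · intro ℓ
    simp only [hb]
    split_ifs with h1 h2
    · have : (2 : ℝ) ≤ ℓ := by exact_mod_cast h1.1.two_le
      rw [mul_one_div, div_le_one (by linarith)]; exact this
    · have h2' : (2 : ℝ) ≤ ℓ := by exact_mod_cast h1.1.two_le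
      have h3 : 1 ≤ Real.sqrt ℓ := by rw [Real.one_le_sqrt]; linarith
      rw [mul_one_div, div_le_one (by positivity)]
      nlinarith
    · norm_num
  · intro ℓ e hℓ hℓT he
    by_cases hℓp : ℓ = p
    · subst hℓp
      have : b ℓ = 0 := by simp [hb]
      rw [this, sub_zero]
      haveI : Fact ℓ.Prime := ⟨hℓ⟩
      refine le_trans ?_ (rho_ge_sm hm A B c ℓ e he)
      have hyj : ∀ j, (y j : ZMod ℓ) = (Fin.cons 0 (fun j => ((T : ZMod ℓ)) ^ 2 * (z j : ZMod ℓ)) : Fin (k + 2) → ZMod ℓ) j := by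
        intro j
        rw [hy]
        refine Fin.cases ?_ (fun j => ?_) j
        · simp [yv]
        · simp only [yv, Fin.cons_succ]
          push_cast
          split_ifs <;> push_cast <;> simp <;> ring
      have hev : ∀ P : MvPolynomial (Fin (k + 2)) ℤ, ((ev y P : ℤ) : ZMod ℓ) =
          ev (fun j => ((T : ZMod ℓ)) ^ 2 * (z j : ZMod ℓ)) (res0 P) := by
        intro P
        rw [ev_res0]
        have := ev_map (Int.castRingHom (ZMod ℓ)) y P
        simp only [Int.coe_castRingHom] at this
        rw [this]
        congr 1
        funext j
        exact hyj j
      have := hgood A B c (by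
        intro a b
        simp only [hA, Matrix.add_apply, Matrix.smul_apply, smul_eq_mul, Eo]
        push_cast
        have e0 := hyj 0
        have e1 : (y 1 : ZMod ℓ) = (T : ZMod ℓ) ^ 2 * (z 0 : ZMod ℓ) := hyj 1
        rw [Fin.cons_zero] at e0
        rw [e0, e1]
        split_ifs <;> simp) (fun i => hev (q i)) (hev R)
      rw [le_div_iff₀ (by have := hℓ.pos; positivity), one_mul]
      exact_mod_cast this
    · have hcond : ℓ.Prime ∧ ¬ ℓ ∣ T ∧ ℓ ≠ p := ⟨hℓ, hℓT, hℓp⟩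
      have hpr : Prime (ℓ : ℤ) := Nat.prime_iff_prime_int.mp hℓ
      have hTn : ¬ (ℓ : ℤ) ∣ T := by exact_mod_cast hℓT
      have hb' : b ℓ = if (ℓ : ℤ) ∣ D' then 2 * (1 / (ℓ : ℝ)) else 2 * (1 / ((ℓ : ℝ) * Real.sqrt ℓ)) := by
        simp only [hb]; rw [if_pos hcond]
      rw [hb']
      split_ifs with hdd
      · rw [mul_one_div]
        apply good4 hm A B c I4 J4 hJ4 ℓ hℓ _ e he
        rw [hdet4]
        intro h
        rcases hpr.dvd_or_dvd h with h | h
        · exact hy0ℓ ℓ hℓ hℓT hℓp h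
        · exact hTn (h.trans h4T)
      · apply good5 hm A B c I J hJ ℓ hℓ _ e he
        rw [hdet5]
        intro h
        rcases hpr.dvd_or_dvd h with h | h
        · exact hy0ℓ ℓ hℓ hℓT hℓp h
        · rcases hpr.dvd_or_dvd h with h | h
          · exact hTn h
          · exact hdd h
  · intro S hS
    have h1 : ∑ ℓ ∈ S, b ℓ ≤ ∑ ℓ ∈ S.filter (fun ℓ => ℓ ≠ p ∧ (ℓ : ℤ) ∣ D'), 2 * (1 / (ℓ : ℝ)) +
        ∑ ℓ ∈ S, 2 * (1 / ((ℓ : ℝ) * Real.sqrt ℓ)) := by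
      rw [Finset.sum_filter, ← Finset.sum_add_distrib]
      refine Finset.sum_le_sum fun ℓ hℓ => ?_
      have hpos : (0 : ℝ) ≤ 2 * (1 / ((ℓ : ℝ) * Real.sqrt ℓ)) := by positivity
      have hpos' : (0 : ℝ) ≤ 2 * (1 / (ℓ : ℝ)) := by positivity
      simp only [hb]
      by_cases c1 : ℓ = p
      · simp [c1]
        positivity
      · by_cases c2 : (ℓ : ℤ) ∣ D'
        · rw [if_pos ⟨(hS ℓ hℓ).1, (hS ℓ hℓ).2, c1⟩, if_pos c2, if_pos ⟨c1, c2⟩]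
          linarith
        · rw [if_pos ⟨(hS ℓ hℓ).1, (hS ℓ hℓ).2, c1⟩, if_neg c2, if_neg (fun h => c2 h.2)]
          linarith
    have h2 := hw S (fun ℓ hℓ => hwT ℓ (hS ℓ hℓ).1 (hS ℓ hℓ).2)
    have h3 := hsumD (S.filter (fun ℓ => ℓ ≠ p ∧ (ℓ : ℤ) ∣ D')) (fun ℓ hℓ => by
      rw [Finset.mem_filter] at hℓ
      exact ⟨(hS ℓ hℓ.1).1, (hS ℓ hℓ.1).2, hℓ.2.1, hℓ.2.2⟩)
    rw [← Finset.mul_sum] at h1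
    linarith


theorem count_prog (p ℓ : ℕ) (hℓ : ℓ.Prime) (a b : ℤ) (hb : ¬ (ℓ : ℤ) ∣ b) :
    (((Finset.range p).filter fun z : ℕ => (ℓ : ℤ) ∣ a + b * z).card : ℝ) ≤ p / ℓ + 1 := by
  classical
  by_cases h : ∃ v : ℕ, (ℓ : ℤ) ∣ a + b * v
  · obtain ⟨v, hv⟩ := h
    have h1 : ((Finset.range p).filter fun z : ℕ => (ℓ : ℤ) ∣ a + b * z) ⊆
        (Finset.range p).filter fun z : ℕ => z ≡ v [MOD ℓ] := by
      intro z hz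
      simp only [Finset.mem_filter] at hz ⊢
      refine ⟨hz.1, ?_⟩
      have h2 : (ℓ : ℤ) ∣ b * (v - z) := by
        have := dvd_sub hv hz.2
        rwa [show a + b * (v : ℤ) - (a + b * z) = b * (v - z) by ring] at this
      rcases (Nat.prime_iff_prime_int.mp hℓ).dvd_or_dvd h2 with h3 | h3
      · exact absurd h3 hb
      · exact (Nat.modEq_iff_dvd.mpr h3)
    have h2 := Finset.card_le_card h1
    rw [← Nat.count_eq_card_filter_range (fun z => z ≡ v [MOD ℓ]), Nat.count_modEq_card _ hℓ.pos] at h2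
    have h3 : ((Finset.range p).filter fun z : ℕ => (ℓ : ℤ) ∣ a + b * z).card ≤ p / ℓ + 1 := by
      refine h2.trans ?_
      split_ifs <;> omega
    calc _ ≤ ((p / ℓ + 1 : ℕ) : ℝ) := by exact_mod_cast h3
      _ ≤ _ := by push_cast; gcongr; exact Nat.cast_div_le
  · push Not at h
    rw [Finset.filter_false_of_mem (fun z _ => h z)]
    simp; positivity

theorem avg_bad (κ₁ κ₂ : ℤ) (hκ : κ₂ ≠ 0) (w : ℕ) (hw : 1000 ≤ w) :
    ∃ p1 : ℕ, ∀ p : ℕ, p1 ≤ p → ∃ B : Finset ℕ, 40 * B.card ≤ p ∧ ∀ z ∈ Finset.range p, z ∉ B →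
      (p * κ₁ + κ₂ * z ≠ 0 ∧ ∀ S : Finset ℕ, (∀ ℓ ∈ S, ℓ.Prime ∧ w < ℓ ∧ ¬ (ℓ : ℤ) ∣ κ₂ ∧ (ℓ : ℤ) ∣ p * κ₁ + κ₂ * z) →
        ∑ ℓ ∈ S, 1 / (ℓ : ℝ) ≤ 1 / 8) := by
  classical
  set C : ℕ := κ₁.natAbs + κ₂.natAbs with hC
  have hC0 : 0 < C := by have := Int.natAbs_pos.mpr hκ; omega
  have hev : ∃ p1 : ℕ, ∀ p : ℕ, p1 ≤ p → 8 * (1 + Real.log (C * p)) + 1 ≤ (p : ℝ) / 100 := by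
    have h1 : (fun x : ℝ => Real.log x) =o[Filter.atTop] fun x => x := Real.isLittleO_log_id_atTop
    have h2 := h1.bound (show (0 : ℝ) < 1 / 1600 by norm_num)
    have h3 : ∀ᶠ x : ℝ in Filter.atTop, 200 * (9 + 8 * Real.log C) ≤ x := Filter.eventually_ge_atTop _
    have h4 := (h2.and (h3.and (Filter.eventually_gt_atTop 1)))
    have h5 := tendsto_natCast_atTop_atTop (R := ℝ) |>.eventually h4
    obtain ⟨p1, h6⟩ := Filter.eventually_atTop.mp h5
    refine ⟨p1, fun p hp => ?_⟩
    obtain ⟨e1, e2, e3⟩ := h6 p hp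
    have hpp : (0 : ℝ) < p := by linarith
    rw [Real.norm_eq_abs, Real.norm_eq_abs, abs_of_pos hpp] at e1
    have e4 := (le_abs_self _).trans e1
    rw [Real.log_mul (by positivity) (by positivity)]
    linarith
  obtain ⟨p1, hp1⟩ := hev
  refine ⟨p1 + 1, fun p hp => ?_⟩
  have hp0 : (0 : ℝ) < p := by exact_mod_cast (by omega : 0 < p)
  set N : ℕ := C * p with hN
  set P : Finset ℕ := (Finset.Ioc w N).filter fun ℓ => ℓ.Prime ∧ ¬ (ℓ : ℤ) ∣ κ₂ with hP
  set f : ℕ → ℝ := fun z => ∑ ℓ ∈ P.filter (fun ℓ : ℕ => (ℓ : ℤ) ∣ p * κ₁ + κ₂ * z), 1 / (ℓ : ℝ) with hf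
  set B1 : Finset ℕ := (Finset.range p).filter fun z : ℕ => p * κ₁ + κ₂ * z = 0 with hB1
  set B2 : Finset ℕ := (Finset.range p).filter fun z : ℕ => 1 / 8 < f z with hB2
  have c1 : B1.card ≤ 1 := by
    rw [Finset.card_le_one]
    intro a ha b hb
    simp only [hB1, Finset.mem_filter] at ha hb
    have : κ₂ * (a : ℤ) = κ₂ * b := by linarith [ha.2, hb.2]
    exact_mod_cast mul_left_cancel₀ hκ this
  have hsum : ∑ z ∈ Finset.range p, f z ≤ p / 1000 + (1 + Real.log N) := by
    calc ∑ z ∈ Finset.range p, f z = ∑ ℓ ∈ P, ∑ z ∈ (Finset.range p).filter (fun z : ℕ => (ℓ : ℤ) ∣ p * κ₁ + κ₂ * z), 1 / (ℓ : ℝ) := by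
          simp only [hf, Finset.sum_filter]
          rw [Finset.sum_comm]
      _ ≤ ∑ ℓ ∈ P, ((p : ℝ) * ((ℓ : ℝ) ^ 2)⁻¹ + (ℓ : ℝ)⁻¹) := by
          refine Finset.sum_le_sum fun ℓ hℓ => ?_
          rw [hP, Finset.mem_filter] at hℓ
          rw [Finset.sum_const, nsmul_eq_mul]
          have hl : (0 : ℝ) < ℓ := by exact_mod_cast hℓ.2.1.pos
          have := count_prog p ℓ hℓ.2.1 (p * κ₁) κ₂ hℓ.2.2
          calc _ ≤ ((p : ℝ) / ℓ + 1) * (1 / ℓ) := by gcongr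
            _ = _ := by field_simp
      _ ≤ ∑ ℓ ∈ Finset.Ioc w N, ((p : ℝ) * ((ℓ : ℝ) ^ 2)⁻¹ + (ℓ : ℝ)⁻¹) := by
          apply Finset.sum_le_sum_of_subset_of_nonneg (Finset.filter_subset _ _)
          intros; positivity
      _ = p * ∑ ℓ ∈ Finset.Ioc w N, ((ℓ : ℝ) ^ 2)⁻¹ + ∑ ℓ ∈ Finset.Ioc w N, (ℓ : ℝ)⁻¹ := by
          rw [Finset.sum_add_distrib, Finset.mul_sum]
      _ ≤ p * (1 / 1000) + (1 + Real.log N) := by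
          gcongr
          · by_cases hwN : w ≤ N
            · have h1 := sum_Ioc_inv_sq_le_sub (α := ℝ) (by omega : w ≠ 0) hwN
              have h2 : (0 : ℝ) ≤ (N : ℝ)⁻¹ := by positivity
              have h3 : (w : ℝ)⁻¹ ≤ 1 / 1000 := by
                rw [one_div]
                apply inv_anti₀ (by norm_num)
                exact_mod_cast hw
              linarith
            · rw [Finset.Ioc_eq_empty (by omega)]; norm_num
          · have h1 := harmonic_le_one_add_log N
            refine le_trans ?_ h1
            rw [harmonic_eq_sum_Icc]
            push_cast
            apply Finset.sum_le_sum_of_subset_of_nonneg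
            · intro x hx
              simp only [Finset.mem_Ioc, Finset.mem_Icc] at hx ⊢
              omega
            · intros; positivity
      _ = _ := by ring
  have c2 : (B2.card : ℝ) * (1 / 8) ≤ ∑ z ∈ Finset.range p, f z := by
    calc (B2.card : ℝ) * (1 / 8) = ∑ z ∈ B2, (1 / 8 : ℝ) := by rw [Finset.sum_const, nsmul_eq_mul]
      _ ≤ ∑ z ∈ B2, f z := Finset.sum_le_sum fun z hz => (Finset.mem_filter.mp hz).2.le
      _ ≤ _ := by
        apply Finset.sum_le_sum_of_subset_of_nonneg (Finset.filter_subset _ _)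
        intro i _ _
        apply Finset.sum_nonneg
        intros; positivity
  refine ⟨B1 ∪ B2, ?_, ?_⟩
  · have h1 := Finset.card_union_le B1 B2
    have h2 : ((B1 ∪ B2).card : ℝ) ≤ 1 + B2.card := by
      have : (B1 ∪ B2).card ≤ 1 + B2.card := by omega
      exact_mod_cast this
    have h3 := hp1 p (by omega)
    have h4 : (N : ℝ) = C * p := by rw [hN]; push_cast; ring
    rw [h4] at hsum
    have : 40 * ((B1 ∪ B2).card : ℝ) ≤ p := by linarith
    exact_mod_cast this
  · intro z hz hzB
    rw [Finset.mem_union, not_or] at hzB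
    have hne : p * κ₁ + κ₂ * z ≠ 0 := fun h => hzB.1 (Finset.mem_filter.mpr ⟨hz, h⟩)
    refine ⟨hne, fun S hS => ?_⟩
    have h1 : ¬ (1 / 8 < f z) := fun h => hzB.2 (Finset.mem_filter.mpr ⟨hz, h⟩)
    push Not at h1
    refine le_trans ?_ h1
    apply Finset.sum_le_sum_of_subset_of_nonneg
    · intro ℓ hℓ
      obtain ⟨a1, a2, a3, a4⟩ := hS ℓ hℓ
      rw [Finset.mem_filter, hP, Finset.mem_filter, Finset.mem_Ioc]
      refine ⟨⟨⟨a2, ?_⟩, a1, a3⟩, a4⟩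
      have h5 : ℓ ≤ (p * κ₁ + κ₂ * z).natAbs := by
        apply Nat.le_of_dvd (Int.natAbs_pos.mpr hne)
        exact Int.natCast_dvd.mp a4
      refine h5.trans ((Int.natAbs_add_le _ _).trans ?_)
      rw [Int.natAbs_mul, Int.natAbs_mul, Int.natAbs_natCast, Int.natAbs_natCast, hN, hC]
      have : z ≤ p := (Finset.mem_range.mp hz).le
      nlinarith [Nat.mul_le_mul_left κ₂.natAbs this]
    · intros; positivity


theorem bad_slice {k p : ℕ} [Fact p.Prime] (B : Finset ℕ) :
    Nat.card {u : Fin (k + 1) → ZMod p // (u 0).val ∈ B} ≤ B.card * p ^ k := by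
  classical
  have h1 : Nat.card {u : Fin (k + 1) → ZMod p // (u 0).val ∈ B} ≤ Nat.card (B × (Fin k → ZMod p)) := by
    apply Nat.card_le_card_of_injective
      (fun u : {u : Fin (k + 1) → ZMod p // (u 0).val ∈ B} => ((⟨(u.1 0).val, u.2⟩ : B), Fin.tail u.1))
    intro a b hab
    simp only [Prod.mk.injEq, Subtype.mk.injEq] at hab
    apply Subtype.ext
    rw [← Fin.cons_self_tail a.1, ← Fin.cons_self_tail b.1, hab.2, ZMod.val_injective p hab.1]
  refine h1.trans (le_of_eq ?_)
  rw [Nat.card_prod, Nat.card_eq_fintype_card, Nat.card_eq_fintype_card, Fintype.card_coe, Fintype.card_fun,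
    ZMod.card, Fintype.card_fin]

theorem count_good {k p : ℕ} [hp : Fact p.Prime] (G : (Fin (k + 1) → ZMod p) → Prop)
    (hG : p ^ (k + 1) ≤ 20 * Nat.card {y // G y}) (c : ZMod p) (hc : c ≠ 0) (B : Finset ℕ) (hB : 40 * B.card ≤ p) :
    ∃ Z : Finset (Fin (k + 1) → ℤ), p ^ (k + 1) ≤ 40 * Z.card ∧
      ∀ z ∈ Z, (∀ j, 0 ≤ z j ∧ z j < p) ∧ G (fun j => c * (z j : ZMod p)) ∧
        ∃ z0 : ℕ, z0 ∈ Finset.range p ∧ z0 ∉ B ∧ z 0 = z0 := by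
  classical
  set S : Finset (Fin (k + 1) → ZMod p) := Finset.univ.filter fun u => G (fun j => c * u j) ∧ (u 0).val ∉ B with hS
  set φ : (Fin (k + 1) → ZMod p) → (Fin (k + 1) → ℤ) := fun u j => ((u j).val : ℤ) with hφ
  have hinj : Function.Injective φ := by
    intro a b hab
    funext j
    have := congrFun hab j
    simp only [hφ] at this
    exact ZMod.val_injective p (by exact_mod_cast this)
  refine ⟨S.image φ, ?_, ?_⟩
  · rw [Finset.card_image_of_injective _ hinj]
    have h1 : Nat.card {y // G y} ≤ Nat.card {u : Fin (k + 1) → ZMod p // G (fun j => c * u j)} := by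
      apply Nat.card_le_card_of_injective (fun y : {y // G y} =>
        (⟨fun j => c⁻¹ * y.1 j, by
          have : (fun j => c * (c⁻¹ * y.1 j)) = y.1 := by
            funext j; rw [← mul_assoc, mul_inv_cancel₀ hc, one_mul]
          rw [this]; exact y.2⟩ : {u : Fin (k + 1) → ZMod p // G (fun j => c * u j)}))
      intro a b hab
      simp only [Subtype.mk.injEq] at hab
      apply Subtype.ext
      funext j
      exact mul_left_cancel₀ (inv_ne_zero hc) (congrFun hab j)
    have h2 := card_or_le (fun u : Fin (k + 1) → ZMod p => G (fun j => c * u j))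
      (fun u => G (fun j => c * u j) ∧ (u 0).val ∉ B) (fun u => (u 0).val ∈ B) (by
        intro u hu
        by_cases h : (u 0).val ∈ B
        · exact Or.inr h
        · exact Or.inl ⟨hu, h⟩)
    have h3 := bad_slice (k := k) (p := p) B
    have h4 : Nat.card {u : Fin (k + 1) → ZMod p // G (fun j => c * u j) ∧ (u 0).val ∉ B} = S.card := by
      rw [Nat.card_eq_fintype_card, Fintype.card_subtype]
    rw [h4] at h2
    have h5 : 40 * (B.card * p ^ k) ≤ p ^ (k + 1) := by
      rw [← mul_assoc, pow_succ, mul_comm (p ^ k)]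
      exact Nat.mul_le_mul_right _ hB
    omega
  · intro z hz
    obtain ⟨u, hu, rfl⟩ := Finset.mem_image.mp hz
    rw [hS, Finset.mem_filter] at hu
    refine ⟨fun j => ⟨by simp only [hφ]; exact Int.natCast_nonneg _, by simp only [hφ]; exact_mod_cast ZMod.val_lt _⟩, ?_, (u 0).val, ?_, hu.2.2, rfl⟩
    · have : (fun j => c * ((φ u j : ℤ) : ZMod p)) = fun j => c * u j := by
        funext j; simp [hφ]
      rw [this]; exact hu.2.1
    · exact Finset.mem_range.mpr (ZMod.val_lt _)

theorem per_prime {m k : ℕ} (hm : 0 < m) (α : ℤ) (hα : α ≠ 0) (o : Fin m) (A₁ : Matrix (Fin m) (Fin m) ℤ)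
    (hrank : 5 ≤ Matrix.rank ((A₁ + A₁ᵀ).map ((↑) : ℤ → ℚ)))
    (q : Fin m → MvPolynomial (Fin (k + 2)) ℤ) (hq : ∀ j, (q j).IsHomogeneous 2)
    (R : MvPolynomial (Fin (k + 2)) ℤ) (hR : R.IsHomogeneous 3)
    (Cpoly : MvPolynomial (Fin m ⊕ Fin (k + 2)) ℤ)
    (hC : Cpoly = X (Sum.inr 0) *
        rename Sum.inl (∑ a, ∑ b, C (A₁ a b) * X a * X b)
      + C α * X (Sum.inr 1) * X (Sum.inl o) ^ 2
      + ∑ i, X (Sum.inl i) * rename Sum.inr (q i) + rename Sum.inr R)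
    (hhinv : ¬ ∃ L Q : Fin 4 → MvPolynomial (Fin m ⊕ Fin (k + 2)) ℚ,
      (∀ i, (L i).IsHomogeneous 1) ∧ (∀ i, (Q i).IsHomogeneous 2) ∧
        MvPolynomial.map (Int.castRingHom ℚ) Cpoly = ∑ i, L i * Q i) :
    ∃ (s t : ℤ) (T : ℕ) (δ : ℝ) (p0 : ℕ), s ≠ 0 ∧ 0 < T ∧ 0 < δ ∧ ∀ p : ℕ, p.Prime → p0 ≤ p →
      ∃ Z : Finset (Fin (k + 1) → ℤ), p ^ (k + 1) ≤ 40 * Z.card ∧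
        ∀ z ∈ Z, (∀ j, 0 ≤ z j ∧ z j < p) ∧
          δ ≤ (singSeries m fun x => eval (Sum.elim x (fun j => (T : ℤ) * yv s t T p z j)) Cpoly).re := by
  classical
  have H := case_H α hα o A₁ q hq R hR Cpoly hC hhinv
  obtain ⟨pg, hpg⟩ := good_count α hα o (fun i => res0 (q i)) (res0 R) (fun i => res0_homog _ (hq i)) (res0_homog _ hR) H
  obtain ⟨I, J, hI, hJ, hd⟩ := exists_minor _ hrank
  obtain ⟨d', d4, I4, J4, hd4, hJ4, h5, h4, hex⟩ := minor_data (A₁ + A₁ᵀ) o I J hI hJ hd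
  obtain ⟨x, i, hi, hxo, hlv⟩ := exists_xstar A₁ o hex
  obtain ⟨w0, hw0⟩ := tail_exists
  set d := ((A₁ + A₁ᵀ).submatrix I J).det with hdd
  set D : ℤ := α * x o ^ 2 * lv A₁ x i with hD
  have hs0 : α * x o ^ 2 ≠ 0 := mul_ne_zero hα (pow_ne_zero _ hxo)
  have hD0 : D ≠ 0 := mul_ne_zero hs0 hlv
  set w := w0 + 1000 with hw
  set d'' : ℤ := if d' = 0 then 1 else d' with hd''
  have hd''0 : d'' ≠ 0 := by rw [hd'']; split_ifs <;> simp_all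
  set E : ℤ := 2 * α * d * d4 * d'' with hE
  have hE0 : E ≠ 0 := by
    rw [hE]
    exact mul_ne_zero (mul_ne_zero (mul_ne_zero (mul_ne_zero two_ne_zero hα) hd) hd4) hd''0
  set T : ℕ := D.natAbs ^ 3 * (w.factorial * E.natAbs) with hT
  have hDn : D.natAbs ≠ 0 := Int.natAbs_ne_zero.mpr hD0
  have hEn : E.natAbs ≠ 0 := Int.natAbs_ne_zero.mpr hE0
  have hT0 : 0 < T := by rw [hT]; positivity
  have hET : E ∣ (T : ℤ) := by
    rw [← Int.natAbs_dvd_natAbs, Int.natAbs_natCast, hT]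
    exact Dvd.intro_left (D.natAbs ^ 3 * w.factorial) (by ring)
  have hDT : D ∣ (T : ℤ) := by
    rw [← Int.natAbs_dvd_natAbs, Int.natAbs_natCast, hT]
    exact Dvd.dvd.mul_right (dvd_pow_self _ (by norm_num)) _
  have hTD : ∀ ℓ : ℕ, ℓ.Prime → ℓ ∣ T → 2 * D.natAbs.factorization ℓ + 1 ≤ T.factorization ℓ := by
    intro ℓ hℓ hℓT
    have h1 : 1 ≤ T.factorization ℓ := (hℓ.dvd_iff_one_le_factorization hT0.ne').mp hℓT
    have h2 : T.factorization ℓ = 3 * D.natAbs.factorization ℓ + (w.factorial * E.natAbs).factorization ℓ := by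
      rw [hT, Nat.factorization_mul (by positivity) (by positivity), Nat.factorization_pow]
      simp
    omega
  have hwT : ∀ ℓ : ℕ, ℓ.Prime → ¬ ℓ ∣ T → w < ℓ := by
    intro ℓ hℓ hn
    by_contra hle
    push Not at hle
    apply hn
    rw [hT]
    exact Dvd.dvd.mul_left (Dvd.dvd.mul_right (Nat.dvd_factorial hℓ.pos hle) _) _
  have hnd : ∀ ℓ : ℕ, ¬ ℓ ∣ T → ∀ e : ℤ, e ∣ (T : ℤ) → ¬ (ℓ : ℤ) ∣ e := by
    intro ℓ hn e he h
    exact hn (Int.natCast_dvd_natCast.mp (h.trans he))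
  set t : ℤ := - qv A₁ 0 0 x with ht
  set κ₁ : ℤ := α * x o ^ 2 * d + 2 * α * t * d' with hκ₁
  set κ₂ : ℤ := 2 * α * T * d' with hκ₂
  have e2 : (2 : ℤ) ∣ E := ⟨α * d * d4 * d'', by rw [hE]; ring⟩
  have eα : α ∣ E := ⟨2 * d * d4 * d'', by rw [hE]; ring⟩
  have ed : d ∣ E := ⟨2 * α * d4 * d'', by rw [hE]; ring⟩
  have ed4 : d4 ∣ E := ⟨2 * α * d * d'', by rw [hE]; ring⟩
  have ed'' : d'' ∣ E := ⟨2 * α * d * d4, by rw [hE]; ring⟩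
  have hbad : ∃ p1 : ℕ, ∀ p : ℕ, p.Prime → p1 ≤ p → ∃ B : Finset ℕ, 40 * B.card ≤ p ∧ ∀ z ∈ Finset.range p, z ∉ B →
      (p * κ₁ + κ₂ * z ≠ 0 ∧ ∀ S : Finset ℕ, (∀ ℓ ∈ S, ℓ.Prime ∧ ¬ ℓ ∣ T ∧ ℓ ≠ p ∧ (ℓ : ℤ) ∣ p * κ₁ + κ₂ * z) →
        ∑ ℓ ∈ S, 1 / (ℓ : ℝ) ≤ 1 / 8) := by
    by_cases hd' : d' = 0
    · refine ⟨0, fun p hp _ => ⟨∅, by simp, fun z _ _ => ?_⟩⟩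
      have e1 : p * κ₁ + κ₂ * z = p * (α * x o ^ 2 * d) := by rw [hκ₁, hκ₂, hd']; ring
      rw [e1]
      refine ⟨mul_ne_zero (by exact_mod_cast hp.ne_zero) (mul_ne_zero hs0 hd), fun S hS => ?_⟩
      have : S = ∅ := by
        rw [Finset.eq_empty_iff_forall_notMem]
        intro ℓ hℓ
        obtain ⟨a1, a2, a3, a4⟩ := hS ℓ hℓ
        have hpr := Nat.prime_iff_prime_int.mp a1
        rcases hpr.dvd_or_dvd a4 with b | b
        · exact a3 ((Nat.prime_dvd_prime_iff_eq a1 hp).mp (Int.natCast_dvd_natCast.mp b))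
        · rcases hpr.dvd_or_dvd b with b | b
          · exact hnd ℓ a2 _ ((Dvd.intro _ rfl).trans hDT) b
          · exact hnd ℓ a2 _ (ed.trans hET) b
      rw [this]; norm_num
    · have hdd' : d'' = d' := by rw [hd'', if_neg hd']
      have hκ0 : κ₂ ≠ 0 := by
        rw [hκ₂]
        exact mul_ne_zero (mul_ne_zero (mul_ne_zero two_ne_zero hα) (by exact_mod_cast hT0.ne')) hd'
      obtain ⟨p1, h⟩ := avg_bad κ₁ κ₂ hκ0 w (by omega)
      refine ⟨p1, fun p _ hp1 => ?_⟩
      obtain ⟨B, hB, hB2⟩ := h p hp1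
      refine ⟨B, hB, fun z hz hzB => ⟨(hB2 z hz hzB).1, fun S hS => (hB2 z hz hzB).2 S fun ℓ hℓ => ?_⟩⟩
      obtain ⟨a1, a2, a3, a4⟩ := hS ℓ hℓ
      refine ⟨a1, hwT ℓ a1 a2, fun b => ?_, a4⟩
      have hpr := Nat.prime_iff_prime_int.mp a1
      rw [hκ₂] at b
      rcases hpr.dvd_or_dvd b with b | b
      · rcases hpr.dvd_or_dvd b with b | b
        · rcases hpr.dvd_or_dvd b with b | b
          · exact hnd ℓ a2 _ (e2.trans hET) b
          · exact hnd ℓ a2 _ (eα.trans hET) b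
        · exact hnd ℓ a2 _ dvd_rfl b
      · exact hnd ℓ a2 _ (ed''.trans hET) (hdd' ▸ b)
  obtain ⟨p1, hp1⟩ := hbad
  refine ⟨α * x o ^ 2, t, T, ((T : ℝ) ^ (m - 1))⁻¹ / 2, pg + p1 + T + 1, hs0, hT0, by positivity, fun p hp hple => ?_⟩
  haveI : Fact p.Prime := ⟨hp⟩
  have hpT : ¬ p ∣ T := fun h => by have := Nat.le_of_dvd hT0 h; omega
  obtain ⟨B, hB, hB2⟩ := hp1 p hp (by omega)
  have hc : ((T : ZMod p)) ^ 2 ≠ 0 := by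
    apply pow_ne_zero
    rw [Ne, ZMod.natCast_eq_zero_iff]
    exact hpT
  obtain ⟨Z, hZ, hZ2⟩ := count_good _ (hpg p (by omega)) _ hc B hB
  refine ⟨Z, hZ, fun z hz => ⟨(hZ2 z hz).1, ?_⟩⟩
  obtain ⟨_, hg, z0, hz0, hz0B, hzz⟩ := hZ2 z hz
  obtain ⟨f1, f2⟩ := hB2 z0 hz0 hz0B
  rw [← hzz] at f1 f2
  exact single_bound hm α o A₁ q hq R hR Cpoly hC I J hJ d d' d4 I4 J4 hJ4 h5 h4 x i hi D hD hD0 T hT0 hTD hDT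
    (ed4.trans hET) w (fun S hS => hw0 S fun ℓ hℓ => by have := hS ℓ hℓ; omega) hwT p hp hpT z _ rfl hg
    (p * κ₁ + κ₂ * z 0) (by rw [hκ₁, hκ₂]) f1 f2


theorem primes_interval : ∃ Y₀ : ℝ, ∀ Y : ℝ, Y₀ ≤ Y →
    (1 / 8) * Y / Real.log Y ≤ (((Finset.Ioc ⌊Y / 8⌋₊ ⌊Y⌋₊).filter Nat.Prime).card : ℝ) := by
  have h1 : (fun x : ℝ => Real.log x) =o[Filter.atTop] fun x => x ^ (1 / 4 : ℝ) :=
    isLittleO_log_rpow_atTop (by norm_num)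
  have h2 := h1.bound (show (0 : ℝ) < 1 by norm_num)
  obtain ⟨Y1, hY1⟩ := Filter.eventually_atTop.mp h2
  refine ⟨max Y1 (10 ^ 8), fun Y hY => ?_⟩
  have hYb : (10 : ℝ) ^ 8 ≤ Y := (le_max_right _ _).trans hY
  have e1 := hY1 Y ((le_max_left _ _).trans hY)
  have hY0 : (0 : ℝ) < Y := by linarith [show (0:ℝ) < 10 ^ 8 by norm_num]
  set u : ℝ := Y ^ (1 / 4 : ℝ) with hu
  have hu0 : 0 ≤ u := by positivity
  have hu4 : u ^ 4 = Y := by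
    rw [hu, ← Real.rpow_natCast, ← Real.rpow_mul hY0.le]; norm_num
  have hu2 : Real.sqrt Y = u ^ 2 := by
    rw [← hu4, show u ^ 4 = (u ^ 2) ^ 2 by ring, Real.sqrt_sq (by positivity)]
  have hu100 : 100 ≤ u := by
    by_contra hcon
    push Not at hcon
    have : u ^ 4 < 100 ^ 4 := by gcongr
    rw [hu4] at this
    linarith [show (100 : ℝ) ^ 4 = 10 ^ 8 by norm_num]
  rw [one_mul, Real.norm_eq_abs, Real.norm_eq_abs, abs_of_nonneg hu0] at e1
  have hlog : Real.log Y ≤ u := (le_abs_self _).trans e1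
  have hlog0 : 0 < Real.log Y := Real.log_pos (by linarith [show (1:ℝ) < 10 ^ 8 by norm_num])
  have t1 := Chebyshev.theta_ge' (x := Y) (by linarith [show (1:ℝ) < 10 ^ 8 by norm_num])
  have t2 := Chebyshev.theta_le_log4_mul_x (x := Y / 8) (by positivity)
  have hl4 : Real.log 4 = 2 * Real.log 2 := by
    rw [show (4 : ℝ) = 2 ^ 2 by norm_num, Real.log_pow]; norm_num
  have hl2 := Real.log_two_gt_d9
  have hl2' := Real.log_two_lt_d9
  have hl3 : Real.log (Y + 2) ≤ 2 * u := by
    calc Real.log (Y + 2) ≤ Real.log (Y ^ 2) := by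
          apply Real.log_le_log (by positivity)
          nlinarith [show (2:ℝ) < 10 ^ 8 by norm_num]
      _ = 2 * Real.log Y := by rw [Real.log_pow]; norm_num
      _ ≤ _ := by linarith
  have key : (1 / 8) * Y ≤ Chebyshev.theta Y - Chebyshev.theta (Y / 8) := by
    have h3 : 2 * Real.sqrt Y * Real.log Y ≤ 2 * u ^ 3 := by
      rw [hu2]
      calc 2 * u ^ 2 * Real.log Y ≤ 2 * u ^ 2 * u := by gcongr
        _ = _ := by ring
    have h4 : 100 * u ^ 3 ≤ Y := by
      rw [← hu4]
      calc 100 * u ^ 3 ≤ u * u ^ 3 := by gcongr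
        _ = _ := by ring
    have h5 : u ≤ u ^ 3 := by nlinarith [sq_nonneg u]
    have h6 : (3 / 4 * Y - 1) * 0.69 ≤ (3 / 4 * Y - 1) * Real.log 2 := by
      apply mul_le_mul_of_nonneg_left (by linarith)
      linarith [show (2:ℝ) < 10 ^ 8 by norm_num]
    rw [hl4] at t2
    nlinarith
  rw [div_le_iff₀ hlog0]
  refine key.trans ?_
  have hfl : ⌊Y / 8⌋₊ ≤ ⌊Y⌋₊ := Nat.floor_mono (by linarith)
  have hsplit : Chebyshev.theta Y - Chebyshev.theta (Y / 8) =
      ∑ p ∈ (Finset.Ioc ⌊Y / 8⌋₊ ⌊Y⌋₊).filter Nat.Prime, Real.log p := by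
    unfold Chebyshev.theta
    rw [← Finset.Ioc_union_Ioc_eq_Ioc (Nat.zero_le _) hfl, Finset.filter_union, Finset.sum_union]
    · ring
    · apply Finset.disjoint_filter_filter
      rw [Finset.disjoint_left]
      intro a ha hb
      simp only [Finset.mem_Ioc] at ha hb
      omega
  rw [hsplit, ← nsmul_eq_mul]
  apply Finset.sum_le_card_nsmul
  intro p hp
  rw [Finset.mem_filter, Finset.mem_Ioc] at hp
  apply Real.log_le_log (by exact_mod_cast hp.2.pos)
  exact (Nat.le_floor_iff hY0.le).mp hp.1.2

theorem final_aux {k : ℕ} (f : (Fin (k + 2) → ℤ) → ℝ) (s t : ℤ) (T : ℕ) (δ : ℝ) (p0 : ℕ) (hs : s ≠ 0) (hT : 0 < T)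
    (hδ : 0 < δ) (H : ∀ p : ℕ, p.Prime → p0 ≤ p →
      ∃ Z : Finset (Fin (k + 1) → ℤ), p ^ (k + 1) ≤ 40 * Z.card ∧
        ∀ z ∈ Z, (∀ j, 0 ≤ z j ∧ z j < p) ∧ δ ≤ f (fun j => (T : ℤ) * yv s t T p z j)) :
    ∃ c > (0 : ℝ), ∃ K > (0 : ℝ), ∃ Y₀ : ℝ, ∀ Y : ℝ, Y₀ ≤ Y →
      ∃ 𝒞 : Finset (Fin (k + 2) → ℤ),
        (∀ y ∈ 𝒞, ∀ i, (|y i| : ℝ) ≤ K * Y) ∧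
        c * Y ^ (k + 2) / Real.log Y ≤ ∑ y ∈ 𝒞, f y := by
  classical
  obtain ⟨Y1, hY1⟩ := primes_interval
  have H' : ∀ p : ℕ, ∃ Z : Finset (Fin (k + 1) → ℤ), p.Prime → p0 ≤ p → p ^ (k + 1) ≤ 40 * Z.card ∧
        ∀ z ∈ Z, (∀ j, 0 ≤ z j ∧ z j < p) ∧ δ ≤ f (fun j => (T : ℤ) * yv s t T p z j) := by
    intro p
    by_cases h : p.Prime ∧ p0 ≤ p
    · obtain ⟨Z, hZ⟩ := H p h.1 h.2
      exact ⟨Z, fun _ _ => hZ⟩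
    · exact ⟨∅, fun h1 h2 => absurd ⟨h1, h2⟩ h⟩
  choose Z hZ using H'
  have hT' : (0 : ℝ) < T := by exact_mod_cast hT
  have hTz : (T : ℤ) ≠ 0 := by exact_mod_cast hT.ne'
  refine ⟨δ / 40 * (1 / 8) ^ (k + 1) * (1 / 8), by positivity, T * (|(s : ℝ)| + |(t : ℝ)| + T), by positivity,
    max Y1 (8 * (p0 + 1)), fun Y hY => ?_⟩
  have hYp : 8 * ((p0 : ℝ) + 1) ≤ Y := (le_max_right _ _).trans hY
  have hY0 : (0 : ℝ) < Y := by have : (0 : ℝ) ≤ p0 := by positivity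
                               linarith
  have hcnt := hY1 Y ((le_max_left _ _).trans hY)
  set P := (Finset.Ioc ⌊Y / 8⌋₊ ⌊Y⌋₊).filter Nat.Prime with hP
  have hPm : ∀ p ∈ P, p.Prime ∧ p0 ≤ p ∧ Y / 8 ≤ p ∧ (p : ℝ) ≤ Y := by
    intro p hp
    rw [hP, Finset.mem_filter, Finset.mem_Ioc] at hp
    have h1 : Y / 8 < p := (Nat.floor_lt (by positivity)).mp hp.1.1
    refine ⟨hp.2, ?_, h1.le, (Nat.le_floor_iff hY0.le).mp hp.1.2⟩
    have : (p0 : ℝ) ≤ p := by linarith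
    exact_mod_cast this
  set g : (Σ _ : ℕ, (Fin (k + 1) → ℤ)) → (Fin (k + 2) → ℤ) := fun a j => (T : ℤ) * yv s t T a.1 a.2 j with hg
  have hginj : Function.Injective g := by
    rintro ⟨p, z⟩ ⟨p', z'⟩ h
    have h0 := mul_left_cancel₀ hTz (congrFun h 0)
    simp only [yv_zero] at h0
    have hpp : p = p' := by exact_mod_cast mul_right_cancel₀ hs h0
    subst hpp
    have : z = z' := by
      funext j
      have h1 := mul_left_cancel₀ hTz (congrFun h j.succ)
      simp only [yv, Fin.cons_succ] at h1
      exact mul_left_cancel₀ hTz (add_left_cancel h1)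
    rw [this]
  refine ⟨(P.sigma Z).image g, ?_, ?_⟩
  · intro y hy i
    obtain ⟨⟨p, z⟩, ha, rfl⟩ := Finset.mem_image.mp hy
    rw [Finset.mem_sigma] at ha
    obtain ⟨b1, b2, b3, b4⟩ := hPm p ha.1
    have hz := ((hZ p b1 b2).2 z ha.2).1
    simp only [hg]
    push_cast
    rw [abs_mul, abs_of_pos hT', mul_assoc]
    refine mul_le_mul_of_nonneg_left ?_ hT'.le
    have hp0 : (0 : ℝ) ≤ p := by positivity
    refine Fin.cases ?_ (fun j => ?_) i
    · rw [yv_zero]; push_cast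
      rw [abs_mul, abs_of_nonneg hp0]
      nlinarith [abs_nonneg (s : ℝ), abs_nonneg (t : ℝ), mul_le_mul_of_nonneg_left b4 (abs_nonneg (s : ℝ)),
        mul_nonneg (abs_nonneg (t : ℝ)) hY0.le, mul_nonneg hT'.le hY0.le]
    · simp only [yv, Fin.cons_succ]
      have hz1 : (0 : ℝ) ≤ z j := by exact_mod_cast (hz j).1
      have hz2 : (z j : ℝ) ≤ Y := le_trans (by exact_mod_cast (hz j).2.le) b4
      have e1 : |(((if j = 0 then (p : ℤ) * t else 0 : ℤ)) : ℝ)| ≤ |(t : ℝ)| * Y := by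
        split_ifs
        · push_cast
          rw [abs_mul, abs_of_nonneg hp0, mul_comm]
          gcongr
        · simp; positivity
      rw [Int.cast_add]
      refine (abs_add_le _ _).trans ?_
      push_cast
      push_cast at e1
      rw [abs_mul, abs_of_pos hT', abs_of_nonneg hz1]
      nlinarith [mul_nonneg (abs_nonneg (s : ℝ)) hY0.le, mul_le_mul_of_nonneg_left hz2 hT'.le]
  · rw [Finset.sum_image (fun a _ b _ h => hginj h), Finset.sum_sigma]
    calc δ / 40 * (1 / 8) ^ (k + 1) * (1 / 8) * Y ^ (k + 2) / Real.log Y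
        = ((1 / 8) * Y / Real.log Y) * (δ / 40 * (Y / 8) ^ (k + 1)) := by
          rw [div_pow Y, div_pow 1, one_pow]; ring
      _ ≤ (P.card : ℝ) * (δ / 40 * (Y / 8) ^ (k + 1)) := by gcongr
      _ = ∑ p ∈ P, (δ / 40 * (Y / 8) ^ (k + 1)) := by rw [Finset.sum_const, nsmul_eq_mul]
      _ ≤ _ := by
        refine Finset.sum_le_sum fun p hp => ?_
        obtain ⟨b1, b2, b3, b4⟩ := hPm p hp
        obtain ⟨hc, hz⟩ := hZ p b1 b2
        have hc' : (p : ℝ) ^ (k + 1) ≤ 40 * (Z p).card := by exact_mod_cast hc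
        calc δ / 40 * (Y / 8) ^ (k + 1) ≤ δ / 40 * (p : ℝ) ^ (k + 1) := by gcongr
          _ ≤ δ / 40 * (40 * (Z p).card) := by gcongr
          _ = ∑ z ∈ Z p, δ := by rw [Finset.sum_const, nsmul_eq_mul]; ring
          _ ≤ _ := Finset.sum_le_sum fun z hzz => (hz z hzz).2

/-- For `C(x,y) = y₁F₁(x) + α y₂ x₁² + Σ x_i q_i(y) + R(y)` with `F₁`
nonsingular indefinite of rank `r ≥ 5`, `α ≠ 0`, `h(C) ≥ 5`, `C` irreducible with nonsingular
`p`-adic zeros for all `p`, one has `Σ_{y ∈ 𝒞_h(Y)} 𝔖(F_y) ≫ Y^h / log Y`. -/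
theorem stmt11 (n h m : ℕ) (hh : 1 < h) (hhn : h < n) (hm : m = n - h) (hm0 : 0 < m)
    (α : ℤ) (hα : α ≠ 0)
    (A₁ : Matrix (Fin m) (Fin m) ℤ) (r : ℕ) (hr5 : 5 ≤ r)
    (hrank : Matrix.rank ((A₁ + A₁ᵀ).map ((↑) : ℤ → ℚ)) = r)
    (hindef : (∃ u : Fin m → ℝ, 0 < u ⬝ᵥ (A₁.map ((↑) : ℤ → ℝ)).mulVec u) ∧
      (∃ u : Fin m → ℝ, u ⬝ᵥ (A₁.map ((↑) : ℤ → ℝ)).mulVec u < 0))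
    (q : Fin m → MvPolynomial (Fin h) ℤ) (hq : ∀ j, (q j).IsHomogeneous 2)
    (R : MvPolynomial (Fin h) ℤ) (hR : R.IsHomogeneous 3)
    (Cpoly : MvPolynomial (Fin m ⊕ Fin h) ℤ)
    (hC : Cpoly = X (Sum.inr ⟨0, Nat.lt_trans Nat.zero_lt_one hh⟩) *
        rename Sum.inl (∑ a, ∑ b, C (A₁ a b) * X a * X b)
      + C α * X (Sum.inr ⟨1, hh⟩) * X (Sum.inl ⟨0, hm0⟩) ^ 2
      + ∑ i, X (Sum.inl i) * rename Sum.inr (q i) + rename Sum.inr R)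
    (hhinv : ¬ ∃ L Q : Fin 4 → MvPolynomial (Fin m ⊕ Fin h) ℚ,
      (∀ i, (L i).IsHomogeneous 1) ∧ (∀ i, (Q i).IsHomogeneous 2) ∧
        MvPolynomial.map (Int.castRingHom ℚ) Cpoly = ∑ i, L i * Q i)
    (hirr : Irreducible (MvPolynomial.map (Int.castRingHom ℚ) Cpoly))
    (hpadic : ∀ (p : ℕ) [Fact p.Prime], ∃ z : (Fin m ⊕ Fin h) → ℚ_[p],
      eval z (MvPolynomial.map (Int.castRingHom ℚ_[p]) Cpoly) = 0 ∧
      ∃ u, eval z (pderiv u (MvPolynomial.map (Int.castRingHom ℚ_[p]) Cpoly)) ≠ 0) :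
    ∃ c > (0 : ℝ), ∃ K > (0 : ℝ), ∃ Y₀ : ℝ, ∀ Y : ℝ, Y₀ ≤ Y →
      ∃ 𝒞 : Finset (Fin h → ℤ),
        (∀ y ∈ 𝒞, ∀ i, (|y i| : ℝ) ≤ K * Y) ∧
        c * Y ^ h / Real.log Y ≤
          ∑ y ∈ 𝒞, (singSeries m fun x => eval (Sum.elim x y) Cpoly).re := by

  obtain ⟨k, rfl⟩ : ∃ k, h = k + 2 := ⟨h - 2, by omega⟩
  obtain ⟨s, t, T, δ, p0, hs, hT, hδ, H⟩ :=
    per_prime hm0 α hα ⟨0, hm0⟩ A₁ (by rw [hrank]; exact hr5) q hq R hR Cpoly hC hhinv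
  exact final_aux (fun y => (singSeries m fun x => eval (Sum.elim x y) Cpoly).re) s t T δ p0 hs hT hδ H
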